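/- Let ((v_k(t))_{k≥1,t∈[0,T]}, r) be a solution of the integrated Burgers control problem such that Σ_{k≥1} v_k(t) = 1 for every t ∈ [0,T] and Σ_{k≥1} k v_k(0) = ∞ (so T_gel = 0). Fix t̄ ∈ (0,T] and x̄ > 0, and suppose there are constants 0 < c ≤ C < ∞ with c ≤ E(0,x) ≤ C and |∂_x E(0,x)| ≤ C·x^{−1/2} for all x ∈ (0, x̄ + t̄]. Then there exist a Lipschitz-continuous function φ : [0, t̄] → (0,∞) with r(t) = ∫₀ᵗ φ(s) ds, and a constant C' > 1, such that C'^{−1} ≤ φ(t) ≤ C' and, for all (t,x) ∈ [0, t̄] × (0, x̄]: |−V(t,x) − √(2φ(t))·x^{1/2}| ≤ C'·x, |−∂_x V(t,x) − √(φ(t)/2)·x^{−1/2}| ≤ C', |∂_x² V(t,x) − √(φ(t)/8)·x^{−3/2}| ≤ C'·x^{−1}, and |V(t,x)·∂_x V(t,x) − φ(t)| ≤ C'·x^{1/2}. -/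

import Mathlib

open MeasureTheory Filter Topology Set

/-- The generating function of the time-dependent cluster size distribution
`(v_k(t))_{k ≥ 1}`: `V(t,x) = ∑_{k≥1} v_k(t) e^(−kx) − 1`. -/
noncomputable def genFun (v : ℕ → ℝ → ℝ) (t x : ℝ) : ℝ :=
  (∑' k : ℕ, v (k + 1) t * Real.exp (-((k : ℝ) + 1) * x)) - 1

/-- `(v, r)` is a solution of the integrated Burgers control problem on `[0, T]`:
the `v_k(t)` are nonnegative with total mass at most one, `r` is nondecreasing on
`[0, T]` with `r 0 = 0`, `r T ≤ 1 + T/2`, and the generating function satisfies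
`V(t,x) − V(0,x) + ∫₀ᵗ V(s,x)·∂ₓV(s,x) ds = e^(−x)·r(t)` for `t ∈ [0,T]`, `x > 0`. -/
def IsBurgersSolution (T : ℝ) (v : ℕ → ℝ → ℝ) (r : ℝ → ℝ) : Prop :=
  (∀ k, 1 ≤ k → ∀ t ∈ Set.Icc (0:ℝ) T, 0 ≤ v k t) ∧
  (∀ t ∈ Set.Icc (0:ℝ) T, Summable (fun k : ℕ => v (k + 1) t)) ∧
  (∀ t ∈ Set.Icc (0:ℝ) T, (∑' k : ℕ, v (k + 1) t) ≤ 1) ∧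
  MonotoneOn r (Set.Icc 0 T) ∧
  r 0 = 0 ∧
  (∀ t ∈ Set.Icc (0:ℝ) T, 0 ≤ r t) ∧
  r T ≤ 1 + T / 2 ∧
  (∀ t ∈ Set.Icc (0:ℝ) T, ∀ x : ℝ, 0 < x →
    genFun v t x - genFun v 0 x
        + ∫ s in (0:ℝ)..t, genFun v s x * deriv (genFun v s) x
      = Real.exp (-x) * r t)

/-- `E(t,x) = −(∂ₓV(t,x))³ / ∂ₓ²V(t,x)`. -/
noncomputable def EFun (v : ℕ → ℝ → ℝ) (t x : ℝ) : ℝ :=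
  -(deriv (genFun v t) x) ^ 3 / iteratedDeriv 2 (genFun v t) x

/-!
Write `D n t x = ∑ₖ kⁿ vₖ(t) e^{-kx}`, so that `-V = 1 - D 0`, `-∂ₓV = D 1`, `∂ₓ²V = D 2` and
`E = (D 1)³ / D 2`. Since `∂ₓ (D 1)⁻² = 2 / E`, an upper bound on `E` gives `D 1 = O(x^{-1/2})` and
`-V = O(x^{1/2})`, so that the flux `V ∂ₓV` is bounded. The increments of `r` are the limits, as
`x → 0`, of the time integrals of the flux, so `r` is Lipschitz.

Along the backward characteristics `ξ' = V(s, ξ)` the energy changes only through `dr`: there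
`log E` has rate `e^{-ξ} (3 / D 1 - 1 / D 2) dr`. Hence bounds on `E(0, ·)` propagate to all times,
and so does the divergence of the first moment, i.e. `(D 1)⁻² → 0` as `x → 0`. Integrating
`∂ₓ (D 1)⁻² = 2 / E` from `0` then gives lower bounds of the same order on `D 1`, `-V` and the flux.
Two characteristics `ξ₁`, `ξ₂` run backward from `x₁ < x₂` satisfy `√ξ₂ - √ξ₁ = O(√x₂)`, so
`E(t, ·)` has a limit `φ(t)` at `0`, approached with an error `O(√x)`, and the asymptotics of `D 1`,
`-V`, `D 2` and the flux follow. In particular the flux tends to `φ`, whence `r = ∫ φ`. Finally, a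
characteristic issued from near `0` at time `t` is at a distance `O((t - s)²)` from `0` at time `s`,
so `φ` is Lipschitz.
-/

/-! ### Moment series -/

/-- The `n`-th moment series `∑_{k ≥ 1} kⁿ a_k e^{-kx}`; the weight of `k = j + 1` is `a j`. -/
noncomputable def momentSeries (a : ℕ → ℝ) (n : ℕ) (x : ℝ) : ℝ :=
  ∑' k : ℕ, a k * ((k : ℝ) + 1) ^ n * Real.exp (-((k : ℝ) + 1) * x)

lemma pow_mul_exp_neg_le_factorial (n : ℕ) {y : ℝ} (hy : 0 ≤ y) :
    y ^ n * Real.exp (-y) ≤ n.factorial := by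
  have h := Real.pow_div_factorial_le_exp y hy n
  rw [div_le_iff₀ (by positivity)] at h
  calc y ^ n * Real.exp (-y) ≤ Real.exp y * n.factorial * Real.exp (-y) := by gcongr
    _ = n.factorial := by
      rw [mul_right_comm, ← Real.exp_add, add_neg_cancel, Real.exp_zero, one_mul]

lemma pow_mul_exp_neg_mul_le (n : ℕ) {j x y : ℝ} (hj : 0 ≤ j) (hx : 0 < x) (hxy : x ≤ y) :
    j ^ n * Real.exp (-j * y) ≤ n.factorial / x ^ n := by
  rw [le_div_iff₀ (by positivity)]
  calc j ^ n * Real.exp (-j * y) * x ^ n ≤ j ^ n * Real.exp (-(j * x)) * x ^ n := by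
        rw [neg_mul]; gcongr
    _ = (j * x) ^ n * Real.exp (-(j * x)) := by ring
    _ ≤ n.factorial := pow_mul_exp_neg_le_factorial n (by positivity)

section MomentSeries

variable {a : ℕ → ℝ}

lemma summable_momentSeries (hs : Summable a) (n : ℕ) {x : ℝ} (hx : 0 < x) :
    Summable fun k : ℕ ↦ a k * ((k : ℝ) + 1) ^ n * Real.exp (-((k : ℝ) + 1) * x) := by
  refine Summable.of_norm_bounded (hs.norm.mul_right (n.factorial / x ^ n)) fun k ↦ ?_
  rw [mul_assoc, norm_mul, Real.norm_of_nonneg (by positivity : (0 : ℝ) ≤ _ * Real.exp _)]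
  gcongr
  exact pow_mul_exp_neg_mul_le n (by positivity) hx le_rfl

lemma hasDerivAt_momentSeries (hs : Summable a) (n : ℕ) {x : ℝ} (hx : 0 < x) :
    HasDerivAt (momentSeries a n) (-momentSeries a (n + 1) x) x := by
  have hhalf : x ∈ Ioi (x / 2) := half_lt_self hx
  have key := hasDerivAt_tsum_of_isPreconnected (𝕜 := ℝ) (F := ℝ)
    (u := fun k : ℕ ↦ ‖a k‖ * ((n + 1).factorial / (x / 2) ^ (n + 1)))
    (g := fun (k : ℕ) y ↦ a k * ((k : ℝ) + 1) ^ n * Real.exp (-((k : ℝ) + 1) * y))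
    (g' := fun (k : ℕ) y ↦ -(a k * ((k : ℝ) + 1) ^ (n + 1) * Real.exp (-((k : ℝ) + 1) * y)))
    (hs.norm.mul_right _) isOpen_Ioi isPreconnected_Ioi (fun k y _ ↦ ?_) (fun k y hy ↦ ?_)
    hhalf (summable_momentSeries hs n hx) hhalf
  · rwa [tsum_neg] at key
  · have hlin : HasDerivAt (fun y : ℝ ↦ -((k : ℝ) + 1) * y) (-((k : ℝ) + 1)) y := by
      simpa using (hasDerivAt_id y).const_mul (-((k : ℝ) + 1))
    exact (hlin.exp.const_mul (a k * ((k : ℝ) + 1) ^ n)).congr_deriv (by ring)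
  · rw [norm_neg, mul_assoc, norm_mul,
      Real.norm_of_nonneg (by positivity : (0 : ℝ) ≤ _ * Real.exp _)]
    gcongr
    exact pow_mul_exp_neg_mul_le (n + 1) (by positivity) (half_pos hx) (le_of_lt hy)

lemma momentSeries_pos (ha : ∀ k, 0 ≤ a k) (hs : Summable a) {k : ℕ} (hk : 0 < a k) (n : ℕ)
    {x : ℝ} (hx : 0 < x) : 0 < momentSeries a n x :=
  (summable_momentSeries hs n hx).tsum_pos
    (fun j ↦ mul_nonneg (mul_nonneg (ha j) (by positivity)) (by positivity)) k (by positivity)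

lemma pow_mul_momentSeries_le (ha : ∀ k, 0 ≤ a k) (hs : Summable a) (n : ℕ) {x : ℝ}
    (hx : 0 < x) : x ^ n * momentSeries a n x ≤ n.factorial * ∑' k, a k := by
  have h : momentSeries a n x ≤ ∑' k, a k * (n.factorial / x ^ n) := by
    refine (summable_momentSeries hs n hx).tsum_le_tsum (fun k ↦ ?_) (hs.mul_right _)
    rw [mul_assoc]
    exact mul_le_mul_of_nonneg_left
      (pow_mul_exp_neg_mul_le n (by positivity) hx le_rfl) (ha k)
  rw [tsum_mul_right, ← mul_div_assoc, le_div_iff₀ (by positivity)] at h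
  linarith

lemma mul_momentSeries_one_le (ha : ∀ k, 0 ≤ a k) (hs : Summable a) {x : ℝ} (hx : 0 < x) :
    x * momentSeries a 1 x ≤ ∑' k, a k - momentSeries a 0 x := by
  have h0 := summable_momentSeries hs 0 hx
  have h1 := (summable_momentSeries hs 1 hx).mul_left x
  rw [le_sub_iff_add_le, momentSeries, momentSeries, ← tsum_mul_left, ← h1.tsum_add h0]
  refine (h1.add h0).tsum_le_tsum (fun k ↦ ?_) hs
  have hexp : Real.exp (-((k : ℝ) + 1) * x) * (((k : ℝ) + 1) * x + 1) ≤ 1 := by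
    rw [neg_mul, Real.exp_neg, inv_mul_le_one₀ (Real.exp_pos _)]
    exact Real.add_one_le_exp _
  linarith [mul_le_mul_of_nonneg_left hexp (ha k)]

lemma mul_momentSeries_succ_le (ha : ∀ k, 0 ≤ a k) (hs : Summable a) (n : ℕ) {x : ℝ}
    (hx : 0 < x) : x * momentSeries a (n + 1) x ≤ 2 * momentSeries a n (x / 2) := by
  rw [momentSeries, momentSeries, ← tsum_mul_left, ← tsum_mul_left]
  refine ((summable_momentSeries hs (n + 1) hx).mul_left x).tsum_le_tsum (fun k ↦ ?_)
    ((summable_momentSeries hs n (half_pos hx)).mul_left 2)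
  have hsplit : Real.exp (-((k : ℝ) + 1) * (x / 2))
      = Real.exp (((k : ℝ) + 1) * (x / 2)) * Real.exp (-((k : ℝ) + 1) * x) := by
    rw [← Real.exp_add]; congr 1; ring
  have hterm : 0 ≤ a k * ((k : ℝ) + 1) ^ n * Real.exp (-((k : ℝ) + 1) * x) := by
    have := ha k; positivity
  rw [hsplit, pow_succ]
  linarith [mul_le_mul_of_nonneg_left (Real.add_one_le_exp (((k : ℝ) + 1) * (x / 2))) hterm]

lemma tendsto_momentSeries_zero (hs : Summable a) :
    Tendsto (momentSeries a 0) (𝓝[>] 0) (𝓝 (∑' k, a k)) := by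
  refine tendsto_tsum_of_dominated_convergence hs.norm (fun k ↦ ?_) ?_
  · have hcont : ContinuousAt
        (fun x : ℝ ↦ a k * ((k : ℝ) + 1) ^ 0 * Real.exp (-((k : ℝ) + 1) * x)) 0 := by fun_prop
    simpa using hcont.tendsto.mono_left nhdsWithin_le_nhds
  · filter_upwards [self_mem_nhdsWithin] with x hx k
    have := pow_mul_exp_neg_mul_le 0 (by positivity : (0 : ℝ) ≤ (k : ℝ) + 1) hx le_rfl
    rw [mul_assoc, norm_mul, Real.norm_of_nonneg (by positivity : (0 : ℝ) ≤ _ * Real.exp _)]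
    exact mul_le_of_le_one_right (norm_nonneg _) (by simpa using this)

lemma exists_lt_momentSeries_one (ha : ∀ k, 0 ≤ a k) (hs : Summable a)
    (h : ¬ Summable fun k : ℕ ↦ ((k : ℝ) + 1) * a k) (m : ℝ) :
    ∃ x, 0 < x ∧ m < momentSeries a 1 x := by
  by_contra! hbdd
  refine h (summable_of_sum_le (c := m) (fun k ↦ mul_nonneg (by positivity) (ha k)) fun u ↦ ?_)
  have hcont : ContinuousAt (fun x : ℝ ↦ ∑ k ∈ u, a k * ((k : ℝ) + 1) ^ 1 *
      Real.exp (-((k : ℝ) + 1) * x)) 0 := by fun_prop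
  have htendsto := hcont.tendsto.mono_left (nhdsWithin_le_nhds (s := Ioi 0))
  simp only [mul_zero, Real.exp_zero, pow_one, mul_one, mul_comm (a _)] at htendsto
  refine le_of_tendsto htendsto ?_
  filter_upwards [self_mem_nhdsWithin] with x hx
  refine le_trans ?_ (hbdd x hx)
  simpa only [momentSeries, pow_one, mul_comm (a _)] using
    (summable_momentSeries hs 1 hx).sum_le_tsum u fun k _ ↦
      mul_nonneg (mul_nonneg (ha k) (by positivity)) (by positivity)

end MomentSeries

/-! ### Families of functions of space, parametrised by time -/

-- Where `h` is not integrable its integral is `0`, so only the interval on which the primitive is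
-- continuous matters.
lemma measurable_intervalIntegral_max (h : ℝ → ℝ) (a : ℝ) :
    Measurable fun t ↦ ∫ s in a..max a t, h s := by
  classical
  set S : Set ℝ := {t | a ≤ t ∧ IntervalIntegrable h volume a t}
  have hdown : ∀ u ∈ S, Icc a u ⊆ S := fun u hu t ht ↦ ⟨ht.1, hu.2.mono_set <| by
    rw [uIcc_of_le ht.1, uIcc_of_le hu.1]; exact Icc_subset_Icc_right ht.2⟩
  have hS : MeasurableSet S := OrdConnected.measurableSet
    ⟨fun s hs u hu _ ht ↦ hdown u hu ⟨hs.1.trans ht.1, ht.2⟩⟩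
  have hprim : ∀ u ∈ S, ContinuousOn (fun t ↦ ∫ s in a..t, h s) (Icc a u) := fun u hu ↦ by
    simpa only [uIcc_of_le hu.1] using
      intervalIntegral.continuousOn_primitive_interval' hu.2 left_mem_uIcc
  have hcont : ContinuousOn (fun t ↦ ∫ s in a..t, h s) S := fun t ht ↦ by
    by_cases! hmax : ∃ u ∈ S, t < u
    · obtain ⟨u, hu, htu⟩ := hmax
      refine (hprim u hu t ⟨ht.1, htu.le⟩).mono_of_mem_nhdsWithin ?_
      filter_upwards [self_mem_nhdsWithin, mem_nhdsWithin_of_mem_nhds (Iio_mem_nhds htu)]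
        with y hy hyu using ⟨hy.1, le_of_lt hyu⟩
    · exact (hprim t ht t ⟨ht.1, le_rfl⟩).mono fun y hy ↦ ⟨hy.1, hmax y hy⟩
  have hpiecewise : (fun t ↦ ∫ s in a..max a t, h s)
      = S.piecewise (fun t ↦ ∫ s in a..t, h s) (fun _ ↦ 0) ∘ max a := funext fun t ↦ by
    by_cases ht : max a t ∈ S
    · simp [ht]
    · simpa [ht] using intervalIntegral.integral_undef fun hi ↦ ht ⟨le_max_left a t, hi⟩
  rw [hpiecewise]
  exact (hcont.measurable_piecewise continuousOn_const hS).comp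
    (measurable_const.max measurable_id)

lemma measurable_deriv_family {f f' : ℝ → ℝ → ℝ}
    (hf : ∀ x, 0 < x → Measurable fun t ↦ f t x)
    (hderiv : ∀ t x, 0 < x → HasDerivAt (f t) (f' t x) x) {x : ℝ} (hx : 0 < x) :
    Measurable fun t ↦ f' t x := by
  have hstep : Tendsto (fun m : ℕ ↦ x + 1 / ((m : ℝ) + 1)) atTop (𝓝[≠] x) := by
    refine tendsto_nhdsWithin_iff.2 ⟨?_, Eventually.of_forall fun m ↦ ?_⟩
    · simpa using (tendsto_one_div_add_atTop_nhds_zero_nat (𝕜 := ℝ)).const_add x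
    · simpa using (by positivity : (m : ℝ) + 1 ≠ 0)
  refine measurable_of_tendsto_metrizable
    (f := fun (m : ℕ) t ↦ slope (f t) x (x + 1 / ((m : ℝ) + 1))) (fun m ↦ ?_)
    (tendsto_pi_nhds.2 fun t ↦ (hasDerivAt_iff_tendsto_slope.1 (hderiv t x hx)).comp hstep)
  simp only [slope_def_field]
  exact ((hf _ (by positivity)).sub (hf x hx)).div_const _

/-- If `f' t` is Lipschitz uniformly in `t`, the difference quotients of `f t` converge uniformly
in `t`, so that limits in `t` commute with differentiation in `x`. -/
lemma tendsto_deriv_family {f f' : ℝ → ℝ → ℝ} {l : Filter ℝ} {s x M : ℝ}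
    (hderiv : ∀ t y, x ≤ y → HasDerivAt (f t) (f' t y) y)
    (hlip : ∀ t y, x ≤ y → |f' t y - f' t x| ≤ M * (y - x))
    (hf : ∀ y, x ≤ y → Tendsto (fun t ↦ f t y) l (𝓝 (f s y))) :
    Tendsto (fun t ↦ f' t x) l (𝓝 (f' s x)) := by
  have hslope : ∀ t y, x < y → |f' t x - slope (f t) x y| ≤ |M| * (y - x) := by
    intro t y hxy
    obtain ⟨z, hz, hz'⟩ := exists_hasDerivAt_eq_slope (f t) (f' t) hxy
      (fun u hu ↦ (hderiv t u hu.1).continuousAt.continuousWithinAt)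
      (fun u hu ↦ hderiv t u hu.1.le)
    rw [slope_def_field, ← hz', abs_sub_comm]
    refine (hlip t z hz.1.le).trans ?_
    gcongr
    exacts [sub_nonneg.2 hz.1.le, le_abs_self M, hz.2.le]
  have hzero : Tendsto (fun y ↦ |M| * (y - x)) (𝓝[>] x) (𝓝 0) := by
    have : Tendsto (fun y ↦ |M| * (y - x)) (𝓝 x) (𝓝 (|M| * (x - x))) :=
      (tendsto_id.sub_const x).const_mul _
    simpa using this.mono_left nhdsWithin_le_nhds
  have hunif : TendstoUniformly (fun y t ↦ slope (f t) x y) (fun t ↦ f' t x) (𝓝[>] x) :=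
    Metric.tendstoUniformly_iff.2 fun ε hε ↦ by
      filter_upwards [hzero.eventually (gt_mem_nhds hε), self_mem_nhdsWithin] with y hy hxy t
      exact (hslope t y hxy).trans_lt hy
  refine hunif.tendsto_of_eventually_tendsto (L := fun y ↦ slope (f s) x y) ?_ ?_
  · filter_upwards [self_mem_nhdsWithin] with y hy
    simp only [slope_def_field]
    exact ((hf y (le_of_lt hy)).sub (hf x le_rfl)).div_const _
  · exact (hasDerivAt_iff_tendsto_slope.1 (hderiv s x le_rfl)).mono_left
      (nhdsWithin_mono x fun y hy ↦ ne_of_gt hy)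

/-- The regularity asked of the integrands of the evolution equations: measurable in time and, away
from `x = 0`, bounded uniformly in time. -/
structure IsTame (g : ℝ → ℝ → ℝ) : Prop where
  measurable : ∀ x, 0 < x → Measurable fun t ↦ g t x
  exists_bound : ∀ x, 0 < x → ∃ M, ∀ t y, x ≤ y → |g t y| ≤ M

namespace IsTame

variable {f g : ℝ → ℝ → ℝ}

lemma const (c : ℝ) : IsTame fun _ _ ↦ c :=
  ⟨fun _ _ ↦ measurable_const, fun _ _ ↦ ⟨|c|, fun _ _ _ ↦ le_rfl⟩⟩

lemma mul (hf : IsTame f) (hg : IsTame g) : IsTame fun t x ↦ f t x * g t x := by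
  refine ⟨fun x hx ↦ (hf.measurable x hx).mul (hg.measurable x hx), fun x hx ↦ ?_⟩
  obtain ⟨M, hM⟩ := hf.exists_bound x hx
  obtain ⟨N, hN⟩ := hg.exists_bound x hx
  refine ⟨M * N, fun t y hy ↦ (abs_mul _ _).trans_le ?_⟩
  exact mul_le_mul (hM t y hy) (hN t y hy) (abs_nonneg _) ((abs_nonneg _).trans (hM t y hy))

lemma sub (hf : IsTame f) (hg : IsTame g) : IsTame fun t x ↦ f t x - g t x := by
  refine ⟨fun x hx ↦ (hf.measurable x hx).sub (hg.measurable x hx), fun x hx ↦ ?_⟩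
  obtain ⟨M, hM⟩ := hf.exists_bound x hx
  obtain ⟨N, hN⟩ := hg.exists_bound x hx
  exact ⟨M + N, fun t y hy ↦ (abs_sub _ _).trans (add_le_add (hM t y hy) (hN t y hy))⟩

lemma neg (hg : IsTame g) : IsTame fun t x ↦ -g t x :=
  ⟨fun x hx ↦ (hg.measurable x hx).neg, fun x hx ↦ by
    simpa only [abs_neg] using hg.exists_bound x hx⟩

lemma intervalIntegrable (hg : IsTame g) {x : ℝ} (hx : 0 < x) (a b : ℝ) :
    IntervalIntegrable (fun t ↦ g t x) volume a b := by
  obtain ⟨M, hM⟩ := hg.exists_bound x hx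
  exact (intervalIntegrable_const (c := M)).mono_fun
    (hg.measurable x hx).aestronglyMeasurable
    (Eventually.of_forall fun t ↦ (hM t x le_rfl).trans (le_abs_self M))

lemma hasDerivAt_integral (hf : IsTame f) (hg : IsTame g)
    (hderiv : ∀ t x, 0 < x → HasDerivAt (f t) (g t x) x) (s t : ℝ) {x : ℝ} (hx : 0 < x) :
    HasDerivAt (fun y ↦ ∫ τ in s..t, f τ y) (∫ τ in s..t, g τ x) x := by
  obtain ⟨M, hM⟩ := hg.exists_bound (x / 2) (half_pos hx)
  refine (intervalIntegral.hasDerivAt_integral_of_dominated_loc_of_deriv_le (μ := volume)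
    (bound := fun _ ↦ M) (F := fun y τ ↦ f τ y) (F' := fun y τ ↦ g τ y)
    (Ioi_mem_nhds (half_lt_self hx)) ?_ (hf.intervalIntegrable hx s t)
    (hg.measurable x hx).aestronglyMeasurable
    (Eventually.of_forall fun τ _ y hy ↦ hM τ y (le_of_lt hy)) intervalIntegrable_const
    (Eventually.of_forall fun τ _ y hy ↦ hderiv τ y ((half_pos hx).trans hy))).2
  filter_upwards [Ioi_mem_nhds hx] with y hy using (hf.measurable y hy).aestronglyMeasurable

end IsTame

/-- `U` solves `∂ₜ U = g + k e^{-x} dr` on `[0, T] × (0, ∞)`, in integrated form. -/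
def IsEvolution (T : ℝ) (r : ℝ → ℝ) (k : ℝ) (U g : ℝ → ℝ → ℝ) : Prop :=
  ∀ s t x, 0 ≤ s → s ≤ t → t ≤ T → 0 < x →
    U t x = U s x + (∫ τ in s..t, g τ x) + k * (Real.exp (-x) * (r t - r s))

namespace IsEvolution

variable {T k : ℝ} {r : ℝ → ℝ} {U g U' g' : ℝ → ℝ → ℝ}

lemma deriv (hU : IsEvolution T r k U g) (hg : IsTame g) (hg' : IsTame g')
    (hUderiv : ∀ t x, 0 < x → HasDerivAt (U t) (U' t x) x)
    (hgderiv : ∀ t x, 0 < x → HasDerivAt (g t) (g' t x) x) : IsEvolution T r (-k) U' g' := by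
  intro s t x hs hst htT hx
  have hexp : HasDerivAt (fun y ↦ k * (Real.exp (-y) * (r t - r s)))
      (-k * (Real.exp (-x) * (r t - r s))) x :=
    (((hasDerivAt_id x).neg.exp.mul_const _).const_mul k).congr_deriv
      (by simp only [id_eq, Pi.neg_apply]; ring)
  refine (hUderiv t x hx).unique ((((hUderiv s x hx).add
    (hg.hasDerivAt_integral hg' hgderiv s t hx)).add hexp).congr_of_eventuallyEq ?_)
  filter_upwards [Ioi_mem_nhds hx] with y hy using hU s t y hs hst htT hy

lemma neg (hU : IsEvolution T r k U g) :
    IsEvolution T r (-k) (fun t x ↦ -U t x) fun t x ↦ -g t x := by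
  intro s t x hs hst htT hx
  beta_reduce
  rw [hU s t x hs hst htT hx, intervalIntegral.integral_neg]
  ring

lemma abs_sub_le (hU : IsEvolution T r k U g) {M s t x : ℝ} (hM : ∀ τ, |g τ x| ≤ M)
    (hs : 0 ≤ s) (hst : s ≤ t) (htT : t ≤ T) (hx : 0 < x) :
    |U t x - U s x - k * (Real.exp (-x) * (r t - r s))| ≤ M * (t - s) := by
  have hint : ‖∫ τ in s..t, g τ x‖ ≤ M * |t - s| :=
    intervalIntegral.norm_integral_le_of_norm_le_const fun τ _ ↦ hM τ
  rw [abs_of_nonneg (sub_nonneg.2 hst)] at hint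
  rwa [hU s t x hs hst htT hx, add_sub_right_comm, add_sub_cancel_right, add_sub_cancel_left]

end IsEvolution

/-- The moment families `D n t x = ∑ₖ kⁿ vₖ(t) e^{-kx}` of a critical solution `v` with control `r`,
through the properties from which the asymptotics follow. Here `V = D 0 - 1`, `∂ₓV = -D 1` and
`∂ₓ²V = D 2`; time is frozen outside `[0, T]`, so that the conditions on a single time hold on the
whole line. -/
structure IsCriticalFlow (T : ℝ) (D : ℕ → ℝ → ℝ → ℝ) (r : ℝ → ℝ) : Prop where
  hasDerivAt : ∀ n t x, 0 < x → HasDerivAt (D n t) (-D (n + 1) t x) x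
  pos : ∀ n t x, 0 < x → 0 < D n t x
  pow_mul_le : ∀ n t x, 0 < x → x ^ n * D n t x ≤ n.factorial
  mul_one_le : ∀ t x, 0 < x → x * D 1 t x ≤ 1 - D 0 t x
  mul_three_le : ∀ t x, 0 < x → x * D 3 t x ≤ 2 * D 2 t (x / 2)
  tendsto_one : ∀ t, Tendsto (D 0 t) (𝓝[>] 0) (𝓝 1)
  measurable : ∀ n x, 0 < x → Measurable fun t ↦ D n t x
  monotone : Monotone r
  map_zero : r 0 = 0
  integrated_burgers : ∀ t x, 0 ≤ t → t ≤ T → 0 < x →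
    D 0 t x = D 0 0 x - (∫ τ in 0..t, (1 - D 0 τ x) * D 1 τ x) + Real.exp (-x) * r t

/-- The quantity `E = -(∂ₓV)³ / ∂ₓ²V`, expressed through the moment families. -/
noncomputable def energy (D : ℕ → ℝ → ℝ → ℝ) (t x : ℝ) : ℝ :=
  D 1 t x ^ 3 / D 2 t x

/-! ### From the generating function to moment families -/

lemma genFun_eq_momentSeries (v : ℕ → ℝ → ℝ) (t x : ℝ) :
    genFun v t x = momentSeries (fun k ↦ v (k + 1) t) 0 x - 1 := by
  simp [genFun, momentSeries]

lemma deriv_genFun {v : ℕ → ℝ → ℝ} {t : ℝ} (hs : Summable fun k ↦ v (k + 1) t) {x : ℝ}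
    (hx : 0 < x) : deriv (genFun v t) x = -momentSeries (fun k ↦ v (k + 1) t) 1 x := by
  rw [funext (genFun_eq_momentSeries v t)]
  exact ((hasDerivAt_momentSeries hs 0 hx).sub_const 1).deriv

lemma iteratedDeriv_two_genFun {v : ℕ → ℝ → ℝ} {t : ℝ} (hs : Summable fun k ↦ v (k + 1) t)
    {x : ℝ} (hx : 0 < x) :
    iteratedDeriv 2 (genFun v t) x = momentSeries (fun k ↦ v (k + 1) t) 2 x := by
  rw [iteratedDeriv_succ, iteratedDeriv_one, ← neg_neg (momentSeries _ 2 x)]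
  refine ((hasDerivAt_momentSeries hs 1 hx).neg.congr_of_eventuallyEq ?_).deriv
  filter_upwards [Ioi_mem_nhds hx] with y hy using deriv_genFun hs hy

/-- The moment families of `v`, with time frozen outside `[0, T]`. -/
noncomputable def momentFamily (v : ℕ → ℝ → ℝ) {T : ℝ} (hT : 0 ≤ T) (n : ℕ) (t x : ℝ) : ℝ :=
  momentSeries (fun k ↦ v (k + 1) (projIcc 0 T hT t)) n x

section MomentFamily

variable {S T : ℝ} {v : ℕ → ℝ → ℝ} {r : ℝ → ℝ} {hT : 0 ≤ T} {t : ℝ}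

lemma momentFamily_of_mem (ht : t ∈ Icc 0 T) (n : ℕ) (x : ℝ) :
    momentFamily v hT n t x = momentSeries (fun k ↦ v (k + 1) t) n x := by
  rw [momentFamily, projIcc_of_mem hT ht]

lemma genFun_eq_momentFamily (ht : t ∈ Icc 0 T) (x : ℝ) :
    genFun v t x = momentFamily v hT 0 t x - 1 := by
  rw [momentFamily_of_mem ht, genFun_eq_momentSeries]

lemma deriv_genFun_eq_momentFamily (ht : t ∈ Icc 0 T) (hs : Summable fun k ↦ v (k + 1) t) {x : ℝ}
    (hx : 0 < x) : deriv (genFun v t) x = -momentFamily v hT 1 t x := by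
  rw [momentFamily_of_mem ht, deriv_genFun hs hx]

lemma iteratedDeriv_two_genFun_eq_momentFamily (ht : t ∈ Icc 0 T)
    (hs : Summable fun k ↦ v (k + 1) t) {x : ℝ} (hx : 0 < x) :
    iteratedDeriv 2 (genFun v t) x = momentFamily v hT 2 t x := by
  rw [momentFamily_of_mem ht, iteratedDeriv_two_genFun hs hx]

lemma EFun_eq_energy (ht : t ∈ Icc 0 T) (hs : Summable fun k ↦ v (k + 1) t) {x : ℝ} (hx : 0 < x) :
    EFun v t x = energy (momentFamily v hT) t x := by
  rw [EFun, deriv_genFun_eq_momentFamily (hT := hT) ht hs hx,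
    iteratedDeriv_two_genFun_eq_momentFamily (hT := hT) ht hs hx, energy]
  ring

lemma measurable_momentFamily_zero (hsol : IsBurgersSolution S v r) (hTS : T ≤ S) {x : ℝ}
    (hx : 0 < x) : Measurable fun t ↦ momentFamily v hT 0 t x := by
  obtain ⟨-, -, -, hmono, -, -, -, heq⟩ := hsol
  have hmem : ∀ t, (projIcc 0 T hT t : ℝ) ∈ Icc 0 S := fun t ↦
    Icc_subset_Icc_right hTS (projIcc 0 T hT t).2
  have hr : Monotone fun t ↦ r (projIcc 0 T hT t) := fun a b hab ↦
    hmono (hmem a) (hmem b) (monotone_projIcc hT hab)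
  have hint : Measurable fun t ↦
      ∫ s in 0..(projIcc 0 T hT t : ℝ), genFun v s x * deriv (genFun v s) x :=
    (measurable_intervalIntegral_max _ 0).comp (measurable_const.min measurable_id)
  convert ((hint.const_sub (genFun v 0 x)).add
    (hr.measurable.const_mul (Real.exp (-x)))).add_const 1 using 2 with t
  have hburgers := heq _ (hmem t) x hx
  rw [genFun_eq_momentSeries] at hburgers
  simp only [momentFamily, Pi.add_apply]
  linarith

lemma measurable_momentFamily (hsol : IsBurgersSolution S v r) (hTS : T ≤ S) (n : ℕ) {x : ℝ}
    (hx : 0 < x) : Measurable fun t ↦ momentFamily v hT n t x := by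
  induction n generalizing x with
  | zero => exact measurable_momentFamily_zero hsol hTS hx
  | succ n ih =>
    have hs := fun t ↦ hsol.2.1 _ (Icc_subset_Icc_right hTS (projIcc 0 T hT t).2)
    simpa only [momentFamily, Pi.neg_def, neg_neg] using (measurable_deriv_family (fun x hx ↦ ih hx)
      (fun t x hx ↦ hasDerivAt_momentSeries (hs t) n hx) hx).neg

lemma integrated_burgers_momentFamily (hsol : IsBurgersSolution S v r) (ht : t ∈ Icc 0 T)
    (hTS : T ≤ S) {x : ℝ} (hx : 0 < x) :
    momentFamily v hT 0 t x = momentFamily v hT 0 0 x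
      - (∫ τ in 0..t, (1 - momentFamily v hT 0 τ x) * momentFamily v hT 1 τ x)
      + Real.exp (-x) * r t := by
  obtain ⟨-, hs, -, -, -, -, -, heq⟩ := hsol
  have hint : (∫ s in 0..t, genFun v s x * deriv (genFun v s) x)
      = ∫ s in 0..t, (1 - momentFamily v hT 0 s x) * momentFamily v hT 1 s x := by
    refine intervalIntegral.integral_congr fun s hst ↦ ?_
    rw [uIcc_of_le ht.1] at hst
    have hsT : s ∈ Icc 0 T := ⟨hst.1, hst.2.trans ht.2⟩
    simp only [genFun_eq_momentFamily (hT := hT) hsT,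
      deriv_genFun_eq_momentFamily (hT := hT) hsT (hs s ⟨hsT.1, hsT.2.trans hTS⟩) hx]
    ring
  have hburgers := heq t ⟨ht.1, ht.2.trans hTS⟩ x hx
  rw [hint, genFun_eq_momentFamily (hT := hT) ht, genFun_eq_momentFamily (hT := hT) ⟨le_rfl, hT⟩]
    at hburgers
  linarith

lemma IsBurgersSolution.isCriticalFlow (hsol : IsBurgersSolution S v r) (hTS : T ≤ S)
    (hcons : ∀ t ∈ Icc (0 : ℝ) S, HasSum (fun k ↦ v (k + 1) t) 1) :
    IsCriticalFlow T (momentFamily v hT) fun t ↦ r (projIcc 0 T hT t) := by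
  have hmem : ∀ t, (projIcc 0 T hT t : ℝ) ∈ Icc 0 S := fun t ↦
    Icc_subset_Icc_right hTS (projIcc 0 T hT t).2
  have ha : ∀ t k, 0 ≤ v (k + 1) (projIcc 0 T hT t) := fun t k ↦ hsol.1 _ k.succ_pos _ (hmem t)
  have hs := fun t ↦ (hcons _ (hmem t)).summable
  have hsum := fun t ↦ (hcons _ (hmem t)).tsum_eq
  refine ⟨fun n t x hx ↦ hasDerivAt_momentSeries (hs t) n hx, fun n t x hx ↦ ?_,
    fun n t x hx ↦ ?_, fun t x hx ↦ ?_,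
    fun t x hx ↦ mul_momentSeries_succ_le (ha t) (hs t) 2 hx,
    fun t ↦ hsum t ▸ tendsto_momentSeries_zero (hs t),
    fun n x hx ↦ measurable_momentFamily hsol hTS n hx,
    fun a b hab ↦ hsol.2.2.2.1 (hmem a) (hmem b) (monotone_projIcc hT hab),
    by rw [projIcc_left, hsol.2.2.2.2.1], fun t x ht htT hx ↦ ?_⟩
  · obtain ⟨k, hk⟩ : ∃ k, v (k + 1) (projIcc 0 T hT t) ≠ 0 := by
      by_contra! hzero
      simpa [hzero] using hsum t
    exact momentSeries_pos (ha t) (hs t) ((ha t k).lt_of_ne' hk) n hx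
  · simpa only [momentFamily, hsum, mul_one] using pow_mul_momentSeries_le (ha t) (hs t) n hx
  · simpa only [momentFamily, hsum] using mul_momentSeries_one_le (ha t) (hs t) hx
  · rw [projIcc_of_mem hT ⟨ht, htT⟩]
    exact integrated_burgers_momentFamily hsol ⟨ht, htT⟩ hTS hx

end MomentFamily

/-! ### Critical flows -/

namespace IsCriticalFlow

variable {T : ℝ} {D : ℕ → ℝ → ℝ → ℝ} {r : ℝ → ℝ}

lemma control_nonneg (h : IsCriticalFlow T D r) {t : ℝ} (ht : 0 ≤ t) : 0 ≤ r t :=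
  h.map_zero ▸ h.monotone ht

lemma one_sub_pos (h : IsCriticalFlow T D r) (t : ℝ) {x : ℝ} (hx : 0 < x) : 0 < 1 - D 0 t x :=
  (mul_pos hx (h.pos 1 t x hx)).trans_le (h.mul_one_le t x hx)

lemma one_sub_le_one (h : IsCriticalFlow T D r) (t : ℝ) {x : ℝ} (hx : 0 < x) : 1 - D 0 t x ≤ 1 :=
  sub_le_self _ (h.pos 0 t x hx).le

lemma hasDerivAt_one_sub (h : IsCriticalFlow T D r) (t : ℝ) {x : ℝ} (hx : 0 < x) :
    HasDerivAt (fun y ↦ 1 - D 0 t y) (D 1 t x) x := by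
  simpa using (h.hasDerivAt 0 t x hx).const_sub 1

lemma tendsto_one_sub (h : IsCriticalFlow T D r) (t : ℝ) :
    Tendsto (fun y ↦ 1 - D 0 t y) (𝓝[>] 0) (𝓝 0) := by
  simpa using (h.tendsto_one t).const_sub 1

lemma antitone (h : IsCriticalFlow T D r) (n : ℕ) (t : ℝ) {x y : ℝ} (hx : 0 < x) (hxy : x ≤ y) :
    D n t y ≤ D n t x := by
  refine antitoneOn_of_hasDerivWithinAt_nonpos (f' := fun z ↦ -D (n + 1) t z) (convex_Ioi 0)
    (fun z hz ↦ (h.hasDerivAt n t z hz).continuousAt.continuousWithinAt)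
    (fun z hz ↦ ?_) (fun z hz ↦ ?_) hx (hx.trans_le hxy : 0 < y) hxy
  all_goals rw [interior_Ioi] at hz
  · exact (h.hasDerivAt n t z hz).hasDerivWithinAt
  · exact neg_nonpos.2 (h.pos (n + 1) t z hz).le

lemma abs_le (h : IsCriticalFlow T D r) (n : ℕ) (t : ℝ) {x y : ℝ} (hx : 0 < x) (hxy : x ≤ y) :
    |D n t y| ≤ n.factorial / x ^ n := by
  rw [abs_of_pos (h.pos n t y (hx.trans_le hxy)), le_div_iff₀' (by positivity)]
  refine le_trans ?_ (h.pow_mul_le n t x hx)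
  gcongr
  exact h.antitone n t hx hxy

lemma abs_sub_le (h : IsCriticalFlow T D r) (n : ℕ) (t : ℝ) {x y z : ℝ} (hx : 0 < x)
    (hy : x ≤ y) (hz : x ≤ z) :
    |D n t y - D n t z| ≤ (n + 1).factorial / x ^ (n + 1) * |y - z| :=
  (convex_Ici x).norm_image_sub_le_of_norm_hasDerivWithin_le
    (fun u hu ↦ (h.hasDerivAt n t u (hx.trans_le hu)).hasDerivWithinAt)
    (fun u hu ↦ by rw [norm_neg]; exact h.abs_le (n + 1) t hx hu) hz hy

lemma isTame (h : IsCriticalFlow T D r) (n : ℕ) : IsTame (D n) :=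
  ⟨h.measurable n, fun _ hx ↦ ⟨_, fun t _ hy ↦ h.abs_le n t hx hy⟩⟩

lemma isTame_one_sub (h : IsCriticalFlow T D r) : IsTame fun t x ↦ 1 - D 0 t x :=
  (IsTame.const 1).sub (h.isTame 0)

lemma isTame_flux (h : IsCriticalFlow T D r) : IsTame fun t x ↦ (1 - D 0 t x) * D 1 t x :=
  h.isTame_one_sub.mul (h.isTame 1)

lemma isTame_flux_deriv (h : IsCriticalFlow T D r) :
    IsTame fun t x ↦ D 1 t x ^ 2 - (1 - D 0 t x) * D 2 t x := by
  simpa only [sq] using ((h.isTame 1).mul (h.isTame 1)).sub (h.isTame_one_sub.mul (h.isTame 2))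

lemma isTame_flux_deriv_two (h : IsCriticalFlow T D r) :
    IsTame fun t x ↦ 3 * (D 1 t x * D 2 t x) - (1 - D 0 t x) * D 3 t x :=
  ((IsTame.const 3).mul ((h.isTame 1).mul (h.isTame 2))).sub (h.isTame_one_sub.mul (h.isTame 3))

lemma evolution_zero (h : IsCriticalFlow T D r) :
    IsEvolution T r (-1) (fun t x ↦ 1 - D 0 t x) fun t x ↦ (1 - D 0 t x) * D 1 t x := by
  intro s t x hs hst htT hx
  have hadd := intervalIntegral.integral_add_adjacent_intervals
    (h.isTame_flux.intervalIntegrable hx 0 s) (h.isTame_flux.intervalIntegrable hx s t)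
  have hs' := h.integrated_burgers s x hs (hst.trans htT) hx
  have ht' := h.integrated_burgers t x (hs.trans hst) htT hx
  linear_combination hs' - ht' - hadd

lemma evolution_one (h : IsCriticalFlow T D r) :
    IsEvolution T r 1 (D 1) fun t x ↦ D 1 t x ^ 2 - (1 - D 0 t x) * D 2 t x := by
  simpa only [neg_neg] using h.evolution_zero.deriv h.isTame_flux h.isTame_flux_deriv
    (fun t x hx ↦ h.hasDerivAt_one_sub t hx)
    fun t x hx ↦ ((h.hasDerivAt_one_sub t hx).mul (h.hasDerivAt 1 t x hx)).congr_deriv (by ring)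

lemma evolution_two (h : IsCriticalFlow T D r) :
    IsEvolution T r 1 (D 2) fun t x ↦ 3 * (D 1 t x * D 2 t x) - (1 - D 0 t x) * D 3 t x := by
  have hneg := h.isTame_flux_deriv_two.neg
  simpa only [neg_neg] using (h.evolution_one.deriv (U' := fun t x ↦ -D 2 t x)
    h.isTame_flux_deriv hneg (fun t x hx ↦ h.hasDerivAt 1 t x hx) fun t x hx ↦
      (((h.hasDerivAt 1 t x hx).pow 2).sub
        ((h.hasDerivAt_one_sub t hx).mul (h.hasDerivAt 2 t x hx))).congr_deriv
          (by simp; ring)).neg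

/-! ### Continuity in time -/

/-- Since `1 - D 0 s x → 0` as `x → 0`, a jump of `r` at `s` would leave too much mass in `D 0`. -/
lemma tendsto_control_right (h : IsCriticalFlow T D r) {s : ℝ} (hs : 0 ≤ s) (hsT : s < T) :
    Tendsto r (𝓝[≥] s) (𝓝 (r s)) := by
  refine Metric.tendsto_nhds.2 fun ε hε ↦ ?_
  have hsmall : Tendsto (fun x ↦ Real.exp x * (1 - D 0 s x)) (𝓝[>] 0) (𝓝 0) := by
    simpa using (Real.continuous_exp.tendsto 0).mono_left nhdsWithin_le_nhds
      |>.mul (h.tendsto_one_sub s)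
  obtain ⟨x, hxε, hx⟩ := ((hsmall.eventually (gt_mem_nhds hε)).and self_mem_nhdsWithin).exists
  obtain ⟨M, hM⟩ := h.isTame_flux.exists_bound x hx
  have hbound : Tendsto (fun t ↦ Real.exp x * (1 - D 0 s x + M * (t - s))) (𝓝[≥] s)
      (𝓝 (Real.exp x * (1 - D 0 s x))) := by
    have hcont : Continuous fun t ↦ Real.exp x * (1 - D 0 s x + M * (t - s)) := by fun_prop
    simpa using (hcont.tendsto s).mono_left nhdsWithin_le_nhds
  filter_upwards [hbound.eventually (gt_mem_nhds hxε), self_mem_nhdsWithin,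
    mem_nhdsWithin_of_mem_nhds (Iio_mem_nhds hsT)] with t ht hst htT
  rw [Real.dist_eq, abs_of_nonneg (sub_nonneg.2 (h.monotone hst))]
  refine lt_of_le_of_lt ?_ ht
  have hle := (_root_.abs_le.1 (h.evolution_zero.abs_sub_le (fun τ ↦ hM τ x le_rfl) hs hst
    (le_of_lt htT) hx)).2
  have hpos := h.one_sub_pos t hx
  rw [Real.exp_neg] at hle
  rw [← inv_mul_le_iff₀ (Real.exp_pos x)]
  linarith

lemma tendsto_of_tendsto_control (h : IsCriticalFlow T D r) (n : ℕ) {l : Filter ℝ} {s : ℝ}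
    (hl : l ≤ 𝓝 s) (hmem : ∀ᶠ t in l, t ∈ Icc 0 T) (hs : s ∈ Icc 0 T)
    (hr : Tendsto r l (𝓝 (r s))) {x : ℝ} (hx : 0 < x) :
    Tendsto (fun t ↦ D n t x) l (𝓝 (D n s x)) := by
  induction n generalizing x with
  | zero =>
    have hprim := intervalIntegral.continuous_primitive
      (fun a b ↦ h.isTame_flux.intervalIntegrable hx a b) 0
    have hlim := (((hprim.tendsto s).mono_left hl).const_sub (D 0 0 x)).add
      (hr.const_mul (Real.exp (-x)))
    rw [← h.integrated_burgers s x hs.1 hs.2 hx] at hlim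
    exact hlim.congr' (hmem.mono fun t ht ↦ (h.integrated_burgers t x ht.1 ht.2 hx).symm)
  | succ n ih =>
    have hlim := tendsto_deriv_family (f := D n) (f' := fun t y ↦ -D (n + 1) t y) (l := l) (s := s)
      (fun t y hy ↦ h.hasDerivAt n t y (hx.trans_le hy))
      (fun t y hy ↦ by
        have hsub := h.abs_sub_le (n + 1) t hx le_rfl hy
        rwa [abs_sub_comm x y, abs_of_nonneg (sub_nonneg.2 hy), ← neg_sub_neg] at hsub)
      fun y hy ↦ ih (hx.trans_le hy)
    simpa using hlim.neg

lemma tendsto_right (h : IsCriticalFlow T D r) (n : ℕ) {s : ℝ} (hs : 0 ≤ s) (hsT : s < T)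
    {x : ℝ} (hx : 0 < x) : Tendsto (fun t ↦ D n t x) (𝓝[≥] s) (𝓝 (D n s x)) :=
  h.tendsto_of_tendsto_control n nhdsWithin_le_nhds
    (mem_of_superset (Icc_mem_nhdsGE hsT) (Icc_subset_Icc_left hs)) ⟨hs, hsT.le⟩
    (h.tendsto_control_right hs hsT) hx

lemma tendsto_prod (h : IsCriticalFlow T D r) (n : ℕ) {l : Filter ℝ} {s y : ℝ} (hy : 0 < y)
    (hl : Tendsto (fun t ↦ D n t y) l (𝓝 (D n s y))) :
    Tendsto (fun p : ℝ × ℝ ↦ D n p.1 p.2) (l ×ˢ 𝓝 y) (𝓝 (D n s y)) := by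
  have hz : Tendsto (fun p : ℝ × ℝ ↦ (n + 1).factorial / (y / 2) ^ (n + 1) * |p.2 - y|)
      (l ×ˢ 𝓝 y) (𝓝 0) := by
    have hlim : Tendsto (fun z : ℝ ↦ (n + 1).factorial / (y / 2) ^ (n + 1) * |z - y|) (𝓝 y) (𝓝 0) :=
      Continuous.tendsto' (by fun_prop) _ _ (by simp)
    exact hlim.comp tendsto_snd
  have hdiff : Tendsto (fun p : ℝ × ℝ ↦ D n p.1 p.2 - D n p.1 y) (l ×ˢ 𝓝 y) (𝓝 0) := by
    refine squeeze_zero_norm' ?_ hz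
    filter_upwards [tendsto_snd.eventually (Ioi_mem_nhds (half_lt_self hy))] with p hp
    exact h.abs_sub_le n p.1 (half_pos hy) (le_of_lt hp) (half_le_self hy.le)
  simpa using hdiff.add (hl.comp (tendsto_fst (g := 𝓝 y)))

end IsCriticalFlow

/-! ### One-sided expansions with respect to time and control -/

/-- `dH = a ds + b dr` to the right of `s`, where the increments of the monotone control `r` need
not be comparable to those of time. -/
def HasRightExpansion (r H : ℝ → ℝ) (s a b : ℝ) : Prop :=
  (fun σ ↦ H σ - H s - a * (σ - s) - b * (r σ - r s)) =o[𝓝[>] s] fun σ ↦ (σ - s) + (r σ - r s)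

namespace HasRightExpansion

open Asymptotics

variable {r H K : ℝ → ℝ} {s a b a' b' : ℝ}

lemma neg (h : HasRightExpansion r H s a b) : HasRightExpansion r (fun σ ↦ -H σ) s (-a) (-b) :=
  (h.neg_left).congr_left fun σ ↦ by ring

lemma const_mul (h : HasRightExpansion r H s a b) (c : ℝ) :
    HasRightExpansion r (fun σ ↦ c * H σ) s (c * a) (c * b) :=
  (h.const_mul_left c).congr_left fun σ ↦ by ring

lemma sub (h : HasRightExpansion r H s a b) (k : HasRightExpansion r K s a' b') :
    HasRightExpansion r (fun σ ↦ H σ - K σ) s (a - a') (b - b') :=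
  (IsLittleO.sub h k).congr_left fun σ ↦ by ring

lemma control : HasRightExpansion r r s 0 1 :=
  (isLittleO_zero _ _).congr_left fun σ ↦ by ring

lemma isBigO_time (hr : Monotone r) :
    (fun σ ↦ σ - s) =O[𝓝[>] s] fun σ ↦ (σ - s) + (r σ - r s) := by
  refine IsBigO.of_bound' ?_
  filter_upwards [self_mem_nhdsWithin] with σ hσ
  have hσ' := sub_nonneg.2 (mem_Ioi.1 hσ).le
  have hrσ := sub_nonneg.2 (hr (mem_Ioi.1 hσ).le)
  rw [Real.norm_of_nonneg hσ', Real.norm_of_nonneg (add_nonneg hσ' hrσ)]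
  exact le_add_of_nonneg_right hrσ

lemma isBigO_control (hr : Monotone r) :
    (fun σ ↦ r σ - r s) =O[𝓝[>] s] fun σ ↦ (σ - s) + (r σ - r s) := by
  simpa using (isBigO_refl (fun σ ↦ (σ - s) + (r σ - r s)) (𝓝[>] s)).sub (isBigO_time hr)

lemma of_hasDerivWithinAt (hr : Monotone r) (h : HasDerivWithinAt H a (Ici s) s) :
    HasRightExpansion r H s a 0 :=
  (((hasDerivWithinAt_iff_isLittleO.1 (h.mono Ioi_subset_Ici_self)).trans_isBigO
    (isBigO_time hr))).congr_left fun σ ↦ by rw [smul_eq_mul]; ring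

lemma isBigO (hr : Monotone r) (h : HasRightExpansion r H s a b) :
    (fun σ ↦ H σ - H s) =O[𝓝[>] s] fun σ ↦ (σ - s) + (r σ - r s) :=
  ((IsLittleO.isBigO h).add (((isBigO_time hr).const_mul_left a).add
    ((isBigO_control hr).const_mul_left b))).congr_left fun σ ↦ by ring

lemma tendsto (hr : Monotone r) (hrs : Tendsto r (𝓝[>] s) (𝓝 (r s)))
    (h : HasRightExpansion r H s a b) : Tendsto H (𝓝[>] s) (𝓝 (H s)) := by
  have htime : Tendsto (fun σ ↦ σ - s) (𝓝[>] s) (𝓝 0) :=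
    ((continuous_sub_right s).tendsto' s 0 (sub_self s)).mono_left nhdsWithin_le_nhds
  have hsum : Tendsto (fun σ ↦ (σ - s) + (r σ - r s)) (𝓝[>] s) (𝓝 0) := by
    simpa using htime.add (hrs.sub_const (r s))
  simpa using ((h.isBigO hr).trans_tendsto hsum).add_const (H s)

lemma comp (hr : Monotone r) (hrs : Tendsto r (𝓝[>] s) (𝓝 (r s)))
    (h : HasRightExpansion r H s a b) {f : ℝ → ℝ} {f' : ℝ} (hf : HasDerivAt f f' (H s)) :
    HasRightExpansion r (fun σ ↦ f (H σ)) s (f' * a) (f' * b) :=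
  ((((hasDerivAt_iff_isLittleO.1 hf).comp_tendsto (h.tendsto hr hrs)).trans_isBigO
    (h.isBigO hr)).add (h.const_mul_left f')).congr_left fun σ ↦ by
      simp only [Function.comp_apply, smul_eq_mul]; ring

end HasRightExpansion

lemma Icc_induction {a b : ℝ} {P : ℝ → Prop} (hab : a ≤ b) (ha : P a)
    (hleft : ∀ s ∈ Ioc a b, (∀ u ∈ Ico a s, P u) → P s)
    (hright : ∀ s ∈ Ico a b, P s → ∀ᶠ u in 𝓝[>] s, P u) : P b := by
  by_contra hb
  set S : Set ℝ := {u ∈ Icc a b | ¬P u}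
  have hbS : b ∈ S := ⟨⟨hab, le_rfl⟩, hb⟩
  have hbdd : BddBelow S := ⟨a, fun u hu ↦ hu.1.1⟩
  have hac : a ≤ sInf S := le_csInf ⟨b, hbS⟩ fun u hu ↦ hu.1.1
  have hcb : sInf S ≤ b := csInf_le hbdd hbS
  have hc : P (sInf S) := by
    rcases hac.eq_or_lt with h | h
    · rwa [← h]
    · exact hleft _ ⟨h, hcb⟩ fun u hu ↦ by_contra fun hPu ↦
        notMem_of_lt_csInf hu.2 hbdd ⟨⟨hu.1, hu.2.le.trans hcb⟩, hPu⟩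
  have hcb' : sInf S < b := hcb.lt_of_ne fun h ↦ hb (h ▸ hc)
  obtain ⟨z, hz, hzP⟩ := mem_nhdsGT_iff_exists_Ioo_subset.1 (hright _ ⟨hac, hcb'⟩ hc)
  obtain ⟨u, hu, huz⟩ := exists_lt_of_csInf_lt ⟨b, hbS⟩ hz
  refine hu.2 (hzP ⟨(csInf_le hbdd hu).lt_of_ne fun h ↦ hu.2 (h ▸ hc), huz⟩)

lemma le_of_hasRightExpansion_nonpos {r G : ℝ → ℝ} {a b : ℝ} (hab : a ≤ b) (hr : Monotone r)
    (hexp : ∀ s ∈ Ico a b, ∃ α β, α ≤ 0 ∧ β ≤ 0 ∧ HasRightExpansion r G s α β)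
    (hlsc : ∀ s ∈ Ioc a b, LowerSemicontinuousWithinAt G (Iio s) s) : G b ≤ G a := by
  set μ : ℝ → ℝ := fun s ↦ s + r s with hμ
  have hμmono : Monotone μ := monotone_id.add hr
  have hε : ∀ ε > 0, G b ≤ G a + ε * (μ b - μ a) := by
    intro ε hε
    refine Icc_induction (P := fun s ↦ G s ≤ G a + ε * (μ s - μ a)) hab (by simp)
      (fun s hs hlt ↦ ?_) fun s hs hle ↦ ?_
    · by_contra! hGs
      obtain ⟨u, ⟨hu, hau⟩, hus⟩ := ((hlsc s hs _ hGs).and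
        (mem_nhdsWithin_of_mem_nhds (Ioi_mem_nhds hs.1))).and self_mem_nhdsWithin |>.exists
      have hμu := mul_le_mul_of_nonneg_left (hμmono (le_of_lt hus)) hε.le
      linarith [hlt u ⟨le_of_lt hau, hus⟩]
    · obtain ⟨α, β, hα, hβ, hG⟩ := hexp s hs
      filter_upwards [hG.bound hε, self_mem_nhdsWithin] with u hu hsu
      have hu_s := sub_nonneg.2 (mem_Ioi.1 hsu).le
      have hru := sub_nonneg.2 (hr (mem_Ioi.1 hsu).le)
      rw [Real.norm_of_nonneg (add_nonneg hu_s hru)] at hu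
      have hα' := mul_nonpos_of_nonpos_of_nonneg hα hu_s
      have hβ' := mul_nonpos_of_nonpos_of_nonneg hβ hru
      have hu' := (le_abs_self _).trans hu
      simp only [hμ] at hle ⊢
      linarith
  have hlim : Tendsto (fun ε ↦ G a + ε * (μ b - μ a)) (𝓝[>] 0) (𝓝 (G a)) :=
    (Continuous.tendsto' (by fun_prop) _ _ (by simp)).mono_left nhdsWithin_le_nhds
  exact ge_of_tendsto hlim (eventually_mem_nhdsWithin.mono hε)

lemma lowerSemicontinuousWithinAt_of_le_add {G : ℝ → ℝ} {M a s : ℝ} (has : a < s)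
    (hG : ∀ u ∈ Ico a s, G s ≤ G u + M * (s - u)) : LowerSemicontinuousWithinAt G (Iio s) s := by
  intro y hy
  have hlim : Tendsto (fun u ↦ G s - M * (s - u)) (𝓝[<] s) (𝓝 (G s)) :=
    (Continuous.tendsto' (by fun_prop) _ _ (by simp)).mono_left nhdsWithin_le_nhds
  filter_upwards [hlim.eventually (lt_mem_nhds hy), self_mem_nhdsWithin,
    mem_nhdsWithin_of_mem_nhds (Ioi_mem_nhds has)] with u hu hus hau
  linarith [hG u ⟨le_of_lt hau, hus⟩]

lemma lowerSemicontinuousWithinAt_of_continuousOn {G : ℝ → ℝ} {a b s : ℝ}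
    (hG : ContinuousOn G (Icc a b)) (hs : s ∈ Ioc a b) :
    LowerSemicontinuousWithinAt G (Iio s) s :=
  ((hG s ⟨hs.1.le, hs.2⟩).mono_of_mem_nhdsWithin (mem_of_superset (Ico_mem_nhdsLT hs.1)
    fun _ hu ↦ ⟨hu.1, hu.2.le.trans hs.2⟩)).lowerSemicontinuousWithinAt

lemma le_of_hasDerivWithinAt_nonpos {G G' : ℝ → ℝ} {a b : ℝ} (hab : a ≤ b)
    (hG : ContinuousOn G (Icc a b)) (hderiv : ∀ s ∈ Ico a b, HasDerivWithinAt G (G' s) (Ici s) s)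
    (hG' : ∀ s ∈ Ico a b, G' s ≤ 0) : G b ≤ G a :=
  image_le_of_deriv_right_le_deriv_boundary (B := fun _ ↦ G a) (B' := fun _ ↦ 0) hG hderiv le_rfl
    continuousOn_const (fun _ _ ↦ hasDerivWithinAt_const _ _ _) hG' ⟨hab, le_rfl⟩

lemma average_isLittleO {g : ℝ → ℝ → ℝ} {ξ : ℝ → ℝ} {s : ℝ}
    (hξ : Tendsto ξ (𝓝[>] s) (𝓝 (ξ s))) (hξpos : 0 < ξ s)
    (hg : Tendsto (fun p : ℝ × ℝ ↦ g p.1 p.2) (𝓝[≥] s ×ˢ 𝓝 (ξ s)) (𝓝 (g s (ξ s))))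
    (hgtame : IsTame g) :
    (fun σ ↦ (∫ τ in s..σ, g τ (ξ σ)) - g s (ξ s) * (σ - s)) =o[𝓝[>] s] fun σ ↦ σ - s := by
  refine Asymptotics.isLittleO_iff.2 fun ε hε ↦ ?_
  obtain ⟨pt, hpt, px, hpx, hp⟩ := eventually_prod_iff.1 (Metric.tendsto_nhds.1 hg ε hε)
  obtain ⟨z, hz, hzpt⟩ := mem_nhdsGE_iff_exists_Ico_subset.1 hpt
  filter_upwards [hξ.eventually hpx, self_mem_nhdsWithin,
    mem_nhdsWithin_of_mem_nhds (Iio_mem_nhds hz), hξ.eventually (lt_mem_nhds hξpos)]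
    with σ hσ hsσ hσz hpos
  have hconst : (∫ τ in s..σ, g τ (ξ σ)) - g s (ξ s) * (σ - s)
      = ∫ τ in s..σ, (g τ (ξ σ) - g s (ξ s)) := by
    rw [intervalIntegral.integral_sub (hgtame.intervalIntegrable hpos s σ) intervalIntegrable_const,
      intervalIntegral.integral_const, smul_eq_mul, mul_comm]
  rw [hconst]
  refine intervalIntegral.norm_integral_le_of_norm_le_const fun τ hτ ↦ ?_
  rw [uIoc_of_le (le_of_lt hsσ)] at hτ
  exact (hp (hzpt ⟨hτ.1.le, hτ.2.trans_lt hσz⟩) hσ).le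

namespace IsEvolution

variable {T k : ℝ} {r ξ : ℝ → ℝ} {U g : ℝ → ℝ → ℝ}

open Asymptotics in
lemma hasRightExpansion (hU : IsEvolution T r k U g) (hg : IsTame g) (hr : Monotone r)
    {s U' ξ' : ℝ} (hs : 0 ≤ s) (hsT : s < T) (hξ : HasDerivWithinAt ξ ξ' (Ici s) s)
    (hξpos : 0 < ξ s) (hUderiv : HasDerivAt (U s) U' (ξ s))
    (hgcont : Tendsto (fun p : ℝ × ℝ ↦ g p.1 p.2) (𝓝[≥] s ×ˢ 𝓝 (ξ s)) (𝓝 (g s (ξ s)))) :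
    HasRightExpansion r (fun σ ↦ U σ (ξ σ)) s (U' * ξ' + g s (ξ s)) (k * Real.exp (-ξ s)) := by
  have hξlim : Tendsto ξ (𝓝[>] s) (𝓝 (ξ s)) :=
    hξ.continuousWithinAt.tendsto.mono_left (nhdsWithin_mono s Ioi_subset_Ici_self)
  have hspace : HasRightExpansion r (fun σ ↦ U s (ξ σ)) s (U' * ξ') 0 :=
    .of_hasDerivWithinAt hr (hUderiv.comp_hasDerivWithinAt s hξ)
  have htime := (average_isLittleO hξlim hξpos hgcont hg).trans_isBigO
    (HasRightExpansion.isBigO_time hr)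
  have hcontrol : (fun σ ↦ k * (Real.exp (-ξ σ) - Real.exp (-ξ s)) * (r σ - r s))
      =o[𝓝[>] s] fun σ ↦ (1 : ℝ) * ((σ - s) + (r σ - r s)) := by
    refine IsLittleO.mul_isBigO ((isLittleO_one_iff ℝ).2 ?_) (HasRightExpansion.isBigO_control hr)
    simpa using (((Real.continuous_exp.tendsto _).comp hξlim.neg).sub_const
      (Real.exp (-ξ s))).const_mul k
  simp only [one_mul] at hcontrol
  refine ((hspace.add htime).add hcontrol).congr' ?_ EventuallyEq.rfl
  filter_upwards [self_mem_nhdsWithin, mem_nhdsWithin_of_mem_nhds (Iio_mem_nhds hsT),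
    hξlim.eventually (lt_mem_nhds hξpos)] with σ hσ hσT hpos
  rw [hU s σ (ξ σ) hs (le_of_lt hσ) (le_of_lt hσT) hpos]
  ring

lemma abs_sub_le_along (hU : IsEvolution T r k U g) {M K u s : ℝ} (hu : 0 ≤ u) (hus : u ≤ s)
    (hsT : s ≤ T) (hξpos : 0 < ξ s) (hM : ∀ τ, |g τ (ξ s)| ≤ M)
    (hK : |U u (ξ s) - U u (ξ u)| ≤ K * (s - u)) :
    |U s (ξ s) - U u (ξ u) - k * (Real.exp (-ξ s) * (r s - r u))| ≤ (M + K) * (s - u) := by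
  rw [add_mul, show U s (ξ s) - U u (ξ u) - k * (Real.exp (-ξ s) * (r s - r u))
    = (U s (ξ s) - U u (ξ s) - k * (Real.exp (-ξ s) * (r s - r u)))
      + (U u (ξ s) - U u (ξ u)) by ring]
  exact (abs_add_le _ _).trans (add_le_add (hU.abs_sub_le hM hu hus hsT hξpos) hK)

end IsEvolution

/-! ### Backward characteristics -/

/-- A backward characteristic through `(t, x)`: a curve `ξ' = -(1 - D 0 s ξ)` on `[0, t]` with
`ξ t = x`. Since the speed may jump together with the control, only right derivatives are asked
for; the two bounds express `0 ≤ -ξ' ≤ 1`. -/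
structure IsCharacteristic (D : ℕ → ℝ → ℝ → ℝ) (t x : ℝ) (ξ : ℝ → ℝ) : Prop where
  continuousOn : ContinuousOn ξ (Icc 0 t)
  apply_end : ξ t = x
  le_apply : ∀ s ∈ Icc 0 t, x ≤ ξ s
  apply_le : ∀ s ∈ Icc 0 t, ξ s ≤ x + (t - s)
  hasDerivWithinAt : ∀ s ∈ Ico 0 t, HasDerivWithinAt ξ (-(1 - D 0 s (ξ s))) (Ici s) s

lemma log_sub_log_le {a b : ℝ} (ha : 0 < a) (hb : 0 < b) :
    Real.log b - Real.log a ≤ (b - a) / a := by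
  rw [← Real.log_div hb.ne' ha.ne', sub_div, div_self ha.ne']
  exact Real.log_le_sub_one_of_pos (div_pos hb ha)

lemma abs_log_sub_log_le {m a b : ℝ} (hm : 0 < m) (ha : m ≤ a) (hb : m ≤ b) :
    |Real.log a - Real.log b| ≤ |a - b| / m := by
  have hone : ∀ {c d : ℝ}, m ≤ c → m ≤ d → Real.log d - Real.log c ≤ |d - c| / m :=
    fun hc hd ↦ (log_sub_log_le (hm.trans_le hc) (hm.trans_le hd)).trans
      (div_le_div₀ (abs_nonneg _) (le_abs_self _) hm hc)
  exact abs_sub_le_iff.2 ⟨hone hb ha, abs_sub_comm a b ▸ hone ha hb⟩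

/-- The velocity of a backward characteristic in the coordinate `c = exp ξ`, diminished by `r`.
In this coordinate the jumps of the velocity are those of `r`, so that the difference is Lipschitz
in time as well. -/
noncomputable def expVelocity (D : ℕ → ℝ → ℝ → ℝ) (r : ℝ → ℝ) (s c : ℝ) : ℝ :=
  c * (D 0 s (Real.log c) - 1) - r s

namespace IsCriticalFlow

variable {T : ℝ} {D : ℕ → ℝ → ℝ → ℝ} {r : ℝ → ℝ} {t x : ℝ}

lemma abs_zero_sub_one_le_one (h : IsCriticalFlow T D r) (t : ℝ) (hx : 0 < x) :
    |D 0 t x - 1| ≤ 1 := by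
  rw [abs_sub_comm, abs_of_pos (h.one_sub_pos t hx)]
  exact h.one_sub_le_one t hx

lemma abs_flux_le (h : IsCriticalFlow T D r) (t : ℝ) {y : ℝ} (hx : 0 < x) (hxy : x ≤ y) :
    |(1 - D 0 t y) * D 1 t y| ≤ 1 / x := by
  have hD : |D 1 t y| ≤ 1 / x := by simpa using h.abs_le 1 t hx hxy
  rw [abs_mul, abs_sub_comm, ← one_mul (1 / x)]
  gcongr
  exact h.abs_zero_sub_one_le_one t (hx.trans_le hxy)

lemma abs_expVelocity_sub_le_space (h : IsCriticalFlow T D r) (hx : 0 < x) (s : ℝ) {b c c' : ℝ}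
    (hc : Real.exp x ≤ c) (hc' : c' ∈ Icc (Real.exp x) b) :
    |expVelocity D r s c - expVelocity D r s c'| ≤ (1 + b / x) * |c - c'| := by
  have hexp : 1 ≤ Real.exp x := Real.one_le_exp hx.le
  have hc0 : 0 < c := (Real.exp_pos x).trans_le hc
  have hc0' : 0 < c' := (Real.exp_pos x).trans_le hc'.1
  have hl : x ≤ Real.log c := (Real.le_log_iff_exp_le hc0).2 hc
  have hl' : x ≤ Real.log c' := (Real.le_log_iff_exp_le hc0').2 hc'.1
  have hD : |D 0 s (Real.log c) - D 0 s (Real.log c')| ≤ 1 / x * |c - c'| := by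
    have hlog : |Real.log c - Real.log c'| ≤ |c - c'| := by
      simpa using abs_log_sub_log_le one_pos (hexp.trans hc) (hexp.trans hc'.1)
    have hspace := h.abs_sub_le 0 s hx hl hl'
    rw [zero_add, pow_one, Nat.factorial_one, Nat.cast_one] at hspace
    exact hspace.trans (mul_le_mul_of_nonneg_left hlog (by positivity))
  calc |expVelocity D r s c - expVelocity D r s c'|
      = |(D 0 s (Real.log c) - 1) * (c - c')
          + c' * (D 0 s (Real.log c) - D 0 s (Real.log c'))| := by
        rw [expVelocity, expVelocity]; ring_nf
    _ ≤ 1 * |c - c'| + b * (1 / x * |c - c'|) := by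
        refine (abs_add_le _ _).trans (add_le_add ?_ ?_)
        · rw [abs_mul]
          gcongr
          exact h.abs_zero_sub_one_le_one s (hx.trans_le hl)
        · rw [abs_mul, abs_of_pos hc0']
          exact mul_le_mul hc'.2 hD (abs_nonneg _) (hc0'.le.trans hc'.2)
    _ = (1 + b / x) * |c - c'| := by ring

lemma abs_expVelocity_sub_le_time (h : IsCriticalFlow T D r) (hx : 0 < x) {s s' b c : ℝ}
    (hs : s ∈ Icc 0 T) (hs' : s' ∈ Icc 0 T) (hc : c ∈ Icc (Real.exp x) b) :
    |expVelocity D r s c - expVelocity D r s' c| ≤ b / x * |s - s'| := by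
  wlog hle : s ≤ s' generalizing s s'
  · rw [abs_sub_comm, abs_sub_comm s]
    exact this hs' hs (le_of_not_ge hle)
  have hc0 : 0 < c := (Real.exp_pos x).trans_le hc.1
  have hl : x ≤ Real.log c := (Real.le_log_iff_exp_le hc0).2 hc.1
  have hflux := h.evolution_zero.abs_sub_le (fun τ ↦ h.abs_flux_le τ hx hl) hs.1 hle hs'.2
    (hx.trans_le hl)
  rw [Real.exp_neg, Real.exp_log hc0] at hflux
  have hvel : expVelocity D r s c - expVelocity D r s' c
      = c * ((1 - D 0 s' (Real.log c)) - (1 - D 0 s (Real.log c)) - -1 * (c⁻¹ * (r s' - r s))) := by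
    rw [expVelocity, expVelocity]
    field_simp
    ring
  rw [hvel, abs_mul, abs_of_pos hc0, abs_sub_comm s, abs_of_nonneg (sub_nonneg.2 hle)]
  refine (mul_le_mul hc.2 hflux (abs_nonneg _) (hc0.le.trans hc.2)).trans_eq ?_
  ring

lemma abs_expVelocity_le (h : IsCriticalFlow T D r) (hx : 0 < x) {s b c : ℝ} (hs : s ∈ Icc 0 t)
    (hc : c ∈ Icc (Real.exp x) b) : |expVelocity D r s c| ≤ b + r t := by
  have hc0 : 0 < c := (Real.exp_pos x).trans_le hc.1
  have hl : x ≤ Real.log c := (Real.le_log_iff_exp_le hc0).2 hc.1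
  refine (abs_sub _ _).trans (add_le_add ?_ ?_)
  · rw [abs_mul, abs_of_pos hc0]
    exact (mul_le_of_le_one_right hc0.le (h.abs_zero_sub_one_le_one s (hx.trans_le hl))).trans hc.2
  · rw [abs_of_nonneg (h.control_nonneg hs.1)]
    exact h.monotone hs.2

lemma integral_control_hasDerivWithinAt (h : IsCriticalFlow T D r) {s : ℝ} (hs : 0 ≤ s)
    (hsT : s < T) : HasDerivWithinAt (fun s ↦ ∫ τ in 0..s, r τ) (r s) (Ici s) s :=
  intervalIntegral.integral_hasDerivWithinAt_right h.monotone.intervalIntegrable (t := Ioi s)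
    h.monotone.measurable.stronglyMeasurable.stronglyMeasurableAtFilter
    ((h.tendsto_control_right hs hsT).mono_left (nhdsWithin_mono s Ioi_subset_Ici_self))

lemma isPicardLindelof_expVelocity (h : IsCriticalFlow T D r) (ht : 0 ≤ t) (htT : t ≤ T)
    (hx : 0 < x) {b : ℝ} (hb : Real.exp x ≤ b) (z₀ : ℝ) :
    ∃ A L K, IsPicardLindelof
      (fun s z ↦ expVelocity D r s (projIcc (Real.exp x) b hb (z + ∫ τ in 0..s, r τ)))
      (tmin := 0) (tmax := t) ⟨t, ht, le_rfl⟩ z₀ A 0 L K := by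
  have hb0 : 0 < b := (Real.exp_pos x).trans_le hb
  have hrt : 0 ≤ r t := h.control_nonneg ht
  set R : ℝ → ℝ := fun s ↦ ∫ τ in 0..s, r τ
  have hR : Continuous R :=
    intervalIntegral.continuous_primitive (fun _ _ ↦ h.monotone.intervalIntegrable) 0
  have hmem : ∀ z, (projIcc (Real.exp x) b hb z : ℝ) ∈ Icc (Real.exp x) b := fun z ↦
    (projIcc _ _ hb z).2
  have hspace : ∀ s z z', |expVelocity D r s (projIcc _ b hb z)
      - expVelocity D r s (projIcc _ b hb z')| ≤ (1 + b / x) * |z - z'| := fun s z z' ↦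
    (h.abs_expVelocity_sub_le_space hx s (hmem z).1 (hmem z')).trans
      (mul_le_mul_of_nonneg_left (abs_projIcc_sub_projIcc hb) (by positivity))
  refine ⟨⟨(b + r t) * t, by positivity⟩, ⟨b + r t, by positivity⟩, ⟨1 + b / x, by positivity⟩,
    fun s _ ↦ LipschitzOnWith.of_dist_le_mul fun z _ z' _ ↦ ?_, fun z _ s₀ hs₀ ↦ ?_,
    fun s hs z _ ↦ h.abs_expVelocity_le hx hs (hmem _), ?_⟩
  · have hz := hspace s (z + R s) (z' + R s)
    rwa [add_sub_add_right_eq_sub] at hz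
  · have hlim : Tendsto (fun s ↦ (1 + b / x) * |R s - R s₀| + b / x * |s - s₀|) (𝓝[Icc 0 t] s₀)
        (𝓝 0) := (Continuous.tendsto' (by fun_prop) _ _ (by simp)).mono_left nhdsWithin_le_nhds
    refine tendsto_iff_dist_tendsto_zero.2
      (squeeze_zero' (Eventually.of_forall fun _ ↦ dist_nonneg) ?_ hlim)
    filter_upwards [self_mem_nhdsWithin] with s hs
    refine (dist_triangle _ (expVelocity D r s (projIcc _ b hb (z + R s₀))) _).trans
      (add_le_add ?_ ?_)
    · simpa [Real.dist_eq] using hspace s (z + R s) (z + R s₀)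
    · exact h.abs_expVelocity_sub_le_time hx (Icc_subset_Icc_right htT hs)
        (Icc_subset_Icc_right htT hs₀) (hmem _)
  · rw [sub_self, sub_zero, NNReal.coe_zero, sub_zero, max_eq_right ht]
    exact le_rfl

lemma exists_clamped_solution (h : IsCriticalFlow T D r) (ht : 0 ≤ t) (htT : t ≤ T) (hx : 0 < x)
    {b : ℝ} (hb : Real.exp x ≤ b) :
    ∃ η, ContinuousOn η (Icc 0 t) ∧ η t = Real.exp x ∧ ∀ s ∈ Ico 0 t,
      HasDerivWithinAt η (-(projIcc _ b hb (η s) * (1 - D 0 s (Real.log (projIcc _ b hb (η s))))))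
        (Ici s) s := by
  set R : ℝ → ℝ := fun s ↦ ∫ τ in 0..s, r τ
  have hR : Continuous R :=
    intervalIntegral.continuous_primitive (fun _ _ ↦ h.monotone.intervalIntegrable) 0
  obtain ⟨A, L, K, hPL⟩ := h.isPicardLindelof_expVelocity ht htT hx hb (Real.exp x - R t)
  obtain ⟨ζ, hζt, hζ⟩ := hPL.exists_eq_forall_mem_Icc_hasDerivWithinAt₀
  refine ⟨fun s ↦ ζ s + R s, .add (fun s hs ↦ (hζ s hs).continuousWithinAt) hR.continuousOn,
    by simp only [hζt, sub_add_cancel], fun s hs ↦ ?_⟩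
  have hζs := (hζ s ⟨hs.1, hs.2.le⟩).mono_of_mem_nhdsWithin
    (mem_of_superset (Icc_mem_nhdsGE hs.2) (Icc_subset_Icc_left hs.1))
  refine (hζs.add (h.integral_control_hasDerivWithinAt hs.1 (hs.2.trans_le htT))).congr_deriv ?_
  rw [expVelocity]
  ring

end IsCriticalFlow

lemma mem_Icc_of_hasDerivWithinAt_clamp {η w : ℝ → ℝ} {a b t : ℝ} (ha : 0 < a) (hab : a ≤ b)
    (hη : ContinuousOn η (Icc 0 t)) (hηt : η t = a) (hw : ∀ s ∈ Ico 0 t, w s ∈ Icc 0 1)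
    (hderiv : ∀ s ∈ Ico 0 t, HasDerivWithinAt η (-(projIcc a b hab (η s) * w s)) (Ici s) s)
    {s : ℝ} (hs : s ∈ Icc 0 t) : η s ∈ Icc a (a * Real.exp (t - s)) := by
  have hlower : ∀ u ∈ Icc 0 t, a ≤ η u := fun u hu ↦ by
    rw [← hηt]
    refine le_of_hasDerivWithinAt_nonpos hu.2 (hη.mono (Icc_subset_Icc_left hu.1))
      (fun v hv ↦ hderiv v ⟨hu.1.trans hv.1, hv.2⟩) fun v hv ↦ ?_
    exact neg_nonpos.2 (mul_nonneg (ha.le.trans (projIcc a b hab _).2.1)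
      (hw v ⟨hu.1.trans hv.1, hv.2⟩).1)
  have hupper : -(η t * Real.exp t) ≤ -(η s * Real.exp s) := by
    refine le_of_hasDerivWithinAt_nonpos (G := fun u ↦ -(η u * Real.exp u)) hs.2
      ((hη.mono (Icc_subset_Icc_left hs.1)).mul Real.continuous_exp.continuousOn).neg
      (fun u hu ↦ ((hderiv u ⟨hs.1.trans hu.1, hu.2⟩).mul
        (Real.hasDerivAt_exp u).hasDerivWithinAt).neg) fun u hu ↦ ?_
    have hu' : u ∈ Ico 0 t := ⟨hs.1.trans hu.1, hu.2⟩
    have hclamp : (projIcc a b hab (η u) : ℝ) ≤ η u :=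
      max_le (hlower u ⟨hu'.1, hu'.2.le⟩) (min_le_right _ _)
    have hle : projIcc a b hab (η u) * w u ≤ η u :=
      (mul_le_of_le_one_right (ha.le.trans (projIcc a b hab _).2.1) (hw u hu').2).trans hclamp
    linarith [mul_le_mul_of_nonneg_right hle (Real.exp_pos u).le]
  refine ⟨hlower s hs, ?_⟩
  rw [hηt, neg_le_neg_iff] at hupper
  rwa [Real.exp_sub, ← mul_div_assoc, le_div_iff₀ (Real.exp_pos s)]

namespace IsCriticalFlow

variable {T : ℝ} {D : ℕ → ℝ → ℝ → ℝ} {r : ℝ → ℝ} {t x : ℝ}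

lemma exists_isCharacteristic (h : IsCriticalFlow T D r) (ht : 0 ≤ t) (htT : t ≤ T) (hx : 0 < x) :
    ∃ ξ, IsCharacteristic D t x ξ := by
  have hb : Real.exp x ≤ Real.exp (x + t) := Real.exp_le_exp.2 (le_add_of_nonneg_right ht)
  obtain ⟨η, hη, hηt, hderiv⟩ := h.exists_clamped_solution ht htT hx hb
  have hlog : ∀ z, 0 < Real.log (projIcc _ _ hb z) := fun z ↦ hx.trans_le
    ((Real.le_log_iff_exp_le ((Real.exp_pos x).trans_le (projIcc _ _ hb z).2.1)).2
      (projIcc _ _ hb z).2.1)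
  have hmem : ∀ s ∈ Icc 0 t, η s ∈ Icc (Real.exp x) (Real.exp (x + (t - s))) := fun s hs ↦ by
    rw [Real.exp_add]
    exact mem_Icc_of_hasDerivWithinAt_clamp (Real.exp_pos x) hb hη hηt
      (fun u _ ↦ ⟨(h.one_sub_pos u (hlog (η u))).le, h.one_sub_le_one u (hlog (η u))⟩) hderiv hs
  have hpos : ∀ s ∈ Icc 0 t, 0 < η s := fun s hs ↦ (Real.exp_pos x).trans_le (hmem s hs).1
  refine ⟨fun s ↦ Real.log (η s), hη.log fun s hs ↦ (hpos s hs).ne', by simp [hηt],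
    fun s hs ↦ (Real.le_log_iff_exp_le (hpos s hs)).2 (hmem s hs).1,
    fun s hs ↦ (Real.log_le_iff_le_exp (hpos s hs)).2 (hmem s hs).2, fun s hs ↦ ?_⟩
  have hs' : s ∈ Icc 0 t := ⟨hs.1, hs.2.le⟩
  have hclamp : (projIcc _ _ hb (η s) : ℝ) = η s :=
    congrArg Subtype.val (projIcc_of_mem hb (Icc_subset_Icc_right
      (Real.exp_le_exp.2 (by linarith [hs.1])) (hmem s hs')))
  refine ((hderiv s hs).log (hpos s hs').ne').congr_deriv ?_
  rw [hclamp, neg_div, mul_div_cancel_left₀ _ (hpos s hs').ne']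

end IsCriticalFlow

/-! ### Evolution along characteristics -/

lemma le_add_control_of_hasRightExpansion {r F : ℝ → ℝ} {a b κ M : ℝ} (hab : a ≤ b)
    (hr : Monotone r) (hexp : ∀ s ∈ Ico a b, ∃ α β, α ≤ 0 ∧ β ≤ κ ∧ HasRightExpansion r F s α β)
    (hleft : ∀ u s, a ≤ u → u ≤ s → s ≤ b → F s ≤ F u + κ * (r s - r u) + M * (s - u)) :
    F b ≤ F a + κ * (r b - r a) := by
  have hle : F b - κ * r b ≤ F a - κ * r a := by
    refine le_of_hasRightExpansion_nonpos (G := fun s ↦ F s - κ * r s) hab hr (fun s hs ↦ ?_)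
      fun s hs ↦ lowerSemicontinuousWithinAt_of_le_add (M := M) hs.1 fun u hu ↦ ?_
    · obtain ⟨α, β, hα, hβ, hF⟩ := hexp s hs
      exact ⟨_, _, by simpa using hα, by simpa using hβ,
        hF.sub (HasRightExpansion.control.const_mul κ)⟩
    · linarith [hleft u s hu.1 hu.2.le hs.2]
  linarith

namespace IsCharacteristic

variable {T : ℝ} {D : ℕ → ℝ → ℝ → ℝ} {r ξ : ℝ → ℝ} {t x u s : ℝ}

lemma pos (hξ : IsCharacteristic D t x ξ) (hx : 0 < x) (hs : s ∈ Icc 0 t) : 0 < ξ s :=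
  hx.trans_le (hξ.le_apply s hs)

lemma le_of_le (hξ : IsCharacteristic D t x ξ) (h : IsCriticalFlow T D r) (hx : 0 < x)
    (hu : 0 ≤ u) (hus : u ≤ s) (hst : s ≤ t) : ξ s ≤ ξ u :=
  le_of_hasDerivWithinAt_nonpos hus (hξ.continuousOn.mono (Icc_subset_Icc hu hst))
    (fun w hw ↦ hξ.hasDerivWithinAt w ⟨hu.trans hw.1, hw.2.trans_le hst⟩) fun w hw ↦
      neg_nonpos.2 (h.one_sub_pos w (hξ.pos hx ⟨hu.trans hw.1, (hw.2.trans_le hst).le⟩)).le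

lemma sub_le (hξ : IsCharacteristic D t x ξ) (h : IsCriticalFlow T D r) (hx : 0 < x)
    (hu : 0 ≤ u) (hus : u ≤ s) (hst : s ≤ t) : ξ u - ξ s ≤ s - u := by
  have hle : -(ξ s + s) ≤ -(ξ u + u) := by
    refine le_of_hasDerivWithinAt_nonpos (G := fun w ↦ -(ξ w + w)) hus
      ((hξ.continuousOn.mono (Icc_subset_Icc hu hst)).add continuousOn_id).neg
      (fun w hw ↦ ((hξ.hasDerivWithinAt w ⟨hu.trans hw.1, hw.2.trans_le hst⟩).add
        (hasDerivWithinAt_id w (Ici w))).neg) fun w hw ↦ ?_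
    linarith [h.one_sub_le_one w (hξ.pos hx ⟨hu.trans hw.1, (hw.2.trans_le hst).le⟩)]
  linarith

lemma tendsto_prod (hξ : IsCharacteristic D t x ξ) (h : IsCriticalFlow T D r) (hx : 0 < x)
    (htT : t ≤ T) (hs : s ∈ Ico 0 t) (n : ℕ) :
    Tendsto (fun p : ℝ × ℝ ↦ D n p.1 p.2) (𝓝[≥] s ×ˢ 𝓝 (ξ s)) (𝓝 (D n s (ξ s))) :=
  have hpos := hξ.pos hx ⟨hs.1, hs.2.le⟩
  h.tendsto_prod n hpos (h.tendsto_right n hs.1 (hs.2.trans_le htT) hpos)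

lemma hasRightExpansion_one_sub (hξ : IsCharacteristic D t x ξ) (h : IsCriticalFlow T D r)
    (hx : 0 < x) (htT : t ≤ T) (hs : s ∈ Ico 0 t) :
    HasRightExpansion r (fun σ ↦ 1 - D 0 σ (ξ σ)) s 0 (-Real.exp (-ξ s)) := by
  have hpos := hξ.pos hx ⟨hs.1, hs.2.le⟩
  have hexp := h.evolution_zero.hasRightExpansion h.isTame_flux h.monotone hs.1
    (hs.2.trans_le htT) (hξ.hasDerivWithinAt s hs) hpos (h.hasDerivAt_one_sub s hpos)
    (((hξ.tendsto_prod h hx htT hs 0).const_sub 1).mul (hξ.tendsto_prod h hx htT hs 1))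
  convert hexp using 1 <;> ring

lemma hasRightExpansion_one (hξ : IsCharacteristic D t x ξ) (h : IsCriticalFlow T D r)
    (hx : 0 < x) (htT : t ≤ T) (hs : s ∈ Ico 0 t) :
    HasRightExpansion r (fun σ ↦ D 1 σ (ξ σ)) s (D 1 s (ξ s) ^ 2) (Real.exp (-ξ s)) := by
  have hpos := hξ.pos hx ⟨hs.1, hs.2.le⟩
  have hexp := h.evolution_one.hasRightExpansion h.isTame_flux_deriv h.monotone hs.1
    (hs.2.trans_le htT) (hξ.hasDerivWithinAt s hs) hpos (h.hasDerivAt 1 s _ hpos)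
    (((hξ.tendsto_prod h hx htT hs 1).pow 2).sub
      (((hξ.tendsto_prod h hx htT hs 0).const_sub 1).mul (hξ.tendsto_prod h hx htT hs 2)))
  convert hexp using 1 <;> ring

lemma hasRightExpansion_two (hξ : IsCharacteristic D t x ξ) (h : IsCriticalFlow T D r)
    (hx : 0 < x) (htT : t ≤ T) (hs : s ∈ Ico 0 t) :
    HasRightExpansion r (fun σ ↦ D 2 σ (ξ σ)) s (3 * (D 1 s (ξ s) * D 2 s (ξ s)))
      (Real.exp (-ξ s)) := by
  have hpos := hξ.pos hx ⟨hs.1, hs.2.le⟩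
  have hexp := h.evolution_two.hasRightExpansion h.isTame_flux_deriv_two h.monotone hs.1
    (hs.2.trans_le htT) (hξ.hasDerivWithinAt s hs) hpos (h.hasDerivAt 2 s _ hpos)
    ((((hξ.tendsto_prod h hx htT hs 1).mul (hξ.tendsto_prod h hx htT hs 2)).const_mul 3).sub
      (((hξ.tendsto_prod h hx htT hs 0).const_sub 1).mul (hξ.tendsto_prod h hx htT hs 3)))
  convert hexp using 1 <;> ring

/-- Without the control the energy would be constant along characteristics. -/
lemma hasRightExpansion_log_energy (hξ : IsCharacteristic D t x ξ) (h : IsCriticalFlow T D r)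
    (hx : 0 < x) (htT : t ≤ T) (hs : s ∈ Ico 0 t) :
    HasRightExpansion r (fun σ ↦ 3 * Real.log (D 1 σ (ξ σ)) - Real.log (D 2 σ (ξ σ))) s 0
      (Real.exp (-ξ s) * (3 / D 1 s (ξ s) - 1 / D 2 s (ξ s))) := by
  have hpos := hξ.pos hx ⟨hs.1, hs.2.le⟩
  have hP := h.pos 1 s _ hpos
  have hQ := h.pos 2 s _ hpos
  have hrs : Tendsto r (𝓝[>] s) (𝓝 (r s)) :=
    (h.tendsto_control_right hs.1 (hs.2.trans_le htT)).mono_left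
      (nhdsWithin_mono s Ioi_subset_Ici_self)
  have hlogP := (hξ.hasRightExpansion_one h hx htT hs).comp h.monotone hrs
    (Real.hasDerivAt_log hP.ne')
  have hlogQ := (hξ.hasRightExpansion_two h hx htT hs).comp h.monotone hrs
    (Real.hasDerivAt_log hQ.ne')
  convert (hlogP.const_mul 3).sub hlogQ using 1
  · field_simp
    ring
  · ring

lemma exists_abs_sub_le (hξ : IsCharacteristic D t x ξ) (h : IsCriticalFlow T D r) (hx : 0 < x)
    (htT : t ≤ T) {k K : ℝ} {U g : ℝ → ℝ → ℝ} (hU : IsEvolution T r k U g) (hg : IsTame g)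
    (hK : ∀ u y z, x ≤ y → x ≤ z → |U u y - U u z| ≤ K * |y - z|) :
    ∃ M, ∀ u s, 0 ≤ u → u ≤ s → s ≤ t →
      |U s (ξ s) - U u (ξ u) - k * (Real.exp (-ξ s) * (r s - r u))| ≤ M * (s - u) := by
  obtain ⟨M, hM⟩ := hg.exists_bound x hx
  have hK0 : 0 ≤ K := by
    simpa using (abs_nonneg _).trans (hK 0 (x + 1) x (by linarith) le_rfl)
  refine ⟨M + K, fun u s hu hus hst ↦ ?_⟩
  have hs : s ∈ Icc 0 t := ⟨hu.trans hus, hst⟩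
  refine hU.abs_sub_le_along hu hus (hst.trans htT) (hξ.pos hx hs)
    (fun τ ↦ hM τ _ (hξ.le_apply s hs)) ?_
  refine (hK u _ _ (hξ.le_apply s hs) (hξ.le_apply u ⟨hu, hus.trans hst⟩)).trans
    (mul_le_mul_of_nonneg_left ?_ hK0)
  rw [abs_sub_comm, abs_of_nonneg (sub_nonneg.2 (hξ.le_of_le h hx hu hus hst))]
  exact hξ.sub_le h hx hu hus hst

lemma exists_abs_sub_le_one_sub (hξ : IsCharacteristic D t x ξ) (h : IsCriticalFlow T D r)
    (hx : 0 < x) (htT : t ≤ T) : ∃ M, ∀ u s, 0 ≤ u → u ≤ s → s ≤ t →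
      |(1 - D 0 s (ξ s)) - (1 - D 0 u (ξ u)) + Real.exp (-ξ s) * (r s - r u)| ≤ M * (s - u) := by
  simpa only [neg_one_mul, sub_neg_eq_add] using
    hξ.exists_abs_sub_le h hx htT h.evolution_zero h.isTame_flux fun u y z hy hz ↦ by
      rw [sub_sub_sub_cancel_left, abs_sub_comm]
      exact h.abs_sub_le 0 u hx hy hz

lemma exists_abs_sub_le_one (hξ : IsCharacteristic D t x ξ) (h : IsCriticalFlow T D r)
    (hx : 0 < x) (htT : t ≤ T) : ∃ M, ∀ u s, 0 ≤ u → u ≤ s → s ≤ t →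
      |D 1 s (ξ s) - D 1 u (ξ u) - Real.exp (-ξ s) * (r s - r u)| ≤ M * (s - u) := by
  simpa only [one_mul] using hξ.exists_abs_sub_le h hx htT h.evolution_one h.isTame_flux_deriv
    fun u y z hy hz ↦ h.abs_sub_le 1 u hx hy hz

lemma exists_abs_sub_le_two (hξ : IsCharacteristic D t x ξ) (h : IsCriticalFlow T D r)
    (hx : 0 < x) (htT : t ≤ T) : ∃ M, ∀ u s, 0 ≤ u → u ≤ s → s ≤ t →
      |D 2 s (ξ s) - D 2 u (ξ u) - Real.exp (-ξ s) * (r s - r u)| ≤ M * (s - u) := by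
  simpa only [one_mul] using hξ.exists_abs_sub_le h hx htT h.evolution_two
    h.isTame_flux_deriv_two fun u y z hy hz ↦ h.abs_sub_le 2 u hx hy hz

lemma one_sub_apply_le (hξ : IsCharacteristic D t x ξ) (h : IsCriticalFlow T D r) (hx : 0 < x)
    (htT : t ≤ T) (hs : s ∈ Icc 0 t) : 1 - D 0 s (ξ s) ≤ 1 - D 0 t x + (r t - r s) := by
  obtain ⟨M, hM⟩ := hξ.exists_abs_sub_le_one_sub h hx htT
  have hle := le_add_control_of_hasRightExpansion (F := fun σ ↦ -(1 - D 0 σ (ξ σ))) (κ := 1)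
    (M := M) hs.2 h.monotone (fun w hw ↦ ?_) fun u w hu huw hwt ↦ ?_
  · rw [hξ.apply_end] at hle
    linarith
  · have hw' : w ∈ Ico 0 t := ⟨hs.1.trans hw.1, hw.2⟩
    refine ⟨_, _, neg_zero.le, ?_, (hξ.hasRightExpansion_one_sub h hx htT hw').neg⟩
    rw [neg_neg, Real.exp_le_one_iff]
    exact neg_nonpos.2 (hξ.pos hx ⟨hw'.1, hw'.2.le⟩).le
  · have hMw := (abs_le.1 (hM u w (hs.1.trans hu) huw hwt)).1
    have hexp : Real.exp (-ξ w) ≤ 1 := Real.exp_le_one_iff.2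
      (neg_nonpos.2 (hξ.pos hx ⟨hs.1.trans (hu.trans huw), hwt⟩).le)
    linarith [mul_le_mul_of_nonneg_right hexp (sub_nonneg.2 (h.monotone huw))]

lemma le_one_sub_apply (hξ : IsCharacteristic D t x ξ) (h : IsCriticalFlow T D r) (hx : 0 < x)
    (htT : t ≤ T) (hs : s ∈ Icc 0 t) :
    1 - D 0 t x + Real.exp (-(t + x)) * (r t - r s) ≤ 1 - D 0 s (ξ s) := by
  obtain ⟨M, hM⟩ := hξ.exists_abs_sub_le_one_sub h hx htT
  have hexp : ∀ w ∈ Icc 0 t, Real.exp (-(t + x)) ≤ Real.exp (-ξ w) := fun w hw ↦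
    Real.exp_le_exp.2 (by linarith [hξ.apply_le w hw, hw.1])
  have hle := le_add_control_of_hasRightExpansion (F := fun σ ↦ 1 - D 0 σ (ξ σ))
    (κ := -Real.exp (-(t + x))) (M := M) hs.2 h.monotone (fun w hw ↦ ?_) fun u w hu huw hwt ↦ ?_
  · rw [hξ.apply_end] at hle
    linarith
  · have hw' : w ∈ Ico 0 t := ⟨hs.1.trans hw.1, hw.2⟩
    exact ⟨_, _, le_rfl, neg_le_neg (hexp w ⟨hw'.1, hw'.2.le⟩),
      hξ.hasRightExpansion_one_sub h hx htT hw'⟩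
  · have hMw := (abs_le.1 (hM u w (hs.1.trans hu) huw hwt)).2
    linarith [mul_le_mul_of_nonneg_right (hexp w ⟨hs.1.trans (hu.trans huw), hwt⟩)
      (sub_nonneg.2 (h.monotone huw))]

lemma apply_le_add_mul (hξ : IsCharacteristic D t x ξ) (h : IsCriticalFlow T D r) (hx : 0 < x)
    (htT : t ≤ T) (hs : s ∈ Icc 0 t) :
    ξ s ≤ x + (t - s) * (1 - D 0 t x + (r t - r s)) := by
  set B := 1 - D 0 t x + (r t - r s)
  have hle := le_of_hasDerivWithinAt_nonpos (G := fun w ↦ -(ξ w + B * w)) hs.2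
    ((hξ.continuousOn.mono (Icc_subset_Icc_left hs.1)).add (by fun_prop)).neg
    (fun w hw ↦ ((hξ.hasDerivWithinAt w ⟨hs.1.trans hw.1, hw.2⟩).add
      ((hasDerivWithinAt_id w (Ici w)).const_mul B)).neg) fun w hw ↦ ?_
  · rw [hξ.apply_end] at hle
    linarith
  · linarith [hξ.one_sub_apply_le h hx htT (s := w) ⟨hs.1.trans hw.1, hw.2.le⟩,
      h.monotone hw.1]

lemma le_of_hasRightExpansion (h : IsCriticalFlow T D r) {n : ℕ} {α : ℝ → ℝ}
    (hα : ∀ s ∈ Ico 0 t, 0 ≤ α s)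
    (hexp : ∀ s ∈ Ico 0 t,
      HasRightExpansion r (fun σ ↦ D n σ (ξ σ)) s (α s) (Real.exp (-ξ s)))
    (hleft : ∃ M, ∀ u s, 0 ≤ u → u ≤ s → s ≤ t →
      |D n s (ξ s) - D n u (ξ u) - Real.exp (-ξ s) * (r s - r u)| ≤ M * (s - u))
    (hu : 0 ≤ u) (hus : u ≤ s) (hst : s ≤ t) : D n u (ξ u) ≤ D n s (ξ s) := by
  obtain ⟨M, hM⟩ := hleft
  have hle := le_add_control_of_hasRightExpansion (F := fun σ ↦ -D n σ (ξ σ)) (κ := 0) (M := M)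
    hus h.monotone (fun w hw ↦ ?_) fun v w hv hvw hws ↦ ?_
  · linarith
  · have hw' : w ∈ Ico 0 t := ⟨hu.trans hw.1, hw.2.trans_le hst⟩
    exact ⟨_, _, neg_nonpos.2 (hα w hw'), neg_nonpos.2 (Real.exp_pos _).le, (hexp w hw').neg⟩
  · have hMw := (abs_le.1 (hM v w (hu.trans hv) hvw (hws.trans hst))).1
    linarith [mul_nonneg (Real.exp_pos (-ξ w)).le (sub_nonneg.2 (h.monotone hvw))]

lemma apply_one_mono (hξ : IsCharacteristic D t x ξ) (h : IsCriticalFlow T D r) (hx : 0 < x)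
    (htT : t ≤ T) (hu : 0 ≤ u) (hus : u ≤ s) (hst : s ≤ t) : D 1 u (ξ u) ≤ D 1 s (ξ s) :=
  le_of_hasRightExpansion h (fun _ _ ↦ sq_nonneg _)
    (fun _ hs ↦ hξ.hasRightExpansion_one h hx htT hs) (hξ.exists_abs_sub_le_one h hx htT) hu hus hst

lemma apply_two_mono (hξ : IsCharacteristic D t x ξ) (h : IsCriticalFlow T D r) (hx : 0 < x)
    (htT : t ≤ T) (hu : 0 ≤ u) (hus : u ≤ s) (hst : s ≤ t) : D 2 u (ξ u) ≤ D 2 s (ξ s) := by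
  refine le_of_hasRightExpansion h (fun s hs ↦ ?_)
    (fun _ hs ↦ hξ.hasRightExpansion_two h hx htT hs) (hξ.exists_abs_sub_le_two h hx htT) hu hus hst
  have hpos := hξ.pos hx ⟨hs.1, hs.2.le⟩
  exact mul_nonneg (by norm_num) (mul_pos (h.pos 1 s _ hpos) (h.pos 2 s _ hpos)).le

lemma exists_log_sub_log_le (hξ : IsCharacteristic D t x ξ) (h : IsCriticalFlow T D r)
    (hx : 0 < x) {n : ℕ}
    (hmono : ∀ u s, 0 ≤ u → u ≤ s → s ≤ t → D n u (ξ u) ≤ D n s (ξ s))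
    (hleft : ∃ M, ∀ u s, 0 ≤ u → u ≤ s → s ≤ t →
      |D n s (ξ s) - D n u (ξ u) - Real.exp (-ξ s) * (r s - r u)| ≤ M * (s - u)) :
    ∃ M, ∀ u s, 0 ≤ u → u ≤ s → s ≤ t → Real.log (D n s (ξ s)) - Real.log (D n u (ξ u)) ≤
      1 / D n 0 (ξ 0) * (r s - r u) + M * (s - u) := by
  obtain ⟨M, hM⟩ := hleft
  refine ⟨M / D n 0 (ξ 0), fun u s hu hus hst ↦ ?_⟩
  have hm := h.pos n 0 _ (hξ.pos hx ⟨le_rfl, hu.trans (hus.trans hst)⟩)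
  have hexp : Real.exp (-ξ s) ≤ 1 := Real.exp_le_one_iff.2
    (neg_nonpos.2 (hξ.pos hx ⟨hu.trans hus, hst⟩).le)
  have hlog := (le_abs_self _).trans (abs_log_sub_log_le hm (hmono 0 s le_rfl (hu.trans hus) hst)
    (hmono 0 u le_rfl hu (hus.trans hst)))
  rw [abs_of_nonneg (sub_nonneg.2 (hmono u s hu hus hst))] at hlog
  have hsub : D n s (ξ s) - D n u (ξ u) ≤ (r s - r u) + M * (s - u) := by
    linarith [(abs_le.1 (hM u s hu hus hst)).2,
      mul_le_mul_of_nonneg_right hexp (sub_nonneg.2 (h.monotone hus))]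
  refine hlog.trans ((div_le_div_of_nonneg_right hsub hm.le).trans_eq ?_)
  ring

end IsCharacteristic

/-! ### Energy bounds -/

namespace IsCriticalFlow

variable {T : ℝ} {D : ℕ → ℝ → ℝ → ℝ} {r : ℝ → ℝ} {t x : ℝ}

lemma energy_pos (h : IsCriticalFlow T D r) (t : ℝ) (hx : 0 < x) : 0 < energy D t x :=
  div_pos (pow_pos (h.pos 1 t x hx) 3) (h.pos 2 t x hx)

lemma log_energy (h : IsCriticalFlow T D r) (t : ℝ) (hx : 0 < x) :
    Real.log (energy D t x) = 3 * Real.log (D 1 t x) - Real.log (D 2 t x) := by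
  rw [energy, Real.log_div (pow_pos (h.pos 1 t x hx) 3).ne' (h.pos 2 t x hx).ne', Real.log_pow,
    Nat.cast_ofNat]

end IsCriticalFlow

namespace IsCharacteristic

variable {T : ℝ} {D : ℕ → ℝ → ℝ → ℝ} {r ξ : ℝ → ℝ} {t x s : ℝ}

lemma log_energy_le (hξ : IsCharacteristic D t x ξ) (h : IsCriticalFlow T D r) (hx : 0 < x)
    (htT : t ≤ T) (hs : s ∈ Icc 0 t) : Real.log (energy D t x) ≤
      Real.log (energy D s (ξ s)) + 3 / D 1 0 (ξ 0) * (r t - r s) := by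
  have h0 : (0 : ℝ) ∈ Icc 0 t := ⟨le_rfl, hs.1.trans hs.2⟩
  obtain ⟨M, hM⟩ := hξ.exists_log_sub_log_le h hx (fun _ _ ↦ hξ.apply_one_mono h hx htT)
    (hξ.exists_abs_sub_le_one h hx htT)
  have hle := le_add_control_of_hasRightExpansion
    (F := fun σ ↦ 3 * Real.log (D 1 σ (ξ σ)) - Real.log (D 2 σ (ξ σ)))
    (κ := 3 / D 1 0 (ξ 0)) (M := 3 * M) hs.2 h.monotone (fun w hw ↦ ?_) fun u w hu huw hwt ↦ ?_
  · rw [h.log_energy t hx, h.log_energy s (hξ.pos hx hs)]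
    rwa [hξ.apply_end] at hle
  · have hw' : w ∈ Ico 0 t := ⟨hs.1.trans hw.1, hw.2⟩
    have hpos := hξ.pos hx ⟨hw'.1, hw'.2.le⟩
    refine ⟨_, _, le_rfl, ?_, hξ.hasRightExpansion_log_energy h hx htT hw'⟩
    have hP : 3 / D 1 w (ξ w) ≤ 3 / D 1 0 (ξ 0) :=
      div_le_div_of_nonneg_left (by norm_num) (h.pos 1 0 _ (hξ.pos hx h0))
        (hξ.apply_one_mono h hx htT le_rfl hw'.1 hw'.2.le)
    have hQ : 0 < 1 / D 2 w (ξ w) := one_div_pos.2 (h.pos 2 w _ hpos)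
    have hP0 : 0 < 3 / D 1 w (ξ w) := div_pos (by norm_num) (h.pos 1 w _ hpos)
    calc Real.exp (-ξ w) * (3 / D 1 w (ξ w) - 1 / D 2 w (ξ w))
        ≤ Real.exp (-ξ w) * (3 / D 1 w (ξ w)) := by gcongr; linarith
      _ ≤ 1 * (3 / D 1 0 (ξ 0)) := by
        gcongr
        exact Real.exp_le_one_iff.2 (neg_nonpos.2 hpos.le)
      _ = 3 / D 1 0 (ξ 0) := one_mul _
  · have hQ := Real.log_le_log (h.pos 2 u _ (hξ.pos hx ⟨hs.1.trans hu, huw.trans hwt⟩))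
      (hξ.apply_two_mono h hx htT (hs.1.trans hu) huw hwt)
    have hP := mul_le_mul_of_nonneg_left (hM u w (hs.1.trans hu) huw hwt) (zero_le_three (α := ℝ))
    have hring : 3 * (1 / D 1 0 (ξ 0) * (r w - r u) + M * (w - u))
      = 3 / D 1 0 (ξ 0) * (r w - r u) + 3 * M * (w - u) := by ring
    linarith

lemma le_log_energy (hξ : IsCharacteristic D t x ξ) (h : IsCriticalFlow T D r) (hx : 0 < x)
    (htT : t ≤ T) (hs : s ∈ Icc 0 t) : Real.log (energy D s (ξ s)) ≤
      Real.log (energy D t x) + 1 / D 2 0 (ξ 0) * (r t - r s) := by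
  have h0 : (0 : ℝ) ∈ Icc 0 t := ⟨le_rfl, hs.1.trans hs.2⟩
  obtain ⟨M, hM⟩ := hξ.exists_log_sub_log_le h hx (fun _ _ ↦ hξ.apply_two_mono h hx htT)
    (hξ.exists_abs_sub_le_two h hx htT)
  have hle := le_add_control_of_hasRightExpansion
    (F := fun σ ↦ -(3 * Real.log (D 1 σ (ξ σ)) - Real.log (D 2 σ (ξ σ))))
    (κ := 1 / D 2 0 (ξ 0)) (M := M) hs.2 h.monotone (fun w hw ↦ ?_) fun u w hu huw hwt ↦ ?_
  · rw [h.log_energy t hx, h.log_energy s (hξ.pos hx hs)]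
    rw [hξ.apply_end] at hle
    linarith
  · have hw' : w ∈ Ico 0 t := ⟨hs.1.trans hw.1, hw.2⟩
    have hpos := hξ.pos hx ⟨hw'.1, hw'.2.le⟩
    refine ⟨_, _, neg_zero.le, ?_, (hξ.hasRightExpansion_log_energy h hx htT hw').neg⟩
    have hQ : 1 / D 2 w (ξ w) ≤ 1 / D 2 0 (ξ 0) :=
      div_le_div_of_nonneg_left zero_le_one (h.pos 2 0 _ (hξ.pos hx h0))
        (hξ.apply_two_mono h hx htT le_rfl hw'.1 hw'.2.le)
    have hP : 0 < 3 / D 1 w (ξ w) := div_pos (by norm_num) (h.pos 1 w _ hpos)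
    have hQ0 : 0 < 1 / D 2 w (ξ w) := one_div_pos.2 (h.pos 2 w _ hpos)
    calc -(Real.exp (-ξ w) * (3 / D 1 w (ξ w) - 1 / D 2 w (ξ w)))
        = Real.exp (-ξ w) * (1 / D 2 w (ξ w) - 3 / D 1 w (ξ w)) := by ring
      _ ≤ Real.exp (-ξ w) * (1 / D 2 w (ξ w)) := by gcongr; linarith
      _ ≤ 1 * (1 / D 2 0 (ξ 0)) := by
        gcongr
        exact Real.exp_le_one_iff.2 (neg_nonpos.2 hpos.le)
      _ = 1 / D 2 0 (ξ 0) := one_mul _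
  · have hP := Real.log_le_log (h.pos 1 u _ (hξ.pos hx ⟨hs.1.trans hu, huw.trans hwt⟩))
      (hξ.apply_one_mono h hx htT (hs.1.trans hu) huw hwt)
    linarith [hM u w (hs.1.trans hu) huw hwt]

lemma energy_le (hξ : IsCharacteristic D t x ξ) (h : IsCriticalFlow T D r) (hx : 0 < x)
    (ht : 0 ≤ t) (htT : t ≤ T) :
    energy D t x ≤ energy D 0 (ξ 0) * Real.exp (3 / D 1 0 (ξ 0) * r t) := by
  have hpos := h.energy_pos 0 (hξ.pos hx ⟨le_rfl, ht⟩)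
  rw [← Real.log_le_log_iff (h.energy_pos t hx) (by positivity),
    Real.log_mul hpos.ne' (Real.exp_ne_zero _), Real.log_exp]
  simpa only [h.map_zero, sub_zero] using hξ.log_energy_le h hx htT ⟨le_rfl, ht⟩

lemma le_energy (hξ : IsCharacteristic D t x ξ) (h : IsCriticalFlow T D r) (hx : 0 < x)
    (ht : 0 ≤ t) (htT : t ≤ T) :
    energy D 0 (ξ 0) ≤ energy D t x * Real.exp (1 / D 2 0 (ξ 0) * r t) := by
  have hpos := h.energy_pos t hx
  rw [← Real.log_le_log_iff (h.energy_pos 0 (hξ.pos hx ⟨le_rfl, ht⟩)) (by positivity),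
    Real.log_mul hpos.ne' (Real.exp_ne_zero _), Real.log_exp]
  simpa only [h.map_zero, sub_zero] using hξ.le_log_energy h hx htT ⟨le_rfl, ht⟩

end IsCharacteristic

/-- A critical flow on `[0, T]` whose energy stays between `c` and `C`, and whose first two moments
stay above `p` and `q`, on the triangle `t + x ≤ L` that backward characteristics do not leave. -/
structure HasEnergyBounds (T L : ℝ) (D : ℕ → ℝ → ℝ → ℝ) (r : ℝ → ℝ) (c C p q : ℝ) : Prop where
  isCriticalFlow : IsCriticalFlow T D r
  time_pos : 0 < T
  time_lt : T < L
  lower_pos : 0 < c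
  p_pos : 0 < p
  q_pos : 0 < q
  le_one : ∀ t ∈ Icc 0 T, ∀ x, 0 < x → t + x ≤ L → p ≤ D 1 t x
  le_two : ∀ t ∈ Icc 0 T, ∀ x, 0 < x → t + x ≤ L → q ≤ D 2 t x
  le_energy : ∀ t ∈ Icc 0 T, ∀ x, 0 < x → t + x ≤ L → c ≤ energy D t x
  energy_le : ∀ t ∈ Icc 0 T, ∀ x, 0 < x → t + x ≤ L → energy D t x ≤ C

lemma IsCriticalFlow.hasEnergyBounds {T L : ℝ} {D : ℕ → ℝ → ℝ → ℝ} {r : ℝ → ℝ} {c C : ℝ}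
    (h : IsCriticalFlow T D r) (hT : 0 < T) (hTL : T < L) (hc : 0 < c)
    (hE : ∀ x, 0 < x → x ≤ L → energy D 0 x ∈ Icc c C) :
    HasEnergyBounds T L D r (c * Real.exp (-(1 / D 2 0 L * r T)))
      (C * Real.exp (3 / D 1 0 L * r T)) (D 1 0 L) (D 2 0 L) := by
  have hL : 0 < L := hT.trans hTL
  have hP := h.pos 1 0 L hL
  have hQ := h.pos 2 0 L hL
  have hC : 0 < C := hc.trans_le ((hE L hL le_rfl).1.trans (hE L hL le_rfl).2)
  have hback : ∀ t ∈ Icc 0 T, ∀ x, 0 < x → t + x ≤ L →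
      ∃ ξ, IsCharacteristic D t x ξ ∧ 0 < ξ 0 ∧ ξ 0 ≤ L := fun t ht x hx hxL ↦ by
    obtain ⟨ξ, hξ⟩ := h.exists_isCharacteristic ht.1 ht.2 hx
    exact ⟨ξ, hξ, hξ.pos hx ⟨le_rfl, ht.1⟩, by linarith [hξ.apply_le 0 ⟨le_rfl, ht.1⟩]⟩
  refine ⟨h, hT, hTL, by positivity, hP, hQ, fun t ht x hx hxL ↦ ?_, fun t ht x hx hxL ↦ ?_,
    fun t ht x hx hxL ↦ ?_, fun t ht x hx hxL ↦ ?_⟩ <;>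
  obtain ⟨ξ, hξ, hξ0, hξL⟩ := hback t ht x hx hxL
  · have hmono := hξ.apply_one_mono h hx ht.2 le_rfl ht.1 le_rfl
    rw [hξ.apply_end] at hmono
    exact (h.antitone 1 0 hξ0 hξL).trans hmono
  · have hmono := hξ.apply_two_mono h hx ht.2 le_rfl ht.1 le_rfl
    rw [hξ.apply_end] at hmono
    exact (h.antitone 2 0 hξ0 hξL).trans hmono
  · rw [Real.exp_neg, ← div_eq_mul_inv, div_le_iff₀ (Real.exp_pos _)]
    refine (hE _ hξ0 hξL).1.trans ((hξ.le_energy h hx ht.1 ht.2).trans ?_)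
    have hrt := h.control_nonneg ht.1
    have hE0 := (h.energy_pos t hx).le
    gcongr
    exacts [h.antitone 2 0 hξ0 hξL, h.monotone ht.2]
  · refine (hξ.energy_le h hx ht.1 ht.2).trans ?_
    have hrt := h.control_nonneg ht.1
    gcongr
    exacts [(hE _ hξ0 hξL).2, h.antitone 1 0 hξ0 hξL, h.monotone ht.2]

/-! ### The control as a limit of fluxes -/

lemma le_of_hasDerivAt_le_of_tendsto {f g f' g' : ℝ → ℝ} {a b l : ℝ} (hab : a < b)
    (hf : ∀ z ∈ Ioc a b, HasDerivAt f (f' z) z) (hg : ∀ z ∈ Ioc a b, HasDerivAt g (g' z) z)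
    (hfg : ∀ z ∈ Ioc a b, f' z ≤ g' z) (hfl : Tendsto f (𝓝[>] a) (𝓝 l))
    (hgl : Tendsto g (𝓝[>] a) (𝓝 l)) : f b ≤ g b := by
  have hanti : AntitoneOn (f - g) (Ioc a b) :=
    antitoneOn_of_hasDerivWithinAt_nonpos (convex_Ioc a b)
      (fun z hz ↦ ((hf z hz).sub (hg z hz)).continuousAt.continuousWithinAt)
      (fun z hz ↦ ((hf z (interior_subset hz)).sub (hg z (interior_subset hz))).hasDerivWithinAt)
      fun z hz ↦ sub_nonpos.2 (hfg z (interior_subset hz))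
  have hle : (f - g) b ≤ l - l := ge_of_tendsto (hfl.sub hgl) <| by
    filter_upwards [Ioc_mem_nhdsGT hab] with z hz using hanti hz ⟨hab, le_rfl⟩ hz.2
  rwa [sub_self, Pi.sub_apply, sub_nonpos] at hle

lemma lipschitzOnWith_of_abs_sub_le {f : ℝ → ℝ} {S : Set ℝ} {K : ℝ} (hK : 0 ≤ K)
    (hf : ∀ a ∈ S, ∀ b ∈ S, a ≤ b → |f b - f a| ≤ K * (b - a)) :
    LipschitzOnWith K.toNNReal f S := by
  refine LipschitzOnWith.of_dist_le_mul fun a ha b hb ↦ ?_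
  rw [Real.coe_toNNReal K hK, Real.dist_eq, Real.dist_eq]
  rcases le_total a b with hab | hba
  · rw [abs_sub_comm, abs_sub_comm a, abs_of_nonneg (sub_nonneg.2 hab)]
    exact hf a ha b hb hab
  · rw [abs_of_nonneg (sub_nonneg.2 hba)]
    exact hf b hb a ha hba

namespace IsCriticalFlow

variable {T : ℝ} {D : ℕ → ℝ → ℝ → ℝ} {r e φ : ℝ → ℝ} {s t : ℝ}

lemma tendsto_integral_flux (h : IsCriticalFlow T D r) (hs : 0 ≤ s) (hst : s ≤ t) (htT : t ≤ T) :
    Tendsto (fun x ↦ ∫ τ in s..t, (1 - D 0 τ x) * D 1 τ x) (𝓝[>] 0) (𝓝 (r t - r s)) := by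
  have hexp : Tendsto (fun x : ℝ ↦ Real.exp (-x)) (𝓝[>] 0) (𝓝 1) :=
    (Continuous.tendsto' (by fun_prop) _ _ (by simp)).mono_left nhdsWithin_le_nhds
  have hlim := ((h.tendsto_one_sub t).sub (h.tendsto_one_sub s)).add (hexp.mul_const (r t - r s))
  rw [sub_self, zero_add, one_mul] at hlim
  refine hlim.congr' ?_
  filter_upwards [self_mem_nhdsWithin] with x hx
  have heqn := h.evolution_zero s t x hs hst htT hx
  beta_reduce at heqn
  linarith

lemma control_sub_le_integral (h : IsCriticalFlow T D r) (hs : 0 ≤ s) (hst : s ≤ t) (htT : t ≤ T)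
    (hφ : IntervalIntegrable φ volume s t) (he : Tendsto e (𝓝[>] 0) (𝓝 0))
    (hle : ∀ᶠ x in 𝓝[>] 0, ∀ τ ∈ Icc s t, (1 - D 0 τ x) * D 1 τ x ≤ φ τ + e x) :
    r t - r s ≤ ∫ τ in s..t, φ τ := by
  have hlim : Tendsto (fun x ↦ (∫ τ in s..t, φ τ) + (t - s) * e x) (𝓝[>] 0)
      (𝓝 (∫ τ in s..t, φ τ)) := by
    simpa using (he.const_mul (t - s)).const_add (∫ τ in s..t, φ τ)
  refine le_of_tendsto_of_tendsto (h.tendsto_integral_flux hs hst htT) hlim ?_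
  filter_upwards [hle, self_mem_nhdsWithin] with x hx hx0
  calc ∫ τ in s..t, (1 - D 0 τ x) * D 1 τ x
      ≤ ∫ τ in s..t, (φ τ + e x) := intervalIntegral.integral_mono_on hst
        (h.isTame_flux.intervalIntegrable hx0 s t) (hφ.add intervalIntegrable_const) hx
    _ = (∫ τ in s..t, φ τ) + (t - s) * e x := by
      rw [intervalIntegral.integral_add hφ intervalIntegrable_const,
        intervalIntegral.integral_const, smul_eq_mul]

lemma integral_le_control_sub (h : IsCriticalFlow T D r) (hs : 0 ≤ s) (hst : s ≤ t) (htT : t ≤ T)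
    (hφ : IntervalIntegrable φ volume s t) (he : Tendsto e (𝓝[>] 0) (𝓝 0))
    (hle : ∀ᶠ x in 𝓝[>] 0, ∀ τ ∈ Icc s t, φ τ - e x ≤ (1 - D 0 τ x) * D 1 τ x) :
    ∫ τ in s..t, φ τ ≤ r t - r s := by
  have hlim : Tendsto (fun x ↦ (∫ τ in s..t, φ τ) - (t - s) * e x) (𝓝[>] 0)
      (𝓝 (∫ τ in s..t, φ τ)) := by
    simpa using (he.const_mul (t - s)).const_sub (∫ τ in s..t, φ τ)
  refine le_of_tendsto_of_tendsto hlim (h.tendsto_integral_flux hs hst htT) ?_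
  filter_upwards [hle, self_mem_nhdsWithin] with x hx hx0
  calc (∫ τ in s..t, φ τ) - (t - s) * e x
      = ∫ τ in s..t, (φ τ - e x) := by
        rw [intervalIntegral.integral_sub hφ intervalIntegrable_const,
          intervalIntegral.integral_const, smul_eq_mul]
    _ ≤ ∫ τ in s..t, (1 - D 0 τ x) * D 1 τ x := intervalIntegral.integral_mono_on hst
        (hφ.sub intervalIntegrable_const) (h.isTame_flux.intervalIntegrable hx0 s t) hx

/-- The energy is the inverse slope of `1 / (∂ₓV)²`, which turns energy bounds into bounds on
the moments. -/
lemma hasDerivAt_inv_sq_one (h : IsCriticalFlow T D r) (t : ℝ) {y : ℝ} (hy : 0 < y) :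
    HasDerivAt (fun z ↦ (D 1 t z ^ 2)⁻¹) (2 / energy D t y) y := by
  have hP := h.pos 1 t y hy
  have hQ := h.pos 2 t y hy
  refine (((h.hasDerivAt 1 t y hy).fun_pow 2).fun_inv (pow_pos hP 2).ne').congr_deriv ?_
  rw [energy]
  norm_num
  field_simp

lemma exists_inv_sq_one_sub_eq (h : IsCriticalFlow T D r) (t : ℝ) {y z : ℝ} (hz : 0 < z)
    (hzy : z < y) :
    ∃ w ∈ Ioo z y, (D 1 t y ^ 2)⁻¹ - (D 1 t z ^ 2)⁻¹ = 2 / energy D t w * (y - z) := by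
  have hderiv : ∀ w, z ≤ w → HasDerivAt (fun w ↦ (D 1 t w ^ 2)⁻¹) (2 / energy D t w) w :=
    fun w hw ↦ h.hasDerivAt_inv_sq_one t (hz.trans_le hw)
  obtain ⟨w, hw, hslope⟩ := exists_hasDerivAt_eq_slope _ _ hzy
    (fun w hw ↦ (hderiv w hw.1).continuousAt.continuousWithinAt) fun w hw ↦ hderiv w hw.1.le
  exact ⟨w, hw, ((eq_div_iff (sub_pos.2 hzy).ne').1 hslope).symm⟩

end IsCriticalFlow

/-! ### Upper bounds near zero -/

lemma sqrt_two_mul_mul_sqrt_div {a y : ℝ} (ha : 0 ≤ a) (hy : 0 < y) :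
    √(2 * a * y) * √(a / (2 * y)) = a := by
  rw [← Real.sqrt_mul (by positivity), show 2 * a * y * (a / (2 * y)) = a ^ 2 by field_simp,
    Real.sqrt_sq ha]

lemma hasDerivAt_sqrt_two_mul {a y : ℝ} (ha : 0 < a) (hy : 0 < y) :
    HasDerivAt (fun z ↦ √(2 * a * z)) √(a / (2 * y)) y := by
  have hlin : HasDerivAt (fun z ↦ 2 * a * z) (2 * a) y := by
    simpa using (hasDerivAt_id y).const_mul (2 * a)
  refine (hlin.sqrt (by positivity)).congr_deriv ?_
  rw [div_eq_iff (by positivity)]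
  linarith [sqrt_two_mul_mul_sqrt_div ha.le hy]

lemma tendsto_sqrt_two_mul (a : ℝ) : Tendsto (fun z ↦ √(2 * a * z)) (𝓝[>] 0) (𝓝 0) :=
  (Continuous.tendsto' (by fun_prop) _ _ (by simp)).mono_left nhdsWithin_le_nhds

namespace HasEnergyBounds

variable {T L : ℝ} {D : ℕ → ℝ → ℝ → ℝ} {r : ℝ → ℝ} {c C p q t y : ℝ}

lemma zero_mem_Icc (h : HasEnergyBounds T L D r c C p q) : (0 : ℝ) ∈ Icc 0 T :=
  ⟨le_rfl, h.time_pos.le⟩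

lemma upper_pos (h : HasEnergyBounds T L D r c C p q) : 0 < C := by
  have hL : 0 < L := h.time_pos.trans h.time_lt
  exact h.lower_pos.trans_le ((h.le_energy 0 h.zero_mem_Icc L hL (zero_add L).le).trans
    (h.energy_le 0 h.zero_mem_Icc L hL (zero_add L).le))

lemma mul_sub_le_inv_sq_sub (h : HasEnergyBounds T L D r c C p q) (ht : t ∈ Icc 0 T) {z : ℝ}
    (hz : 0 < z) (hzy : z < y) (hyL : t + y ≤ L) :
    2 / C * (y - z) ≤ (D 1 t y ^ 2)⁻¹ - (D 1 t z ^ 2)⁻¹ := by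
  obtain ⟨w, hw, heq⟩ := h.isCriticalFlow.exists_inv_sq_one_sub_eq t hz hzy
  have hw0 : 0 < w := hz.trans hw.1
  rw [heq]
  exact mul_le_mul_of_nonneg_right (div_le_div_of_nonneg_left zero_le_two
    (h.isCriticalFlow.energy_pos t hw0) (h.energy_le t ht w hw0 (by linarith [hw.2])))
    (sub_pos.2 hzy).le

lemma inv_sq_sub_le_mul_sub (h : HasEnergyBounds T L D r c C p q) (ht : t ∈ Icc 0 T) {z : ℝ}
    (hz : 0 < z) (hzy : z < y) (hyL : t + y ≤ L) :
    (D 1 t y ^ 2)⁻¹ - (D 1 t z ^ 2)⁻¹ ≤ 2 / c * (y - z) := by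
  obtain ⟨w, hw, heq⟩ := h.isCriticalFlow.exists_inv_sq_one_sub_eq t hz hzy
  rw [heq]
  exact mul_le_mul_of_nonneg_right (div_le_div_of_nonneg_left zero_le_two h.lower_pos
    (h.le_energy t ht w (hz.trans hw.1) (by linarith [hw.2]))) (sub_pos.2 hzy).le

lemma sq_one_le (h : HasEnergyBounds T L D r c C p q) (ht : t ∈ Icc 0 T) (hy : 0 < y)
    (hyL : t + y ≤ L) : D 1 t y ^ 2 ≤ C / (2 * y) := by
  have hlim : Tendsto (fun z ↦ 2 / C * (y - z)) (𝓝[>] 0) (𝓝 (2 * y / C)) :=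
    (Continuous.tendsto' (by fun_prop) _ _ (by ring)).mono_left nhdsWithin_le_nhds
  have hle : 2 * y / C ≤ (D 1 t y ^ 2)⁻¹ := le_of_tendsto hlim <| by
    filter_upwards [Ioo_mem_nhdsGT hy] with z hz
    have hinv : 0 < (D 1 t z ^ 2)⁻¹ := inv_pos.2 (pow_pos (h.isCriticalFlow.pos 1 t z hz.1) 2)
    linarith [h.mul_sub_le_inv_sq_sub ht hz.1 hz.2 hyL]
  have hC := h.upper_pos
  simpa only [inv_inv, inv_div] using inv_anti₀ (by positivity) hle

lemma one_le_sqrt (h : HasEnergyBounds T L D r c C p q) (ht : t ∈ Icc 0 T) (hy : 0 < y)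
    (hyL : t + y ≤ L) : D 1 t y ≤ √(C / (2 * y)) :=
  Real.le_sqrt_of_sq_le (h.sq_one_le ht hy hyL)

lemma one_sub_le_sqrt (h : HasEnergyBounds T L D r c C p q) (ht : t ∈ Icc 0 T) (hy : 0 < y)
    (hyL : t + y ≤ L) : 1 - D 0 t y ≤ √(2 * C * y) :=
  le_of_hasDerivAt_le_of_tendsto hy (fun _ hz ↦ h.isCriticalFlow.hasDerivAt_one_sub t hz.1)
    (fun _ hz ↦ hasDerivAt_sqrt_two_mul h.upper_pos hz.1)
    (fun _ hz ↦ h.one_le_sqrt ht hz.1 (by linarith [hz.2]))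
    (h.isCriticalFlow.tendsto_one_sub t) (tendsto_sqrt_two_mul C)

lemma flux_le (h : HasEnergyBounds T L D r c C p q) (ht : t ∈ Icc 0 T) (hy : 0 < y)
    (hyL : t + y ≤ L) : (1 - D 0 t y) * D 1 t y ≤ C :=
  (mul_le_mul (h.one_sub_le_sqrt ht hy hyL) (h.one_le_sqrt ht hy hyL)
    (h.isCriticalFlow.pos 1 t y hy).le (Real.sqrt_nonneg _)).trans_eq
    (sqrt_two_mul_mul_sqrt_div h.upper_pos.le hy)

lemma control_sub_le (h : HasEnergyBounds T L D r c C p q) {s : ℝ} (hs : 0 ≤ s) (hst : s ≤ t)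
    (htT : t ≤ T) : r t - r s ≤ C * (t - s) := by
  have hle := h.isCriticalFlow.control_sub_le_integral (φ := fun _ ↦ C) (e := fun _ ↦ 0) hs hst
    htT intervalIntegrable_const tendsto_const_nhds <| by
      filter_upwards [Ioc_mem_nhdsGT (sub_pos.2 h.time_lt)] with x hx τ hτ
      rw [add_zero]
      exact h.flux_le ⟨hs.trans hτ.1, hτ.2.trans htT⟩ hx.1 (by linarith [hx.2, hτ.2])
  rwa [intervalIntegral.integral_const, smul_eq_mul, mul_comm] at hle

lemma continuousOn_control (h : HasEnergyBounds T L D r c C p q) : ContinuousOn r (Icc 0 T) :=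
  (lipschitzOnWith_of_abs_sub_le h.upper_pos.le fun a ha b hb hab ↦ by
    rw [abs_of_nonneg (sub_nonneg.2 (h.isCriticalFlow.monotone hab))]
    exact h.control_sub_le ha.1 hab hb.2).continuousOn

lemma continuousOn_comp_characteristic (h : HasEnergyBounds T L D r c C p q) {ξ : ℝ → ℝ}
    (hξ : IsCharacteristic D t y ξ) (hy : 0 < y) (htT : t ≤ T) (n : ℕ) :
    ContinuousOn (fun s ↦ D n s (ξ s)) (Icc 0 t) := fun s hs ↦ by
  have hsT : s ∈ Icc 0 T := ⟨hs.1, hs.2.trans htT⟩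
  have htime := h.isCriticalFlow.tendsto_of_tendsto_control n nhdsWithin_le_nhds
    self_mem_nhdsWithin hsT (h.continuousOn_control s hsT) (hξ.pos hy hs)
  exact (h.isCriticalFlow.tendsto_prod n (hξ.pos hy hs) htime).comp
    ((tendsto_id.mono_left (nhdsWithin_mono s (Icc_subset_Icc_right htT))).prodMk
      (hξ.continuousOn s hs))

end HasEnergyBounds

/-! ### Persistence of the infinite first moment -/

namespace IsCriticalFlow

variable {T : ℝ} {D : ℕ → ℝ → ℝ → ℝ} {r : ℝ → ℝ} {s t m ρ : ℝ}

lemma exists_isCharacteristic_lt (h : IsCriticalFlow T D r) (hs : s ∈ Icc 0 t) (htT : t ≤ T)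
    (hρ : (t - s) * (r t - r s) < ρ) {η : ℝ} (hη : 0 < η) :
    ∃ x ξ, 0 < x ∧ x ≤ η ∧ IsCharacteristic D t x ξ ∧ ξ s < ρ := by
  have hlim : Tendsto (fun x ↦ x + (t - s) * (1 - D 0 t x + (r t - r s))) (𝓝[>] 0)
      (𝓝 (0 + (t - s) * (0 + (r t - r s)))) :=
    (tendsto_id.mono_left nhdsWithin_le_nhds).add
      (((h.tendsto_one_sub t).add_const _).const_mul _)
  rw [zero_add, zero_add] at hlim
  obtain ⟨x, hxρ, hx⟩ :=
    ((hlim.eventually (gt_mem_nhds hρ)).and (Ioc_mem_nhdsGT hη)).exists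
  obtain ⟨ξ, hξ⟩ := h.exists_isCharacteristic (hs.1.trans hs.2) htT hx.1
  exact ⟨x, ξ, hx.1, hx.2, hξ, (hξ.apply_le_add_mul h hx.1 htT hs).trans_lt hxρ⟩

/-- The first moment decreases backward along characteristics, and those starting near `0` at
time `t` have only reached `(t - s) * (r t - r s)` at time `s`. -/
lemma one_le_of_mul_control_lt (h : IsCriticalFlow T D r) (hs : s ∈ Icc 0 t) (htT : t ≤ T)
    (hm : ∀ y, 0 < y → D 1 t y ≤ m) (hρ : (t - s) * (r t - r s) < ρ) : D 1 s ρ ≤ m := by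
  obtain ⟨x, ξ, hx, -, hξ, hlt⟩ := h.exists_isCharacteristic_lt hs htT hρ one_pos
  have hmono := hξ.apply_one_mono h hx htT hs.1 hs.2 le_rfl
  rw [hξ.apply_end] at hmono
  exact (h.antitone 1 s (hξ.pos hx hs) hlt.le).trans (hmono.trans (hm x hx))

lemma control_le_of_one_le (h : IsCriticalFlow T D r) (hs : 0 ≤ s) (hst : s ≤ t) (htT : t ≤ T)
    (hm0 : 0 ≤ m) (hm : ∀ τ ∈ Icc s t, ∀ y, 0 < y → D 1 τ y ≤ m) : r t ≤ r s := by
  have hlin : Tendsto (fun x ↦ m * x * m) (𝓝[>] 0) (𝓝 0) :=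
    (Continuous.tendsto' (by fun_prop) _ _ (by simp)).mono_left nhdsWithin_le_nhds
  have hle := h.control_sub_le_integral (φ := fun _ ↦ 0) hs hst htT intervalIntegrable_const
    hlin <| by
      filter_upwards [self_mem_nhdsWithin] with x (hx : 0 < x) τ hτ
      have hW : 1 - D 0 τ x ≤ m * x := le_of_hasDerivAt_le_of_tendsto hx
        (fun z hz ↦ h.hasDerivAt_one_sub τ hz.1)
        (fun z _ ↦ by simpa using (hasDerivAt_id z).const_mul m) (fun z hz ↦ hm τ hτ z hz.1)
        (h.tendsto_one_sub τ)
        ((Continuous.tendsto' (by fun_prop) _ _ (by simp)).mono_left nhdsWithin_le_nhds)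
      rw [zero_add]
      exact mul_le_mul hW (hm τ hτ x hx) (h.pos 1 τ x hx).le (by positivity)
  rw [intervalIntegral.integral_zero] at hle
  linarith

end IsCriticalFlow

namespace HasEnergyBounds

variable {T L : ℝ} {D : ℕ → ℝ → ℝ → ℝ} {r : ℝ → ℝ} {c C p q t m ρ : ℝ}

lemma one_le_two_mul (h : HasEnergyBounds T L D r c C p q) (ht : t ∈ Icc 0 T) (hρ : 0 < ρ)
    (hρL : t + ρ ≤ L) (hm : 0 < m) (hρm : ρ ≤ 3 * c / (8 * m ^ 2)) (hle : D 1 t ρ ≤ m) {y : ℝ}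
    (hy : 0 < y) : D 1 t y ≤ 2 * m := by
  have hc := h.lower_pos
  have hPρ := h.isCriticalFlow.pos 1 t ρ hρ
  have hPy := h.isCriticalFlow.pos 1 t y hy
  rcases le_or_gt ρ y with hρy | hyρ
  · linarith [h.isCriticalFlow.antitone 1 t hρ hρy]
  · have hincr : 2 / c * (ρ - y) ≤ 3 / 4 * (m ^ 2)⁻¹ :=
      calc 2 / c * (ρ - y) ≤ 2 / c * (3 * c / (8 * m ^ 2)) := by gcongr; linarith
        _ = 3 / 4 * (m ^ 2)⁻¹ := by field_simp; norm_num
    have hfar : (m ^ 2)⁻¹ ≤ (D 1 t ρ ^ 2)⁻¹ :=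
      inv_anti₀ (by positivity) (pow_le_pow_left₀ hPρ.le hle 2)
    have hinv : ((2 * m) ^ 2)⁻¹ ≤ (D 1 t y ^ 2)⁻¹ := by
      rw [show ((2 * m) ^ 2)⁻¹ = 1 / 4 * (m ^ 2)⁻¹ by field_simp; norm_num]
      linarith [h.inv_sq_sub_le_mul_sub ht hy hyρ hρL]
    exact le_of_sq_le_sq ((inv_le_inv₀ (by positivity) (by positivity)).1 hinv) (by positivity)

lemma exists_one_le_of_sub_le (h : HasEnergyBounds T L D r c C p q) (hm : 0 < m) :
    ∃ δ, 0 < δ ∧ ∀ t ∈ Icc 0 T, (∀ y, 0 < y → D 1 t y ≤ m) →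
      ∀ s ∈ Icc 0 t, t - s ≤ δ → ∀ y, 0 < y → D 1 s y ≤ m := by
  have hC := h.upper_pos
  have hc := h.lower_pos
  have hLT : 0 < L - T := sub_pos.2 h.time_lt
  obtain ⟨ρ, hρ, hρL, hρm⟩ : ∃ ρ, 0 < ρ ∧ ρ ≤ L - T ∧ ρ ≤ 3 * c / (8 * m ^ 2) :=
    ⟨min (L - T) (3 * c / (8 * m ^ 2)), by positivity, min_le_left _ _, min_le_right _ _⟩
  refine ⟨√(ρ / (2 * C)), by positivity, fun t ht hbdd s hs hδ y hy ↦ ?_⟩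
  have hrough : ∀ u ∈ Icc s t, ∀ y, 0 < y → D 1 u y ≤ 2 * m := fun u hu y hy ↦ by
    have hu' : u ∈ Icc 0 t := ⟨hs.1.trans hu.1, hu.2⟩
    have huT : u ∈ Icc 0 T := ⟨hu'.1, hu'.2.trans ht.2⟩
    have htu : 0 ≤ t - u := sub_nonneg.2 hu.2
    have hsq : (t - u) ^ 2 ≤ ρ / (2 * C) := by
      rw [← Real.sq_sqrt (show 0 ≤ ρ / (2 * C) by positivity)]
      exact pow_le_pow_left₀ htu (by linarith [hu.1]) 2
    have hlt : (t - u) * (r t - r u) < ρ :=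
      calc (t - u) * (r t - r u) ≤ (t - u) * (C * (t - u)) := by
            gcongr
            exact h.control_sub_le hu'.1 hu'.2 ht.2
        _ = C * (t - u) ^ 2 := by ring
        _ ≤ C * (ρ / (2 * C)) := by gcongr
        _ = ρ / 2 := by field_simp
        _ < ρ := half_lt_self hρ
    exact h.one_le_two_mul huT hρ (by linarith [huT.2]) hm hρm
      (h.isCriticalFlow.one_le_of_mul_control_lt hu' ht.2 hbdd hlt) hy
  have hcontrol : r t - r s ≤ 0 := sub_nonpos.2 <|
    h.isCriticalFlow.control_le_of_one_le hs.1 hs.2 ht.2 (by positivity) hrough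
  exact h.isCriticalFlow.one_le_of_mul_control_lt hs ht.2 hbdd
    ((mul_nonpos_of_nonneg_of_nonpos (sub_nonneg.2 hs.2) hcontrol).trans_lt hy)

lemma exists_lt_one (h : HasEnergyBounds T L D r c C p q)
    (h0 : ∀ m, ∃ y, 0 < y ∧ m < D 1 0 y) (ht : t ∈ Icc 0 T) (m : ℝ) :
    ∃ y, 0 < y ∧ m < D 1 t y := by
  by_contra! hbdd
  have hm : 0 < m := (h.isCriticalFlow.pos 1 t 1 one_pos).trans_le (hbdd 1 one_pos)
  obtain ⟨δ, hδ, hstep⟩ := h.exists_one_le_of_sub_le hm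
  have hback : ∀ (n : ℕ), ∀ s ∈ Icc 0 t, t - s ≤ n * δ → ∀ y, 0 < y → D 1 s y ≤ m := by
    intro n
    induction n with
    | zero =>
      intro s hs hts
      rw [Nat.cast_zero, zero_mul, sub_nonpos] at hts
      rwa [le_antisymm hs.2 hts]
    | succ n ih =>
      intro s hs hts
      push_cast at hts
      have hmin : min t (s + δ) ∈ Icc s t := ⟨le_min hs.2 (by linarith), min_le_left _ _⟩
      have hmin0 : min t (s + δ) ∈ Icc 0 t := ⟨hs.1.trans hmin.1, hmin.2⟩
      have hclose : t - min t (s + δ) ≤ n * δ := by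
        rcases min_choice t (s + δ) with heq | heq <;> rw [heq]
        · rw [sub_self]
          positivity
        · linarith
      exact hstep _ ⟨hmin0.1, hmin0.2.trans ht.2⟩ (ih _ hmin0 hclose) s ⟨hs.1, hmin.1⟩
        (by linarith [min_le_right t (s + δ)])
  obtain ⟨n, hn⟩ := exists_nat_ge (t / δ)
  obtain ⟨y, hy, hmy⟩ := h0 m
  refine (hback n 0 ⟨le_rfl, ht.1⟩ ?_ y hy).not_gt hmy
  rwa [sub_zero, ← div_le_iff₀ hδ]

end HasEnergyBounds

/-- A flow with energy bounds whose first moment is infinite at all times, that is, a flow that is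
past its gelation time throughout `[0, T]`. -/
structure IsGelledFlow (T L : ℝ) (D : ℕ → ℝ → ℝ → ℝ) (r : ℝ → ℝ) (c C p q : ℝ) : Prop
    extends HasEnergyBounds T L D r c C p q where
  tendsto_one_atTop : ∀ t ∈ Icc 0 T, Tendsto (D 1 t) (𝓝[>] 0) atTop

lemma HasEnergyBounds.isGelledFlow {T L : ℝ} {D : ℕ → ℝ → ℝ → ℝ} {r : ℝ → ℝ} {c C p q : ℝ}
    (h : HasEnergyBounds T L D r c C p q) (h0 : ∀ m, ∃ y, 0 < y ∧ m < D 1 0 y) :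
    IsGelledFlow T L D r c C p q :=
  ⟨h, fun t ht ↦ tendsto_atTop.2 fun m ↦ by
    obtain ⟨y, hy, hmy⟩ := h.exists_lt_one h0 ht m
    filter_upwards [Ioc_mem_nhdsGT hy] with z hz
    exact hmy.le.trans (h.isCriticalFlow.antitone 1 t hz.1 hz.2)⟩

/-! ### Lower bounds near zero -/

namespace IsGelledFlow

variable {T L : ℝ} {D : ℕ → ℝ → ℝ → ℝ} {r : ℝ → ℝ} {c C p q t y : ℝ}

lemma tendsto_inv_sq_one (h : IsGelledFlow T L D r c C p q) (ht : t ∈ Icc 0 T) :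
    Tendsto (fun y ↦ (D 1 t y ^ 2)⁻¹) (𝓝[>] 0) (𝓝 0) :=
  ((tendsto_pow_atTop two_ne_zero).comp (h.tendsto_one_atTop t ht)).inv_tendsto_atTop

lemma le_sq_one (h : IsGelledFlow T L D r c C p q) (ht : t ∈ Icc 0 T) (hy : 0 < y)
    (hyL : t + y ≤ L) : c / (2 * y) ≤ D 1 t y ^ 2 := by
  have hlin : Tendsto (fun z ↦ 2 / c * (y - z)) (𝓝[>] 0) (𝓝 (2 * y / c)) :=
    (Continuous.tendsto' (by fun_prop) _ _ (by ring)).mono_left nhdsWithin_le_nhds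
  have hlim := (h.tendsto_inv_sq_one ht).add hlin
  rw [zero_add] at hlim
  have hle : (D 1 t y ^ 2)⁻¹ ≤ 2 * y / c := ge_of_tendsto hlim <| by
    filter_upwards [Ioo_mem_nhdsGT hy] with z hz
    linarith [h.inv_sq_sub_le_mul_sub ht hz.1 hz.2 hyL]
  have hP := h.isCriticalFlow.pos 1 t y hy
  simpa only [inv_inv, inv_div] using inv_anti₀ (by positivity) hle

lemma sqrt_le_one (h : IsGelledFlow T L D r c C p q) (ht : t ∈ Icc 0 T) (hy : 0 < y)
    (hyL : t + y ≤ L) : √(c / (2 * y)) ≤ D 1 t y :=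
  (Real.sqrt_le_left (h.isCriticalFlow.pos 1 t y hy).le).2 (h.le_sq_one ht hy hyL)

lemma sqrt_le_one_sub (h : IsGelledFlow T L D r c C p q) (ht : t ∈ Icc 0 T) (hy : 0 < y)
    (hyL : t + y ≤ L) : √(2 * c * y) ≤ 1 - D 0 t y :=
  le_of_hasDerivAt_le_of_tendsto hy (fun _ hz ↦ hasDerivAt_sqrt_two_mul h.lower_pos hz.1)
    (fun _ hz ↦ h.isCriticalFlow.hasDerivAt_one_sub t hz.1)
    (fun _ hz ↦ h.sqrt_le_one ht hz.1 (by linarith [hz.2])) (tendsto_sqrt_two_mul c)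
    (h.isCriticalFlow.tendsto_one_sub t)

lemma le_flux (h : IsGelledFlow T L D r c C p q) (ht : t ∈ Icc 0 T) (hy : 0 < y)
    (hyL : t + y ≤ L) : c ≤ (1 - D 0 t y) * D 1 t y :=
  (sqrt_two_mul_mul_sqrt_div h.lower_pos.le hy).symm.trans_le
    (mul_le_mul (h.sqrt_le_one_sub ht hy hyL) (h.sqrt_le_one ht hy hyL) (Real.sqrt_nonneg _)
      (h.isCriticalFlow.one_sub_pos t hy).le)

lemma le_control_sub (h : IsGelledFlow T L D r c C p q) {s : ℝ} (hs : 0 ≤ s) (hst : s ≤ t)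
    (htT : t ≤ T) : c * (t - s) ≤ r t - r s := by
  have hle := h.isCriticalFlow.integral_le_control_sub (φ := fun _ ↦ c) (e := fun _ ↦ 0) hs hst
    htT intervalIntegrable_const tendsto_const_nhds <| by
      filter_upwards [Ioc_mem_nhdsGT (sub_pos.2 h.time_lt)] with x hx τ hτ
      rw [sub_zero]
      exact h.le_flux ⟨hs.trans hτ.1, hτ.2.trans htT⟩ hx.1 (by linarith [hx.2, hτ.2])
  rwa [intervalIntegral.integral_const, smul_eq_mul, mul_comm] at hle

end IsGelledFlow

/-! ### Separation of characteristics -/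

lemma abs_sub_le_mul_sqrt_sub_sqrt {f f' : ℝ → ℝ} {M a b : ℝ} (ha : 0 < a) (hab : a ≤ b)
    (hf : ∀ y ∈ Icc a b, HasDerivAt f (f' y) y) (hf' : ∀ y ∈ Icc a b, |f' y| ≤ M / (2 * √y)) :
    |f b - f a| ≤ M * (√b - √a) := by
  have hsqrt : ∀ y ∈ Icc a b, HasDerivAt (fun z ↦ M * (√z - √a)) (M / (2 * √y)) y := fun y hy ↦
    (((Real.hasDerivAt_sqrt (ha.trans_le hy.1).ne').sub_const _).const_mul M).congr_deriv (by ring)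
  exact image_norm_le_of_norm_deriv_right_le_deriv_boundary' (f := fun z ↦ f z - f a)
    (fun y hy ↦ ((hf y hy).sub_const _).continuousAt.continuousWithinAt)
    (fun y hy ↦ ((hf y (Ico_subset_Icc_self hy)).sub_const _).hasDerivWithinAt) (by simp)
    (fun y hy ↦ (hsqrt y hy).continuousAt.continuousWithinAt)
    (fun y hy ↦ (hsqrt y (Ico_subset_Icc_self hy)).hasDerivWithinAt)
    (fun y hy ↦ hf' y (Ico_subset_Icc_self hy)) ⟨hab, le_rfl⟩

lemma sqrt_sub_sqrt_le_of_sub_le {a b x u k K : ℝ} (ha : 0 ≤ a) (hx : 0 < x) (hk : 0 < k)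
    (hab : a ≤ b) (hxb : x + k * u ^ 2 ≤ b) (hu : 0 ≤ u) (hsub : b - a ≤ x + u * (K * √x))
    (hK : 0 ≤ K) : √b - √a ≤ (1 + K / √k) * √x := by
  have hb : 0 < b := by nlinarith [sq_nonneg u]
  have hub : u ≤ √b / √k := by
    rw [le_div_iff₀ (Real.sqrt_pos.2 hk), ← Real.sqrt_sq hu, ← Real.sqrt_mul (sq_nonneg u)]
    exact Real.sqrt_le_sqrt (by linarith)
  have hfactor : (√b - √a) * √b ≤ b - a :=
    calc (√b - √a) * √b ≤ (√b - √a) * (√b + √a) := by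
          gcongr
          · exact sub_nonneg.2 (Real.sqrt_le_sqrt hab)
          · exact le_add_of_nonneg_right (Real.sqrt_nonneg a)
      _ = √b ^ 2 - √a ^ 2 := by ring
      _ = b - a := by rw [Real.sq_sqrt hb.le, Real.sq_sqrt ha]
  have hxsqrt : x ≤ √x * √b :=
    calc x = √x * √x := (Real.mul_self_sqrt hx.le).symm
      _ ≤ √x * √b := by gcongr; linarith [mul_nonneg hk.le (sq_nonneg u)]
  refine le_of_mul_le_mul_right ?_ (Real.sqrt_pos.2 hb)
  calc (√b - √a) * √b ≤ x + u * (K * √x) := hfactor.trans hsub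
    _ ≤ √x * √b + √b / √k * (K * √x) := by gcongr
    _ = (1 + K / √k) * √x * √b := by ring

namespace IsCharacteristic

variable {T L : ℝ} {D : ℕ → ℝ → ℝ → ℝ} {r ξ ξ₁ ξ₂ : ℝ → ℝ} {c C p q t x x₁ x₂ s : ℝ}

lemma le_of_lt_end (h₁ : IsCharacteristic D t x₁ ξ₁) (h₂ : IsCharacteristic D t x₂ ξ₂)
    (h : IsCriticalFlow T D r) (hx₁ : 0 < x₁) (hx : x₁ < x₂) (hs : s ∈ Icc 0 t) :
    ξ₁ s ≤ ξ₂ s := by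
  by_contra! hlt
  have hzero : (0 : ℝ) ∈ Icc (ξ₂ s - ξ₁ s) (ξ₂ t - ξ₁ t) := by
    rw [h₁.apply_end, h₂.apply_end]
    constructor <;> linarith
  obtain ⟨w, hw, hweq⟩ := intermediate_value_Icc hs.2
    ((h₂.continuousOn.sub h₁.continuousOn).mono (Icc_subset_Icc_left hs.1)) hzero
  have hw0 : 0 ≤ w := hs.1.trans hw.1
  have hlip : ∀ u, LipschitzOnWith (Real.toNNReal ((0 + 1).factorial / x₁ ^ (0 + 1)))
      (fun y ↦ -(1 - D 0 u y)) (Ici x₁) := fun u ↦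
    lipschitzOnWith_of_abs_sub_le (by positivity) fun y hy z hz hyz ↦ by
      rw [← abs_of_nonneg (sub_nonneg.2 hyz), show -(1 - D 0 u z) - -(1 - D 0 u y)
        = D 0 u z - D 0 u y by ring]
      exact h.abs_sub_le 0 u hx₁ hz hy
  have heq := ODE_solution_unique_of_mem_Icc_right (v := fun u y ↦ -(1 - D 0 u y))
    (s := fun _ ↦ Ici x₁) (fun u _ ↦ hlip u)
    (h₁.continuousOn.mono (Icc_subset_Icc_left hw0))
    (fun u hu ↦ h₁.hasDerivWithinAt u ⟨hw0.trans hu.1, hu.2⟩)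
    (fun u hu ↦ h₁.le_apply u ⟨hw0.trans hu.1, hu.2.le⟩)
    (h₂.continuousOn.mono (Icc_subset_Icc_left hw0))
    (fun u hu ↦ h₂.hasDerivWithinAt u ⟨hw0.trans hu.1, hu.2⟩)
    (fun u hu ↦ hx.le.trans (h₂.le_apply u ⟨hw0.trans hu.1, hu.2.le⟩))
    (sub_eq_zero.1 hweq).symm ⟨hw.2, le_rfl⟩
  rw [h₁.apply_end, h₂.apply_end] at heq
  exact hx.ne heq

lemma sub_apply_zero_le (h₁ : IsCharacteristic D t x₁ ξ₁) (h₂ : IsCharacteristic D t x₂ ξ₂)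
    (h : HasEnergyBounds T L D r c C p q) (hx₁ : 0 < x₁) (hx : x₁ < x₂) (htT : t ≤ T)
    (hs : s ∈ Icc 0 t) : D 0 s (ξ₁ s) - D 0 s (ξ₂ s) ≤ 1 - D 0 t x₂ := by
  have hflow := h.isCriticalFlow
  have hx₂ := hx₁.trans hx
  have hcont : ContinuousOn (fun σ ↦ D 0 σ (ξ₂ σ) - D 0 σ (ξ₁ σ)) (Icc s t) :=
    ((h.continuousOn_comp_characteristic h₂ hx₂ htT 0).sub
      (h.continuousOn_comp_characteristic h₁ hx₁ htT 0)).mono (Icc_subset_Icc_left hs.1)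
  have hle := le_of_hasRightExpansion_nonpos hs.2 hflow.monotone (fun w hw ↦ ?_)
    fun w hw ↦ lowerSemicontinuousWithinAt_of_continuousOn hcont hw
  · rw [h₁.apply_end, h₂.apply_end] at hle
    linarith [hflow.one_sub_pos t hx₁]
  · have hw' : w ∈ Ico 0 t := ⟨hs.1.trans hw.1, hw.2⟩
    have hexp : Real.exp (-ξ₂ w) ≤ Real.exp (-ξ₁ w) := Real.exp_le_exp.2
      (neg_le_neg (h₁.le_of_lt_end h₂ hflow hx₁ hx (Ico_subset_Icc_self hw')))
    have hsub := (h₁.hasRightExpansion_one_sub hflow hx₁ htT hw').sub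
      (h₂.hasRightExpansion_one_sub hflow hx₂ htT hw')
    simp only [sub_sub_sub_cancel_left] at hsub
    exact ⟨_, _, (sub_zero 0).le, by linarith, hsub⟩

lemma apply_sub_apply_le (h₁ : IsCharacteristic D t x₁ ξ₁) (h₂ : IsCharacteristic D t x₂ ξ₂)
    (h : HasEnergyBounds T L D r c C p q) (hx₁ : 0 < x₁) (hx : x₁ < x₂) (htT : t ≤ T)
    (hs : s ∈ Icc 0 t) : ξ₂ s - ξ₁ s ≤ x₂ + (t - s) * (1 - D 0 t x₂) := by
  set B := 1 - D 0 t x₂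
  have hle := le_of_hasDerivWithinAt_nonpos (G := fun w ↦ -((ξ₂ w - ξ₁ w) + B * w)) hs.2
    (((h₂.continuousOn.sub h₁.continuousOn).mono (Icc_subset_Icc_left hs.1)).add
      (by fun_prop)).neg
    (fun w hw ↦ (((h₂.hasDerivWithinAt w ⟨hs.1.trans hw.1, hw.2⟩).sub
      (h₁.hasDerivWithinAt w ⟨hs.1.trans hw.1, hw.2⟩)).add
        ((hasDerivWithinAt_id w (Ici w)).const_mul B)).neg) fun w hw ↦ ?_
  · simp only [h₁.apply_end, h₂.apply_end] at hle
    linarith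
  · linarith [h₁.sub_apply_zero_le h₂ h hx₁ hx htT ⟨hs.1.trans hw.1, hw.2.le⟩]

/-- The velocity at time `w` is at least of order `r t - r w`, hence of order `t - w`. -/
lemma add_mul_sq_le (hξ : IsCharacteristic D t x ξ) (h : IsGelledFlow T L D r c C p q)
    (hx : 0 < x) (htT : t ≤ T) (hxL : t + x ≤ L) (hs : s ∈ Icc 0 t) :
    x + Real.exp (-L) * c / 2 * (t - s) ^ 2 ≤ ξ s := by
  set k := Real.exp (-L) * c / 2 with hk
  have hsq : ∀ w, HasDerivAt (fun w ↦ k * (t - w) ^ 2) (-(2 * k * (t - w))) w := fun w ↦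
    ((((hasDerivAt_id w).const_sub t).fun_pow 2).const_mul k).congr_deriv (by simp; ring)
  have hle := le_of_hasDerivWithinAt_nonpos (G := fun w ↦ ξ w - k * (t - w) ^ 2) hs.2
    ((hξ.continuousOn.mono (Icc_subset_Icc_left hs.1)).sub (by fun_prop))
    (fun w hw ↦ (hξ.hasDerivWithinAt w ⟨hs.1.trans hw.1, hw.2⟩).fun_sub
      (hsq w).hasDerivWithinAt) fun w hw ↦ ?_
  · rw [hξ.apply_end] at hle
    linarith
  · have hw' : w ∈ Icc 0 t := ⟨hs.1.trans hw.1, hw.2.le⟩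
    have hcontrol : Real.exp (-L) * (c * (t - w)) ≤ Real.exp (-(t + x)) * (r t - r w) := by
      gcongr
      · exact mul_nonneg h.lower_pos.le (sub_nonneg.2 hw.2.le)
      · exact h.le_control_sub hw'.1 hw'.2 htT
    have hvelocity := hξ.le_one_sub_apply h.isCriticalFlow hx htT hw'
    have hpos := h.isCriticalFlow.one_sub_pos t hx
    have hslope : 2 * k * (t - w) = Real.exp (-L) * (c * (t - w)) := by rw [hk]; ring
    linarith

end IsCharacteristic

lemma IsGelledFlow.exists_sqrt_sub_sqrt_le {T L : ℝ} {D : ℕ → ℝ → ℝ → ℝ} {r : ℝ → ℝ}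
    {c C p q : ℝ} (h : IsGelledFlow T L D r c C p q) :
    ∃ M, 0 ≤ M ∧ ∀ t ≤ T, ∀ x₁ x₂ ξ₁ ξ₂, 0 < x₁ → x₁ < x₂ → t + x₂ ≤ L →
      IsCharacteristic D t x₁ ξ₁ → IsCharacteristic D t x₂ ξ₂ →
        ∀ s ∈ Icc 0 t, √(ξ₂ s) - √(ξ₁ s) ≤ M * √x₂ := by
  have hc := h.lower_pos
  refine ⟨1 + √(2 * C) / √(Real.exp (-L) * c / 2), by positivity,
    fun t htT x₁ x₂ ξ₁ ξ₂ hx₁ hx hxL h₁ h₂ s hs ↦ ?_⟩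
  have hx₂ := hx₁.trans hx
  have hts : 0 ≤ t - s := sub_nonneg.2 hs.2
  refine sqrt_sub_sqrt_le_of_sub_le (h₁.pos hx₁ hs).le hx₂ (by positivity)
    (h₁.le_of_lt_end h₂ h.isCriticalFlow hx₁ hx hs) (h₂.add_mul_sq_le h hx₂ htT hxL hs) hts
    ((h₁.apply_sub_apply_le h₂ h.toHasEnergyBounds hx₁ hx htT hs).trans ?_) (Real.sqrt_nonneg _)
  rw [← Real.sqrt_mul (mul_pos two_pos h.upper_pos).le]
  gcongr
  exact h.one_sub_le_sqrt ⟨hs.1.trans hs.2, htT⟩ hx₂ hxL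

/-! ### Hölder continuity of the energy -/

lemma abs_sub_le_mul_abs_log_sub_log {a b C : ℝ} (ha : 0 < a) (haC : a ≤ C) (hb : 0 < b)
    (hbC : b ≤ C) : |b - a| ≤ C * |Real.log b - Real.log a| := by
  have hone : ∀ {a b : ℝ}, 0 < a → 0 < b → b ≤ C →
      b - a ≤ C * |Real.log b - Real.log a| := fun {a b} ha hb hbC ↦ by
    have hlog := log_sub_log_le hb ha
    rw [le_div_iff₀ hb] at hlog
    calc b - a ≤ b * (Real.log b - Real.log a) := by linarith
      _ ≤ b * |Real.log b - Real.log a| := by gcongr; exact le_abs_self _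
      _ ≤ C * |Real.log b - Real.log a| := by gcongr
  exact abs_sub_le_iff.2 ⟨hone ha hb hbC, abs_sub_comm (Real.log a) _ ▸ hone hb ha haC⟩

/-- The coefficient of `dr` in the evolution of `log E` along characteristics. -/
noncomputable def energyRate (D : ℕ → ℝ → ℝ → ℝ) (t x : ℝ) : ℝ :=
  Real.exp (-x) * (3 / D 1 t x - 1 / D 2 t x)

lemma IsCriticalFlow.hasDerivAt_energyRate {T : ℝ} {D : ℕ → ℝ → ℝ → ℝ} {r : ℝ → ℝ}
    (h : IsCriticalFlow T D r) (t : ℝ) {y : ℝ} (hy : 0 < y) :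
    HasDerivAt (energyRate D t) (Real.exp (-y) * (-(3 / D 1 t y - 1 / D 2 t y)
      + (3 * (D 2 t y / D 1 t y ^ 2) - D 3 t y / D 2 t y ^ 2))) y := by
  have hone := (h.hasDerivAt 1 t y hy).fun_inv (h.pos 1 t y hy).ne'
  have htwo := (h.hasDerivAt 2 t y hy).fun_inv (h.pos 2 t y hy).ne'
  have hrate := (hasDerivAt_neg y).exp.fun_mul ((hone.const_mul 3).fun_sub htwo)
  simp only [← div_eq_mul_inv, ← one_div (D 2 t _)] at hrate
  exact hrate.congr_deriv (by rw [div_eq_mul_inv 3, one_div]; ring)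

namespace IsGelledFlow

variable {T L : ℝ} {D : ℕ → ℝ → ℝ → ℝ} {r : ℝ → ℝ} {c C p q t y : ℝ}

lemma two_div_sq_one_le (h : IsGelledFlow T L D r c C p q) (ht : t ∈ Icc 0 T) (hy : 0 < y)
    (hyL : t + y ≤ L) : D 2 t y / D 1 t y ^ 2 ≤ √C / c / √y := by
  have hc := h.lower_pos
  have hP := h.isCriticalFlow.pos 1 t y hy
  have hE := h.le_energy t ht y hy hyL
  rw [energy, le_div_iff₀ (h.isCriticalFlow.pos 2 t y hy)] at hE
  have hPsqrt : D 1 t y ≤ √C / √y := by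
    rw [← Real.sqrt_div h.upper_pos.le]
    refine (h.one_le_sqrt ht hy hyL).trans (Real.sqrt_le_sqrt ?_)
    exact div_le_div_of_nonneg_left h.upper_pos.le hy (by linarith)
  calc D 2 t y / D 1 t y ^ 2 ≤ D 1 t y / c := by
        rw [div_le_div_iff₀ (by positivity) hc]
        linarith
    _ ≤ √C / √y / c := by gcongr
    _ = √C / c / √y := by ring

lemma three_div_sq_two_le (h : IsGelledFlow T L D r c C p q) (ht : t ∈ Icc 0 T) (hy : 0 < y)
    (hyL : t + y ≤ L) : D 3 t y / D 2 t y ^ 2 ≤ 16 * √C ^ 3 * C ^ 2 / c ^ 4 * √y := by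
  have hc := h.lower_pos
  have hC := h.upper_pos
  have hP := h.isCriticalFlow.pos 1 t y hy
  have hhalf : t + y / 2 ≤ L := by linarith
  have hthree : D 3 t y ≤ 2 / y * ((√C / √y) ^ 3 / c) := by
    have hE := h.le_energy t ht _ (half_pos hy) hhalf
    rw [energy, le_div_iff₀ (h.isCriticalFlow.pos 2 t _ (half_pos hy)), mul_comm,
      ← le_div_iff₀ hc] at hE
    have hone := h.one_le_sqrt ht (half_pos hy) hhalf
    rw [mul_div_cancel₀ y two_ne_zero, Real.sqrt_div hC.le] at hone
    have hpos := h.isCriticalFlow.pos 1 t _ (half_pos hy)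
    calc D 3 t y ≤ 2 / y * D 2 t (y / 2) := by
          rw [div_mul_eq_mul_div, le_div_iff₀ hy, mul_comm]
          exact h.isCriticalFlow.mul_three_le t y hy
      _ ≤ 2 / y * ((√C / √y) ^ 3 / c) := by
          gcongr
          exact hE.trans (by gcongr)
  have htwo : (c / (2 * y)) ^ 3 / C ^ 2 ≤ D 2 t y ^ 2 := by
    have hE := h.energy_le t ht y hy hyL
    rw [energy, div_le_iff₀ (h.isCriticalFlow.pos 2 t y hy)] at hE
    rw [div_le_iff₀ (by positivity)]
    calc (c / (2 * y)) ^ 3 ≤ (D 1 t y ^ 2) ^ 3 := by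
          gcongr
          exact h.le_sq_one ht hy hyL
      _ = (D 1 t y ^ 3) ^ 2 := by ring
      _ ≤ (C * D 2 t y) ^ 2 := by gcongr
      _ = D 2 t y ^ 2 * C ^ 2 := by ring
  calc D 3 t y / D 2 t y ^ 2
      ≤ 2 / y * ((√C / √y) ^ 3 / c) / ((c / (2 * y)) ^ 3 / C ^ 2) :=
        div_le_div₀ (by positivity) hthree (by positivity) htwo
    _ = 16 * √C ^ 3 * C ^ 2 / c ^ 4 * (y ^ 2 / √y ^ 3) := by field_simp; norm_num
    _ = 16 * √C ^ 3 * C ^ 2 / c ^ 4 * √y := by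
        congr 1
        rw [div_eq_iff (by positivity)]
        nth_rw 1 [← Real.sq_sqrt hy.le]
        ring

lemma exists_abs_deriv_energyRate_le (h : IsGelledFlow T L D r c C p q) :
    ∃ M, 0 ≤ M ∧ ∀ t ∈ Icc 0 T, ∀ y, 0 < y → t + y ≤ L →
      |deriv (energyRate D t) y| ≤ M / (2 * √y) := by
  have hc := h.lower_pos
  have hp := h.p_pos
  have hq := h.q_pos
  have hL := h.time_pos.trans h.time_lt
  set K := 16 * √C ^ 3 * C ^ 2 / c ^ 4
  have hC := h.upper_pos
  refine ⟨2 * ((3 / p + 1 / q) * √L + 3 * (√C / c) + K * L), by positivity,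
    fun t ht y hy hyL ↦ ?_⟩
  have hP := h.isCriticalFlow.pos 1 t y hy
  have hQ := h.isCriticalFlow.pos 2 t y hy
  have hZ := h.isCriticalFlow.pos 3 t y hy
  have hσ := Real.sqrt_pos.2 hy
  have hyL' : y ≤ L := by linarith [ht.1]
  have hlow : 3 / D 1 t y + 1 / D 2 t y ≤ (3 / p + 1 / q) * √L / √y := by
    rw [le_div_iff₀ hσ]
    gcongr
    · exact h.le_one t ht y hy hyL
    · exact h.le_two t ht y hy hyL
  have htwo := mul_le_mul_of_nonneg_left (h.two_div_sq_one_le ht hy hyL) (zero_le_three (α := ℝ))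
  have hthree : D 3 t y / D 2 t y ^ 2 ≤ K * L / √y := by
    refine (h.three_div_sq_two_le ht hy hyL).trans ?_
    rw [le_div_iff₀ hσ, mul_assoc, Real.mul_self_sqrt hy.le]
    gcongr
  rw [(h.isCriticalFlow.hasDerivAt_energyRate t hy).deriv, abs_mul, Real.abs_exp]
  calc Real.exp (-y) * |-(3 / D 1 t y - 1 / D 2 t y)
        + (3 * (D 2 t y / D 1 t y ^ 2) - D 3 t y / D 2 t y ^ 2)|
      ≤ 1 * (3 / D 1 t y + 1 / D 2 t y + 3 * (D 2 t y / D 1 t y ^ 2) + D 3 t y / D 2 t y ^ 2) := by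
        have hnn : 0 ≤ 3 / D 1 t y ∧ 0 ≤ 1 / D 2 t y ∧ 0 ≤ 3 * (D 2 t y / D 1 t y ^ 2)
            ∧ 0 ≤ D 3 t y / D 2 t y ^ 2 := by refine ⟨?_, ?_, ?_, ?_⟩ <;> positivity
        gcongr
        · exact Real.exp_le_one_iff.2 (neg_nonpos.2 hy.le)
        · exact abs_le.2 (by constructor <;> linarith [hnn.1, hnn.2.1, hnn.2.2.1, hnn.2.2.2])
    _ ≤ (3 / p + 1 / q) * √L / √y + 3 * (√C / c / √y) + K * L / √y := by linarith
    _ = 2 * ((3 / p + 1 / q) * √L + 3 * (√C / c) + K * L) / (2 * √y) := by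
        field_simp

lemma exists_abs_energyRate_sub_le (h : IsGelledFlow T L D r c C p q) :
    ∃ M, 0 ≤ M ∧ ∀ t ∈ Icc 0 T, ∀ y₁ y₂, 0 < y₁ → y₁ ≤ y₂ → t + y₂ ≤ L →
      |energyRate D t y₂ - energyRate D t y₁| ≤ M * (√y₂ - √y₁) := by
  obtain ⟨M, hM, hderiv⟩ := h.exists_abs_deriv_energyRate_le
  exact ⟨M, hM, fun t ht y₁ y₂ hy₁ hy hyL ↦ abs_sub_le_mul_sqrt_sub_sqrt hy₁ hy
    (fun z hz ↦ (h.isCriticalFlow.hasDerivAt_energyRate t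
      (hy₁.trans_le hz.1)).differentiableAt.hasDerivAt)
    fun z hz ↦ hderiv t ht z (hy₁.trans_le hz.1) (by linarith [hz.2])⟩

end IsGelledFlow

lemma IsCharacteristic.log_energy_sub_le {T L : ℝ} {D : ℕ → ℝ → ℝ → ℝ} {r ξ ξ' : ℝ → ℝ}
    {c C p q t x x' B : ℝ} (hξ : IsCharacteristic D t x ξ) (hξ' : IsCharacteristic D t x' ξ')
    (h : HasEnergyBounds T L D r c C p q) (hx : 0 < x) (hx' : 0 < x') (ht : t ∈ Icc 0 T)
    (hB : ∀ s ∈ Ico 0 t, energyRate D s (ξ s) - energyRate D s (ξ' s) ≤ B) :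
    Real.log (energy D t x) - Real.log (energy D t x') ≤
      Real.log (energy D 0 (ξ 0)) - Real.log (energy D 0 (ξ' 0)) + B * r t := by
  have hflow := h.isCriticalFlow
  have h0 : (0 : ℝ) ∈ Icc 0 t := ⟨le_rfl, ht.1⟩
  have hcont : ∀ {x ξ}, 0 < x → IsCharacteristic D t x ξ → ContinuousOn
      (fun σ ↦ 3 * Real.log (D 1 σ (ξ σ)) - Real.log (D 2 σ (ξ σ))) (Icc 0 t) := fun hx hξ ↦
    (continuousOn_const.mul ((h.continuousOn_comp_characteristic hξ hx ht.2 1).log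
      fun s hs ↦ (hflow.pos 1 s _ (hξ.pos hx hs)).ne')).sub
      ((h.continuousOn_comp_characteristic hξ hx ht.2 2).log
        fun s hs ↦ (hflow.pos 2 s _ (hξ.pos hx hs)).ne')
  have hle := le_of_hasRightExpansion_nonpos ht.1 hflow.monotone
    (fun s hs ↦ ⟨_, _, ?_, ?_, ((hξ.hasRightExpansion_log_energy hflow hx ht.2 hs).sub
      (hξ'.hasRightExpansion_log_energy hflow hx' ht.2 hs)).sub
        (HasRightExpansion.control.const_mul B)⟩)
    fun s hs ↦ lowerSemicontinuousWithinAt_of_continuousOn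
      (((hcont hx hξ).sub (hcont hx' hξ')).sub
        (continuousOn_const.mul (h.continuousOn_control.mono (Icc_subset_Icc_right ht.2)))) hs
  · simp only [hξ.apply_end, hξ'.apply_end, hflow.map_zero] at hle
    rw [hflow.log_energy t hx, hflow.log_energy t hx', hflow.log_energy 0 (hξ.pos hx h0),
      hflow.log_energy 0 (hξ'.pos hx' h0)]
    linarith
  · simp
  · have := hB s hs
    simp only [energyRate] at this
    linarith

lemma IsGelledFlow.exists_abs_energy_sub_le {T L : ℝ} {D : ℕ → ℝ → ℝ → ℝ} {r : ℝ → ℝ}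
    {c C p q M₀ : ℝ} (h : IsGelledFlow T L D r c C p q) (hM₀ : 0 ≤ M₀)
    (hE₀ : ∀ y₁ y₂, 0 < y₁ → y₁ ≤ y₂ → y₂ ≤ L →
      |Real.log (energy D 0 y₂) - Real.log (energy D 0 y₁)| ≤ M₀ * (√y₂ - √y₁)) :
    ∃ M, 0 ≤ M ∧ ∀ t ∈ Icc 0 T, ∀ x₁ x₂, 0 < x₁ → x₁ < x₂ → t + x₂ ≤ L →
      |energy D t x₂ - energy D t x₁| ≤ M * √x₂ := by
  obtain ⟨M₁, hM₁, hrate⟩ := h.exists_abs_energyRate_sub_le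
  obtain ⟨M₂, hM₂, hsep⟩ := h.exists_sqrt_sub_sqrt_le
  have hflow := h.isCriticalFlow
  have hC := h.upper_pos
  have hrT := hflow.control_nonneg h.time_pos.le
  refine ⟨C * (M₀ * M₂ + M₁ * M₂ * r T), by positivity, fun t ht x₁ x₂ hx₁ hx hxL ↦ ?_⟩
  have hx₂ := hx₁.trans hx
  obtain ⟨ξ₁, h₁⟩ := hflow.exists_isCharacteristic ht.1 ht.2 hx₁
  obtain ⟨ξ₂, h₂⟩ := hflow.exists_isCharacteristic ht.1 ht.2 hx₂
  have hdist := hsep t ht.2 x₁ x₂ ξ₁ ξ₂ hx₁ hx hxL h₁ h₂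
  have h0 : (0 : ℝ) ∈ Icc 0 t := ⟨le_rfl, ht.1⟩
  have hgap : ∀ s ∈ Ico 0 t,
      |energyRate D s (ξ₂ s) - energyRate D s (ξ₁ s)| ≤ M₁ * (M₂ * √x₂) := fun s hs ↦ by
    have hs' := Ico_subset_Icc_self hs
    exact (hrate s ⟨hs.1, hs'.2.trans ht.2⟩ _ _ (h₁.pos hx₁ hs')
      (h₁.le_of_lt_end h₂ hflow hx₁ hx hs') (by linarith [h₂.apply_le s hs'])).trans
      (mul_le_mul_of_nonneg_left (hdist s hs') hM₁)
  have hinit := (hE₀ _ _ (h₁.pos hx₁ h0) (h₁.le_of_lt_end h₂ hflow hx₁ hx h0)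
    (by linarith [h₂.apply_le 0 h0])).trans (mul_le_mul_of_nonneg_left (hdist 0 h0) hM₀)
  have hup := h₂.log_energy_sub_le h₁ h.toHasEnergyBounds hx₂ hx₁ ht
    fun s hs ↦ (abs_le.1 (hgap s hs)).2
  have hdown := h₁.log_energy_sub_le h₂ h.toHasEnergyBounds hx₁ hx₂ ht
    fun s hs ↦ (abs_sub_le_iff.1 (hgap s hs)).2
  have hrt : M₁ * (M₂ * √x₂) * r t ≤ M₁ * (M₂ * √x₂) * r T :=
    mul_le_mul_of_nonneg_left (hflow.monotone ht.2) (by positivity)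
  have hlog : |Real.log (energy D t x₂) - Real.log (energy D t x₁)| ≤
      M₀ * (M₂ * √x₂) + M₁ * (M₂ * √x₂) * r T :=
    abs_sub_le_iff.2 ⟨by linarith [(abs_sub_le_iff.1 hinit).1],
      by linarith [(abs_sub_le_iff.1 hinit).2]⟩
  calc |energy D t x₂ - energy D t x₁|
      ≤ C * |Real.log (energy D t x₂) - Real.log (energy D t x₁)| :=
        abs_sub_le_mul_abs_log_sub_log (hflow.energy_pos t hx₁)
          (h.energy_le t ht x₁ hx₁ (by linarith)) (hflow.energy_pos t hx₂)
          (h.energy_le t ht x₂ hx₂ hxL)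
    _ ≤ C * (M₀ * (M₂ * √x₂) + M₁ * (M₂ * √x₂) * r T) := by gcongr
    _ = C * (M₀ * M₂ + M₁ * M₂ * r T) * √x₂ := by ring

/-! ### The limit of the energy at zero -/

lemma exists_forall_abs_sub_le {α : Type*} [LinearOrder α] {S : Set α} {f g : α → ℝ}
    (hg : ∀ x ∈ S, 0 ≤ g x) (hfg : ∀ x ∈ S, ∀ y ∈ S, x < y → |f y - f x| ≤ g y) :
    ∃ l, ∀ x ∈ S, |f x - l| ≤ g x := by
  rcases S.eq_empty_or_nonempty with rfl | hS
  · exact ⟨0, by simp⟩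
  obtain ⟨l, hlower, hupper⟩ := exists_between_of_forall_le
    (hS.image fun x ↦ f x - g x) (hS.image fun x ↦ f x + g x) <| by
      rintro _ ⟨x, hx, rfl⟩ _ ⟨y, hy, rfl⟩
      have hgx := hg x hx
      have hgy := hg y hy
      rcases lt_trichotomy x y with hxy | rfl | hyx
      · linarith [(abs_le.1 (hfg x hx y hy hxy)).1]
      · linarith
      · linarith [(abs_le.1 (hfg y hy x hx hyx)).2]
  refine ⟨l, fun x hx ↦ abs_le.2 ⟨?_, ?_⟩⟩
  · linarith [hupper (mem_image_of_mem _ hx)]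
  · linarith [hlower (mem_image_of_mem _ hx)]

/-- A gelled flow whose energy has the limit `φ t` at `x = 0`, approached with Hölder exponent
`1 / 2` and constant `M`. -/
structure HasEnergyLimit (T L : ℝ) (D : ℕ → ℝ → ℝ → ℝ) (r : ℝ → ℝ) (c C p q : ℝ) (φ : ℝ → ℝ)
    (M : ℝ) : Prop extends IsGelledFlow T L D r c C p q where
  abs_energy_sub_le : ∀ t ∈ Icc 0 T, ∀ x, 0 < x → t + x ≤ L → |energy D t x - φ t| ≤ M * √x

lemma IsGelledFlow.exists_hasEnergyLimit {T L : ℝ} {D : ℕ → ℝ → ℝ → ℝ} {r : ℝ → ℝ}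
    {c C p q M₀ : ℝ} (h : IsGelledFlow T L D r c C p q) (hM₀ : 0 ≤ M₀)
    (hE₀ : ∀ y₁ y₂, 0 < y₁ → y₁ ≤ y₂ → y₂ ≤ L →
      |Real.log (energy D 0 y₂) - Real.log (energy D 0 y₁)| ≤ M₀ * (√y₂ - √y₁)) :
    ∃ φ M, HasEnergyLimit T L D r c C p q φ M := by
  obtain ⟨M, hM, hholder⟩ := h.exists_abs_energy_sub_le hM₀ hE₀
  have hlimit : ∀ t, ∃ l, t ∈ Icc 0 T → ∀ x ∈ Ioc 0 (L - t), |energy D t x - l| ≤ M * √x :=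
    fun t ↦ by
      by_cases ht : t ∈ Icc 0 T
      · obtain ⟨l, hl⟩ := exists_forall_abs_sub_le (S := Ioc 0 (L - t)) (f := energy D t)
          (fun x _ ↦ mul_nonneg hM (Real.sqrt_nonneg x))
          fun x hx y hy hxy ↦ hholder t ht x y hx.1 hxy (by linarith [hy.2])
        exact ⟨l, fun _ ↦ hl⟩
      · exact ⟨0, fun ht' ↦ absurd ht' ht⟩
  choose φ hφ using hlimit
  exact ⟨φ, M, h, fun t ht x hx hxL ↦ hφ t ht x ⟨hx, by linarith⟩⟩

namespace HasEnergyLimit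

variable {T L : ℝ} {D : ℕ → ℝ → ℝ → ℝ} {r : ℝ → ℝ} {c C p q : ℝ} {φ : ℝ → ℝ} {M t : ℝ}

lemma const_nonneg (h : HasEnergyLimit T L D r c C p q φ M) : 0 ≤ M := by
  have hL : 0 < L := h.time_pos.trans h.time_lt
  have habs := (abs_nonneg _).trans (h.abs_energy_sub_le 0 h.zero_mem_Icc L hL (zero_add L).le)
  exact nonneg_of_mul_nonneg_left habs (Real.sqrt_pos.2 hL)

lemma tendsto_energy (h : HasEnergyLimit T L D r c C p q φ M) (ht : t ∈ Icc 0 T) :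
    Tendsto (energy D t) (𝓝[>] 0) (𝓝 (φ t)) := by
  have hsqrt : Tendsto (fun x ↦ M * √x) (𝓝[>] 0) (𝓝 0) :=
    (Continuous.tendsto' (by fun_prop) _ _ (by simp)).mono_left nhdsWithin_le_nhds
  refine tendsto_iff_norm_sub_tendsto_zero.2
    (squeeze_zero' (Eventually.of_forall fun _ ↦ norm_nonneg _) ?_ hsqrt)
  filter_upwards [Ioc_mem_nhdsGT (sub_pos.2 h.time_lt)] with x hx
  exact h.abs_energy_sub_le t ht x hx.1 (by linarith [hx.2, ht.2])

lemma limit_mem_Icc (h : HasEnergyLimit T L D r c C p q φ M) (ht : t ∈ Icc 0 T) :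
    φ t ∈ Icc c C := by
  refine isClosed_Icc.mem_of_tendsto (h.tendsto_energy ht) ?_
  filter_upwards [Ioc_mem_nhdsGT (sub_pos.2 h.time_lt)] with x hx
  have hxL : t + x ≤ L := by linarith [hx.2, ht.2]
  exact ⟨h.le_energy t ht x hx.1 hxL, h.energy_le t ht x hx.1 hxL⟩

lemma limit_pos (h : HasEnergyLimit T L D r c C p q φ M) (ht : t ∈ Icc 0 T) : 0 < φ t :=
  h.lower_pos.trans_le (h.limit_mem_Icc ht).1

end HasEnergyLimit

/-! ### Asymptotics near zero -/

lemma abs_inv_sub_inv_le {a b c : ℝ} (hc : 0 < c) (ha : c ≤ a) (hb : c ≤ b) :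
    |a⁻¹ - b⁻¹| ≤ |a - b| / c ^ 2 := by
  have ha0 := hc.trans_le ha
  have hb0 := hc.trans_le hb
  rw [inv_sub_inv ha0.ne' hb0.ne', abs_div, abs_of_pos (mul_pos ha0 hb0), abs_sub_comm, sq]
  gcongr

lemma abs_sub_le_of_abs_inv_sq_sub_le {a b δ : ℝ} (ha : 0 < a) (hb : 0 < b)
    (h : |(a ^ 2)⁻¹ - (b ^ 2)⁻¹| ≤ δ) : |a - b| ≤ δ * a ^ 2 * b := by
  have hfactor : |a - b| * (a + b) = |(a ^ 2)⁻¹ - (b ^ 2)⁻¹| * (a ^ 2 * b ^ 2) := by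
    rw [← abs_of_pos (add_pos ha hb), ← abs_mul,
      ← abs_of_pos (show 0 < a ^ 2 * b ^ 2 by positivity), ← abs_mul, ← abs_neg]
    congr 1
    field_simp
    ring
  refine le_of_mul_le_mul_right ?_ hb
  calc |a - b| * b ≤ |a - b| * (a + b) := by gcongr; linarith
    _ = |(a ^ 2)⁻¹ - (b ^ 2)⁻¹| * (a ^ 2 * b ^ 2) := hfactor
    _ ≤ δ * (a ^ 2 * b ^ 2) := by gcongr
    _ = δ * a ^ 2 * b * b := by ring

lemma abs_cube_sub_cube_le {a b m : ℝ} (ha : 0 ≤ a) (ham : a ≤ m) (hb : 0 ≤ b) (hbm : b ≤ m) :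
    |a ^ 3 - b ^ 3| ≤ |a - b| * (3 * m ^ 2) := by
  rw [show a ^ 3 - b ^ 3 = (a - b) * (a ^ 2 + a * b + b ^ 2) by ring, abs_mul,
    abs_of_nonneg (show 0 ≤ a ^ 2 + a * b + b ^ 2 by positivity)]
  have hm := ha.trans ham
  gcongr
  calc a ^ 2 + a * b + b ^ 2 ≤ m ^ 2 + m * m + m ^ 2 := by gcongr
    _ = 3 * m ^ 2 := by ring

lemma sqrt_mul_sqrt_div_two_mul {a y : ℝ} (hy : 0 < y) : √y * √(a / (2 * y)) = √(a / 2) := by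
  rw [← Real.sqrt_mul hy.le]
  congr 1
  field_simp

/-- The bound on the error in the leading order asymptotics `√(φ t / (2 * y))` of the first
moment, from which those for the other moments follow. -/
noncomputable def momentError (c C M : ℝ) : ℝ := M * C / c ^ 2 * √(C / 2)

namespace HasEnergyLimit

variable {T L : ℝ} {D : ℕ → ℝ → ℝ → ℝ} {r : ℝ → ℝ} {c C p q : ℝ} {φ : ℝ → ℝ} {M t y : ℝ}

lemma momentError_nonneg (h : HasEnergyLimit T L D r c C p q φ M) : 0 ≤ momentError c C M := by
  have hC := h.upper_pos
  have hM := h.const_nonneg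
  unfold momentError
  positivity

lemma abs_inv_energy_sub_le (h : HasEnergyLimit T L D r c C p q φ M) (ht : t ∈ Icc 0 T)
    (hy : 0 < y) (hyL : t + y ≤ L) : |(energy D t y)⁻¹ - (φ t)⁻¹| ≤ M * √y / c ^ 2 :=
  (abs_inv_sub_inv_le h.lower_pos (h.le_energy t ht y hy hyL) (h.limit_mem_Icc ht).1).trans <| by
    gcongr
    exact h.abs_energy_sub_le t ht y hy hyL

lemma abs_inv_sq_one_sub_le (h : HasEnergyLimit T L D r c C p q φ M) (ht : t ∈ Icc 0 T)
    (hy : 0 < y) (hyL : t + y ≤ L) :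
    |(D 1 t y ^ 2)⁻¹ - 2 * y / φ t| ≤ 2 * y * (M * √y / c ^ 2) := by
  have hM := h.const_nonneg
  have hlin : Tendsto (fun z ↦ 2 * (y - z) / φ t) (𝓝[>] 0) (𝓝 (2 * y / φ t)) :=
    (Continuous.tendsto' (by fun_prop) _ _ (by ring)).mono_left nhdsWithin_le_nhds
  have hlim := (((h.tendsto_inv_sq_one ht).const_sub ((D 1 t y ^ 2)⁻¹)).sub hlin).abs
  rw [sub_zero] at hlim
  refine le_of_tendsto hlim ?_
  filter_upwards [Ioo_mem_nhdsGT hy] with z hz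
  obtain ⟨w, hw, hslope⟩ := h.isCriticalFlow.exists_inv_sq_one_sub_eq t hz.1 hz.2
  have hdiff : (D 1 t y ^ 2)⁻¹ - (D 1 t z ^ 2)⁻¹ - 2 * (y - z) / φ t
      = 2 * (y - z) * ((energy D t w)⁻¹ - (φ t)⁻¹) := by rw [hslope]; ring
  have hyz : 0 ≤ 2 * (y - z) := by linarith [hz.2]
  rw [hdiff, abs_mul, abs_of_nonneg hyz]
  calc 2 * (y - z) * |(energy D t w)⁻¹ - (φ t)⁻¹|
      ≤ 2 * (y - z) * (M * √w / c ^ 2) := by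
        gcongr
        exact h.abs_inv_energy_sub_le ht (hz.1.trans hw.1) (by linarith [hw.2])
    _ ≤ 2 * y * (M * √y / c ^ 2) := by
        gcongr
        · linarith [hz.1]
        · exact hw.2.le

lemma sqrt_limit_le (h : HasEnergyLimit T L D r c C p q φ M) (ht : t ∈ Icc 0 T) (hy : 0 < y) :
    √(φ t / (2 * y)) ≤ √(C / (2 * y)) := by
  gcongr
  exact (h.limit_mem_Icc ht).2

theorem abs_one_sub_le (h : HasEnergyLimit T L D r c C p q φ M) (ht : t ∈ Icc 0 T) (hy : 0 < y)
    (hyL : t + y ≤ L) : |D 1 t y - √(φ t / (2 * y))| ≤ momentError c C M := by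
  have hφ := h.limit_pos ht
  have hM := h.const_nonneg
  have hC := h.upper_pos
  have hinv : |(D 1 t y ^ 2)⁻¹ - (√(φ t / (2 * y)) ^ 2)⁻¹| ≤ 2 * y * (M * √y / c ^ 2) := by
    rw [Real.sq_sqrt (by positivity), inv_div]
    exact h.abs_inv_sq_one_sub_le ht hy hyL
  calc |D 1 t y - √(φ t / (2 * y))|
      ≤ 2 * y * (M * √y / c ^ 2) * D 1 t y ^ 2 * √(φ t / (2 * y)) :=
        abs_sub_le_of_abs_inv_sq_sub_le (h.isCriticalFlow.pos 1 t y hy) (by positivity) hinv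
    _ ≤ 2 * y * (M * √y / c ^ 2) * (C / (2 * y)) * √(C / (2 * y)) := by
        gcongr
        · exact h.sq_one_le ht hy hyL
        · exact (h.limit_mem_Icc ht).2
    _ = M * C / c ^ 2 * (√y * √(C / (2 * y))) := by field_simp
    _ = momentError c C M := by rw [sqrt_mul_sqrt_div_two_mul hy, momentError]

theorem abs_one_sub_zero_sub_le (h : HasEnergyLimit T L D r c C p q φ M) (ht : t ∈ Icc 0 T)
    (hy : 0 < y) (hyL : t + y ≤ L) :
    |(1 - D 0 t y) - √(2 * φ t * y)| ≤ momentError c C M * y := by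
  have hφ := h.limit_pos ht
  have hmodel : ∀ k, ∀ z ∈ Ioc 0 y, HasDerivAt (fun z ↦ √(2 * φ t * z) + k * z)
      (√(φ t / (2 * z)) + k) z := fun k z hz ↦
    (hasDerivAt_sqrt_two_mul hφ hz.1).fun_add (by simpa using (hasDerivAt_id z).const_mul k)
  have hlim : ∀ k, Tendsto (fun z ↦ √(2 * φ t * z) + k * z) (𝓝[>] 0) (𝓝 0) := fun k ↦
    (Continuous.tendsto' (by fun_prop) _ _ (by simp)).mono_left nhdsWithin_le_nhds
  have hbound : ∀ z ∈ Ioc 0 y, |D 1 t z - √(φ t / (2 * z))| ≤ momentError c C M := fun z hz ↦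
    h.abs_one_sub_le ht hz.1 (by linarith [hz.2])
  have hW : ∀ z ∈ Ioc 0 y, HasDerivAt (fun z ↦ 1 - D 0 t z) (D 1 t z) z := fun z hz ↦
    h.isCriticalFlow.hasDerivAt_one_sub t hz.1
  have hupper := le_of_hasDerivAt_le_of_tendsto hy hW (hmodel (momentError c C M))
    (fun z hz ↦ by linarith [(abs_le.1 (hbound z hz)).2])
    (h.isCriticalFlow.tendsto_one_sub t) (hlim _)
  have hlower := le_of_hasDerivAt_le_of_tendsto hy (hmodel (-momentError c C M)) hW
    (fun z hz ↦ by linarith [(abs_le.1 (hbound z hz)).1]) (hlim _)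
    (h.isCriticalFlow.tendsto_one_sub t)
  exact abs_le.2 ⟨by linarith, by linarith⟩

theorem abs_two_sub_le (h : HasEnergyLimit T L D r c C p q φ M) (ht : t ∈ Icc 0 T) (hy : 0 < y)
    (hyL : t + y ≤ L) : |D 2 t y - √(φ t / (2 * y)) ^ 3 / φ t| ≤
      momentError c C M * ((3 * C / c + 1) / 2) * y⁻¹ := by
  set K := momentError c C M with hK
  have hK0 : 0 ≤ K := h.momentError_nonneg
  have hc := h.lower_pos
  have hC := h.upper_pos
  have hE := h.isCriticalFlow.energy_pos t hy
  have hP := h.isCriticalFlow.pos 1 t y hy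
  set a := √(φ t / (2 * y))
  have ha : 0 ≤ a := Real.sqrt_nonneg _
  set b := √(C / (2 * y)) with hb
  have hab : a ≤ b := h.sqrt_limit_le ht hy
  have hbsq : b ^ 2 = C / (2 * y) := Real.sq_sqrt (by positivity)
  have hcube : |D 1 t y ^ 3 - a ^ 3| ≤ K * (3 * b ^ 2) :=
    (abs_cube_sub_cube_le hP.le (h.one_le_sqrt ht hy hyL) ha hab).trans <| by
      gcongr
      exact h.abs_one_sub_le ht hy hyL
  have hsplit : D 2 t y - a ^ 3 / φ t = (D 1 t y ^ 3 - a ^ 3) * (energy D t y)⁻¹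
      + a ^ 3 * ((energy D t y)⁻¹ - (φ t)⁻¹) := by
    rw [energy]
    field_simp
    ring
  calc |D 2 t y - a ^ 3 / φ t|
      ≤ |D 1 t y ^ 3 - a ^ 3| * (energy D t y)⁻¹ + a ^ 3 * |(energy D t y)⁻¹ - (φ t)⁻¹| := by
        rw [hsplit]
        refine (abs_add_le _ _).trans_eq ?_
        rw [abs_mul, abs_mul, abs_of_pos (inv_pos.2 hE), abs_of_nonneg (pow_nonneg ha 3)]
    _ ≤ K * (3 * b ^ 2) * c⁻¹ + b ^ 3 * (M * √y / c ^ 2) := by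
        gcongr
        · exact h.le_energy t ht y hy hyL
        · exact h.abs_inv_energy_sub_le ht hy hyL
    _ = K * (3 * b ^ 2) * c⁻¹ + b ^ 2 * (M / c ^ 2 * (√y * b)) := by ring
    _ = K * ((3 * C / c + 1) / 2) * y⁻¹ := by
        rw [hb, sqrt_mul_sqrt_div_two_mul hy, ← hb, hbsq, hK, momentError]
        field_simp

theorem abs_flux_sub_le (h : HasEnergyLimit T L D r c C p q φ M) (ht : t ∈ Icc 0 T) (hy : 0 < y)
    (hyL : t + y ≤ L) :
    |(1 - D 0 t y) * D 1 t y - φ t| ≤ momentError c C M * (√(C / 2) + √(2 * C)) * √y := by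
  set K := momentError c C M
  have hK : 0 ≤ K := h.momentError_nonneg
  have hφ := h.limit_pos ht
  have hP := h.isCriticalFlow.pos 1 t y hy
  have hsplit : (1 - D 0 t y) * D 1 t y - φ t = (1 - D 0 t y - √(2 * φ t * y)) * D 1 t y
      + √(2 * φ t * y) * (D 1 t y - √(φ t / (2 * y))) := by
    rw [mul_sub √(2 * φ t * y), sqrt_two_mul_mul_sqrt_div hφ.le hy]
    ring
  have hysqrt : y = √y * √y := (Real.mul_self_sqrt hy.le).symm
  calc |(1 - D 0 t y) * D 1 t y - φ t|
      ≤ |1 - D 0 t y - √(2 * φ t * y)| * D 1 t y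
        + √(2 * φ t * y) * |D 1 t y - √(φ t / (2 * y))| := by
        rw [hsplit]
        refine (abs_add_le _ _).trans_eq ?_
        rw [abs_mul, abs_mul, abs_of_pos hP, abs_of_nonneg (Real.sqrt_nonneg _)]
    _ ≤ K * y * √(C / (2 * y)) + √(2 * C * y) * K := by
        gcongr
        · exact h.abs_one_sub_zero_sub_le ht hy hyL
        · exact h.one_le_sqrt ht hy hyL
        · exact (h.limit_mem_Icc ht).2
        · exact h.abs_one_sub_le ht hy hyL
    _ = K * (√y * (√y * √(C / (2 * y)))) + √(2 * C * y) * K := by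
        rw [← mul_assoc √y, ← hysqrt, mul_assoc]
    _ = K * (√(C / 2) + √(2 * C)) * √y := by
        rw [sqrt_mul_sqrt_div_two_mul hy, Real.sqrt_mul' _ hy.le]
        ring

end HasEnergyLimit

/-! ### The density of the control -/

namespace HasEnergyBounds

variable {T L : ℝ} {D : ℕ → ℝ → ℝ → ℝ} {r ξ : ℝ → ℝ} {c C p q s t x : ℝ}

lemma abs_log_energy_sub_le (h : HasEnergyBounds T L D r c C p q) (hξ : IsCharacteristic D t x ξ)
    (hx : 0 < x) (hxL : t + x ≤ L) (htT : t ≤ T) (hs : s ∈ Icc 0 t) :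
    |Real.log (energy D t x) - Real.log (energy D s (ξ s))| ≤
      (3 / p + 1 / q) * (C * (t - s)) := by
  have h0 : (0 : ℝ) ∈ Icc 0 t := ⟨le_rfl, hs.1.trans hs.2⟩
  have hξ0 : 0 < ξ 0 := hξ.pos hx h0
  have hξL : 0 + ξ 0 ≤ L := by linarith [hξ.apply_le 0 h0]
  have hp := h.p_pos
  have hq := h.q_pos
  have hr : 0 ≤ r t - r s := sub_nonneg.2 (h.isCriticalFlow.monotone hs.2)
  have hupper : 3 / D 1 0 (ξ 0) * (r t - r s) ≤ 3 / p * (r t - r s) := by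
    gcongr
    exact h.le_one 0 h.zero_mem_Icc _ hξ0 hξL
  have hlower : 1 / D 2 0 (ξ 0) * (r t - r s) ≤ 1 / q * (r t - r s) := by
    gcongr
    exact h.le_two 0 h.zero_mem_Icc _ hξ0 hξL
  calc |Real.log (energy D t x) - Real.log (energy D s (ξ s))|
      ≤ (3 / p + 1 / q) * (r t - r s) := by
        have hp' : 0 ≤ 3 / p * (r t - r s) := by positivity
        have hq' : 0 ≤ 1 / q * (r t - r s) := by positivity
        exact abs_le.2
          ⟨by linarith [hξ.le_log_energy h.isCriticalFlow hx htT hs],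
            by linarith [hξ.log_energy_le h.isCriticalFlow hx htT hs]⟩
    _ ≤ (3 / p + 1 / q) * (C * (t - s)) := by
        gcongr
        exact h.control_sub_le hs.1 hs.2 htT

end HasEnergyBounds

namespace HasEnergyLimit

variable {T L : ℝ} {D : ℕ → ℝ → ℝ → ℝ} {r : ℝ → ℝ} {c C p q : ℝ} {φ : ℝ → ℝ} {M s t : ℝ}

/-- A characteristic from near `0` at time `t` has only reached a distance of order `(t - s) ^ 2`
at time `s`, where the energy is within order `t - s` of its limit at `0`. -/
lemma abs_limit_sub_le (h : HasEnergyLimit T L D r c C p q φ M) (hs : 0 ≤ s) (hst : s ≤ t)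
    (htT : t ≤ T) :
    |φ t - φ s| ≤ (2 * (M * √(2 * C)) + C * ((3 / p + 1 / q) * C)) * (t - s) := by
  rcases hst.eq_or_lt with rfl | hlt
  · simp
  have hC := h.upper_pos
  have hM := h.const_nonneg
  have hts : 0 < t - s := sub_pos.2 hlt
  have hs' : s ∈ Icc 0 t := ⟨hs, hst⟩
  have hsT : s ∈ Icc 0 T := ⟨hs, hst.trans htT⟩
  have htT' : t ∈ Icc 0 T := ⟨hs.trans hst, htT⟩
  have hcontrol : (t - s) * (r t - r s) < 2 * C * (t - s) ^ 2 :=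
    calc (t - s) * (r t - r s) ≤ (t - s) * (C * (t - s)) := by
          gcongr
          exact h.control_sub_le hs hst htT
      _ < 2 * C * (t - s) ^ 2 := by nlinarith [mul_pos hC (pow_pos hts 2)]
  obtain ⟨x, ξ, hx, hxL, hξ, hξs⟩ :=
    h.isCriticalFlow.exists_isCharacteristic_lt hs' htT hcontrol (sub_pos.2 h.time_lt)
  have hξpos : 0 < ξ s := hξ.pos hx hs'
  have htx : t + x ≤ L := by linarith
  have hsξ : s + ξ s ≤ L := by linarith [hξ.apply_le s hs']
  have hnear : ∀ {y}, y ≤ ξ s → M * √y ≤ M * √(2 * C) * (t - s) := fun {y} hy ↦ by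
    rw [mul_assoc, ← Real.sqrt_sq hts.le, ← Real.sqrt_mul (by positivity)]
    gcongr
    exact hy.trans hξs.le
  have hend := (h.abs_energy_sub_le t htT' x hx htx).trans (hnear (hξ.le_apply s hs'))
  have hstart := (h.abs_energy_sub_le s hsT _ hξpos hsξ).trans (hnear le_rfl)
  have hmove : |energy D t x - energy D s (ξ s)| ≤ C * ((3 / p + 1 / q) * (C * (t - s))) :=
    (abs_sub_le_mul_abs_log_sub_log (h.isCriticalFlow.energy_pos s hξpos)
      (h.energy_le s hsT _ hξpos hsξ) (h.isCriticalFlow.energy_pos t hx)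
      (h.energy_le t htT' x hx htx)).trans <| by
        gcongr
        exact h.abs_log_energy_sub_le hξ hx htx htT hs'
  rw [abs_le] at hend hstart hmove ⊢
  constructor <;> linarith

theorem exists_lipschitzOnWith (h : HasEnergyLimit T L D r c C p q φ M) :
    ∃ K, LipschitzOnWith K φ (Icc 0 T) := by
  have hp := h.p_pos
  have hq := h.q_pos
  have hC := h.upper_pos
  have hM := h.const_nonneg
  exact ⟨_, lipschitzOnWith_of_abs_sub_le (by positivity) fun a ha b hb hab ↦
    h.abs_limit_sub_le ha.1 hab hb.2⟩

theorem control_eq_integral (h : HasEnergyLimit T L D r c C p q φ M) (ht : t ∈ Icc 0 T) :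
    r t = ∫ s in 0..t, φ s := by
  obtain ⟨K, hK⟩ := h.exists_lipschitzOnWith
  have hφ : IntervalIntegrable φ volume 0 t :=
    (hK.continuousOn.mono (uIcc_of_le ht.1 ▸ Icc_subset_Icc_right ht.2)).intervalIntegrable
  set N := momentError c C M * (√(C / 2) + √(2 * C))
  have hlim : Tendsto (fun x ↦ N * √x) (𝓝[>] 0) (𝓝 0) :=
    (Continuous.tendsto' (by fun_prop) _ _ (by simp)).mono_left nhdsWithin_le_nhds
  have hflux : ∀ᶠ x in 𝓝[>] 0, ∀ τ ∈ Icc 0 t, |(1 - D 0 τ x) * D 1 τ x - φ τ| ≤ N * √x := by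
    filter_upwards [Ioc_mem_nhdsGT (sub_pos.2 h.time_lt)] with x hx τ hτ
    have hτT : τ ≤ T := hτ.2.trans ht.2
    exact h.abs_flux_sub_le ⟨hτ.1, hτT⟩ hx.1 (by linarith [hx.2])
  have hupper := h.isCriticalFlow.control_sub_le_integral le_rfl ht.1 ht.2 hφ hlim <|
    hflux.mono fun x hx τ hτ ↦ by linarith [(abs_le.1 (hx τ hτ)).2]
  have hlower := h.isCriticalFlow.integral_le_control_sub le_rfl ht.1 ht.2 hφ hlim <|
    hflux.mono fun x hx τ hτ ↦ by linarith [(abs_le.1 (hx τ hτ)).1]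
  rw [h.isCriticalFlow.map_zero, sub_zero] at hupper hlower
  exact hupper.antisymm hlower

end HasEnergyLimit

/-! ### Critical solutions -/

lemma rpow_neg_half {x : ℝ} (hx : 0 ≤ x) : x ^ (-(1 : ℝ) / 2) = (√x)⁻¹ := by
  rw [Real.rpow_div_two_eq_sqrt _ hx, Real.rpow_neg_one]

lemma sqrt_mul_rpow_half (a : ℝ) {x : ℝ} (hx : 0 ≤ x) : √a * x ^ ((1 : ℝ) / 2) = √(a * x) := by
  rw [← Real.sqrt_eq_rpow, Real.sqrt_mul' a hx]

lemma sqrt_div_two_mul_rpow_neg_half (a : ℝ) {x : ℝ} (hx : 0 ≤ x) :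
    √(a / 2) * x ^ (-(1 : ℝ) / 2) = √(a / (2 * x)) := by
  rw [rpow_neg_half hx, ← div_eq_mul_inv, ← Real.sqrt_div' _ hx, div_div]

lemma sqrt_div_eight_mul_rpow_neg_three_half {a x : ℝ} (ha : 0 < a) (hx : 0 ≤ x) :
    √(a / 8) * x ^ (-(3 : ℝ) / 2) = √(a / (2 * x)) ^ 3 / a := by
  have hpow : x ^ (-(3 : ℝ) / 2) = (x ^ (-(1 : ℝ) / 2)) ^ 3 := by
    rw [← Real.rpow_mul_natCast hx]
    norm_num
  have hcube : √(a / 2) ^ 3 = a / 2 * √(a / 2) := by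
    rw [pow_succ, Real.sq_sqrt (by positivity)]
  have height : √(a / 8) = √(a / 2) / 2 := by
    rw [show a / 8 = a / 2 / 2 ^ 2 by ring, Real.sqrt_div' _ (sq_nonneg 2),
      Real.sqrt_sq zero_le_two]
  rw [← sqrt_div_two_mul_rpow_neg_half a hx, mul_pow, hcube, height, hpow]
  field_simp

namespace IsCriticalFlow

variable {T L : ℝ} {D : ℕ → ℝ → ℝ → ℝ} {r : ℝ → ℝ} {c C : ℝ}

lemma differentiableAt_energy (h : IsCriticalFlow T D r) (t : ℝ) {y : ℝ} (hy : 0 < y) :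
    DifferentiableAt ℝ (energy D t) y :=
  ((h.hasDerivAt 1 t y hy).differentiableAt.fun_pow 3).fun_div
    (h.hasDerivAt 2 t y hy).differentiableAt (h.pos 2 t y hy).ne'

lemma abs_log_energy_sub_le (h : IsCriticalFlow T D r) (hc : 0 < c) {t : ℝ}
    (hE : ∀ x ∈ Ioc 0 L, c ≤ energy D t x)
    (hE' : ∀ x ∈ Ioc 0 L, |deriv (energy D t) x| ≤ C * x ^ (-(1 : ℝ) / 2)) {y₁ y₂ : ℝ}
    (hy₁ : 0 < y₁) (hy : y₁ ≤ y₂) (hy₂ : y₂ ≤ L) :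
    |Real.log (energy D t y₂) - Real.log (energy D t y₁)| ≤ 2 * C / c * (√y₂ - √y₁) := by
  refine abs_sub_le_mul_sqrt_sub_sqrt hy₁ hy (fun y hyI ↦ ((h.differentiableAt_energy t
    (hy₁.trans_le hyI.1)).hasDerivAt.log (h.energy_pos t (hy₁.trans_le hyI.1)).ne')) fun y hyI ↦ ?_
  have hy0 : 0 < y := hy₁.trans_le hyI.1
  have hyL : y ∈ Ioc 0 L := ⟨hy0, hyI.2.trans hy₂⟩
  have hbound := hE' y hyL
  rw [abs_div, abs_of_pos (h.energy_pos t hy0)]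
  calc |deriv (energy D t) y| / energy D t y
      ≤ C * y ^ (-(1 : ℝ) / 2) / c :=
        div_le_div₀ ((abs_nonneg _).trans hbound) hbound hc (hE y hyL)
    _ = 2 * C / c / (2 * √y) := by
        rw [rpow_neg_half hy0.le]
        field_simp

theorem exists_hasEnergyLimit (h : IsCriticalFlow T D r) (hT : 0 < T) (hTL : T < L) (hc : 0 < c)
    (hgel : ∀ m, ∃ y, 0 < y ∧ m < D 1 0 y) (hE : ∀ x ∈ Ioc 0 L, energy D 0 x ∈ Icc c C)
    (hE' : ∀ x ∈ Ioc 0 L, |deriv (energy D 0) x| ≤ C * x ^ (-(1 : ℝ) / 2)) :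
    ∃ c' C' p q φ M, HasEnergyLimit T L D r c' C' p q φ M := by
  have hL : L ∈ Ioc 0 L := ⟨hT.trans hTL, le_rfl⟩
  have hC : 0 ≤ C := hc.le.trans ((hE L hL).1.trans (hE L hL).2)
  have hbounds := h.hasEnergyBounds hT hTL hc fun x hx hxL ↦ hE x ⟨hx, hxL⟩
  exact ⟨_, _, _, _, (hbounds.isGelledFlow hgel).exists_hasEnergyLimit (M₀ := 2 * C / c)
    (by positivity) fun _ _ ↦ h.abs_log_energy_sub_le hc (fun x hx ↦ (hE x hx).1) hE'⟩

end IsCriticalFlow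

theorem HasEnergyLimit.exists_asymptotics {T L : ℝ} {D : ℕ → ℝ → ℝ → ℝ} {r : ℝ → ℝ}
    {c C p q : ℝ} {φ : ℝ → ℝ} {M : ℝ} (h : HasEnergyLimit T L D r c C p q φ M) :
    ∃ K, 1 < K ∧ (∀ t ∈ Icc 0 T, K⁻¹ ≤ φ t ∧ φ t ≤ K) ∧
      ∀ t ∈ Icc 0 T, ∀ x, 0 < x → t + x ≤ L →
        |(1 - D 0 t x) - √(2 * φ t) * x ^ ((1 : ℝ) / 2)| ≤ K * x ∧
        |D 1 t x - √(φ t / 2) * x ^ (-(1 : ℝ) / 2)| ≤ K ∧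
        |D 2 t x - √(φ t / 8) * x ^ (-(3 : ℝ) / 2)| ≤ K * x⁻¹ ∧
        |(1 - D 0 t x) * D 1 t x - φ t| ≤ K * x ^ ((1 : ℝ) / 2) := by
  have hc := h.lower_pos
  have hC := h.upper_pos
  have hinv : 0 < c⁻¹ := inv_pos.2 hc
  have hK₁ := h.momentError_nonneg
  set K₁ := momentError c C M
  obtain ⟨K₂, hK₂⟩ : ∃ K₂, K₂ = K₁ * ((3 * C / c + 1) / 2) := ⟨_, rfl⟩
  obtain ⟨K₃, hK₃⟩ : ∃ K₃, K₃ = K₁ * (√(C / 2) + √(2 * C)) := ⟨_, rfl⟩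
  have hK₂0 : 0 ≤ K₂ := by rw [hK₂]; positivity
  have hK₃0 : 0 ≤ K₃ := by rw [hK₃]; positivity
  obtain ⟨K, hK⟩ : ∃ K, K = 2 + C + c⁻¹ + K₁ + K₂ + K₃ := ⟨_, rfl⟩
  refine ⟨K, by linarith, fun t ht ↦ ⟨(inv_le_of_inv_le₀ hc (by linarith)).trans
    (h.limit_mem_Icc ht).1, (h.limit_mem_Icc ht).2.trans (by linarith)⟩,
    fun t ht x hx hxL ↦ ⟨?_, ?_, ?_, ?_⟩⟩
  · rw [sqrt_mul_rpow_half _ hx.le]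
    exact (h.abs_one_sub_zero_sub_le ht hx hxL).trans (by gcongr; linarith)
  · rw [sqrt_div_two_mul_rpow_neg_half _ hx.le]
    exact (h.abs_one_sub_le ht hx hxL).trans (by linarith)
  · rw [sqrt_div_eight_mul_rpow_neg_three_half (h.limit_pos ht) hx.le]
    refine (h.abs_two_sub_le ht hx hxL).trans ?_
    gcongr
    linarith
  · rw [← Real.sqrt_eq_rpow]
    refine (h.abs_flux_sub_le ht hx hxL).trans ?_
    gcongr
    linarith

lemma IsBurgersSolution.exists_hasEnergyLimit {S T L : ℝ} {v : ℕ → ℝ → ℝ} {r : ℝ → ℝ}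
    (hsol : IsBurgersSolution S v r) (hcons : ∀ t ∈ Icc (0 : ℝ) S, HasSum (fun k ↦ v (k + 1) t) 1)
    (hm1 : ¬Summable fun k : ℕ ↦ ((k : ℝ) + 1) * v (k + 1) 0) (hT : 0 < T) (hTS : T ≤ S)
    (hTL : T < L) {c C : ℝ} (hc : 0 < c) (hE : ∀ x ∈ Ioc 0 L, c ≤ EFun v 0 x ∧ EFun v 0 x ≤ C)
    (hE' : ∀ x ∈ Ioc 0 L, |deriv (fun y ↦ EFun v 0 y) x| ≤ C * x ^ (-(1 : ℝ) / 2)) :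
    ∃ c' C' p q φ M, HasEnergyLimit T L (momentFamily v hT.le)
      (fun t ↦ r (projIcc 0 T hT.le t)) c' C' p q φ M := by
  have h0S : (0 : ℝ) ∈ Icc 0 S := ⟨le_rfl, hT.le.trans hTS⟩
  have h0T : (0 : ℝ) ∈ Icc 0 T := ⟨le_rfl, hT.le⟩
  have hs := (hcons 0 h0S).summable
  have henergy : ∀ x, 0 < x → EFun v 0 x = energy (momentFamily v hT.le) 0 x :=
    fun x hx ↦ EFun_eq_energy h0T hs hx
  refine (hsol.isCriticalFlow hTS hcons).exists_hasEnergyLimit hT hTL hc (fun m ↦ ?_)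
    (fun x hx ↦ henergy x hx.1 ▸ hE x hx) fun x hx ↦ ?_
  · simpa only [momentFamily_of_mem h0T] using
      exists_lt_momentSeries_one (fun k ↦ hsol.1 _ k.succ_pos 0 h0S) hs hm1 m
  · have hlocal : (fun y ↦ EFun v 0 y) =ᶠ[𝓝 x] energy (momentFamily v hT.le) 0 := by
      filter_upwards [Ioi_mem_nhds hx.1] with y hy using henergy y hy
    exact hlocal.deriv_eq ▸ hE' x hx

/-- precise asymptotics of a critical solution near `x = 0`:
there are a Lipschitz control density `φ` with `r(t) = ∫₀ᵗ φ` and a constant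
`C' > 1` such that `C'⁻¹ ≤ φ ≤ C'` and
`−V(t,x) = √(2φ(t))·x^(1/2) + O(x)`, `−∂ₓV(t,x) = √(φ(t)/2)·x^(−1/2) + O(1)`,
`∂ₓ²V(t,x) = √(φ(t)/8)·x^(−3/2) + O(x⁻¹)`, `V·∂ₓV(t,x) = φ(t) + O(x^(1/2))`. -/
theorem critical_solution_asymptotics (T : ℝ) (hT : 0 < T) (v : ℕ → ℝ → ℝ) (r : ℝ → ℝ)
    (hsol : IsBurgersSolution T v r)
    (hcons : ∀ t ∈ Set.Icc (0:ℝ) T, HasSum (fun k : ℕ => v (k + 1) t) 1)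
    (hm1 : ¬ Summable (fun k : ℕ => ((k : ℝ) + 1) * v (k + 1) 0))
    (tbar : ℝ) (htbar : tbar ∈ Set.Ioc (0:ℝ) T) (xbar : ℝ) (hxbar : 0 < xbar)
    (c C : ℝ) (hc : 0 < c) (hcC : c ≤ C)
    (hE : ∀ x ∈ Set.Ioc (0:ℝ) (xbar + tbar), c ≤ EFun v 0 x ∧ EFun v 0 x ≤ C)
    (hE' : ∀ x ∈ Set.Ioc (0:ℝ) (xbar + tbar),
      |deriv (fun y => EFun v 0 y) x| ≤ C * x ^ (-(1:ℝ)/2)) :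
    ∃ φ : ℝ → ℝ, ∃ C' : ℝ, 1 < C' ∧
      (∃ K : NNReal, LipschitzOnWith K φ (Set.Icc (0:ℝ) tbar)) ∧
      (∀ t ∈ Set.Icc (0:ℝ) tbar, r t = ∫ s in (0:ℝ)..t, φ s) ∧
      (∀ t ∈ Set.Icc (0:ℝ) tbar, C'⁻¹ ≤ φ t ∧ φ t ≤ C') ∧
      (∀ t ∈ Set.Icc (0:ℝ) tbar, ∀ x ∈ Set.Ioc (0:ℝ) xbar,
        |(-genFun v t x) - Real.sqrt (2 * φ t) * x ^ ((1:ℝ)/2)| ≤ C' * x ∧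
        |(-deriv (genFun v t) x) - Real.sqrt (φ t / 2) * x ^ (-(1:ℝ)/2)| ≤ C' ∧
        |iteratedDeriv 2 (genFun v t) x - Real.sqrt (φ t / 8) * x ^ (-(3:ℝ)/2)|
          ≤ C' * x⁻¹ ∧
        |genFun v t x * deriv (genFun v t) x - φ t| ≤ C' * x ^ ((1:ℝ)/2)) := by
  obtain ⟨c', C', p, q, φ, M, hlimit⟩ := hsol.exists_hasEnergyLimit hcons hm1 htbar.1 htbar.2
    (lt_add_of_pos_left tbar hxbar) hc hE hE'
  obtain ⟨K, hK, hφ, hasymp⟩ := hlimit.exists_asymptotics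
  refine ⟨φ, K, hK, hlimit.exists_lipschitzOnWith, fun t ht ↦ ?_, hφ, fun t ht x hx ↦ ?_⟩
  · simpa only [projIcc_of_mem htbar.1.le ht] using hlimit.control_eq_integral ht
  · have hs := (hcons t ⟨ht.1, ht.2.trans htbar.2⟩).summable
    have hflux : ∀ a b : ℝ, (a - 1) * -b = (1 - a) * b := fun a b ↦ by ring
    rw [genFun_eq_momentFamily (hT := htbar.1.le) ht,
      deriv_genFun_eq_momentFamily (hT := htbar.1.le) ht hs hx.1,
      iteratedDeriv_two_genFun_eq_momentFamily (hT := htbar.1.le) ht hs hx.1, neg_sub, neg_neg,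
      hflux]
    exact hasymp t ht x hx.1 (by linarith [ht.2, hx.2])
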